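/- arXiv:1912.00851 — 3 statements merged into one kernel-verified Lean document; each statement's English description precedes it below -/
import Mathlib

section
/- Let f : ℕ → [0,∞) be weakly super-multiplicative, and suppose f has a normal order g, where g : (0,∞) → (0,∞) is strictly positive and non-decreasing. Then sup_{n≥2} (log f(n))/(log n) = lim ess_{n→∞} (log f(n))/(log n), as elements of ℝ ∪ {−∞, +∞} (with the convention log 0 = −∞); in particular the essential limit exists. -/
/-!
Write `L` for the supremum.  Since every ratio with `n ≥ 2` is at most `L`, it suffices to show that
for each real `M < L` the set where `log f(n) / log n < M` has density `0`.

Choose `n ≥ 2` with `log f(n) / log n > M`, and a small `ε > 0`.  Exceptional sets of the normal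
order have density `0`, whereas weak super-multiplicativity provides at least `δ x` good `m` in
`[x, (1+ε)x]`; hence some good `m` has both `m` and `n m` non-exceptional (`exists_good`).
With monotonicity of `g` this gives, for all large `x`,
`g(n(1+ε)x) ≥ (1-ε)²/(1+ε) · f(n) · g(x)`.
For small `ε` the factor on the right exceeds `(n(1+ε))^M`, so iterating yields
`g(y) ≥ C y^P` for some `P > M` and all large `y` (`growth_of_step`).
As `f ≥ g/2` outside a set of density `0`, `f(y) ≥ y^M` outside a set of density `0`.
-/

/-- The upper density of a set of natural numbers:
`limsup_{N→∞} #{n ∈ S : n ≤ N} / N`. -/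
noncomputable def upperDensity (S : Set ℕ) : ℝ :=
  Filter.limsup (fun N : ℕ => (({n | n ∈ S ∧ n ≤ N} : Set ℕ).ncard : ℝ) / N) Filter.atTop

/-- `S` has natural density `α` if `#{n ∈ S : n ≤ N} / N → α`. -/
def HasNatDensity (S : Set ℕ) (α : ℝ) : Prop :=
  Filter.Tendsto (fun N : ℕ => (({n | n ∈ S ∧ n ≤ N} : Set ℕ).ncard : ℝ) / N)
    Filter.atTop (nhds α)

/-- `f` is weakly super-multiplicative: for every `n` and `ε > 0` there exist
`x₀ > 0` and `δ > 0` such that for all `x > x₀` the number of integers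
`m ∈ [x, (1+ε)x]` with `f(nm) ≥ (1-ε) f(n) f(m)` is at least `δ x`. -/
def WeaklySuperMult (f : ℕ → ℝ) : Prop :=
  ∀ n : ℕ, 0 < n → ∀ ε : ℝ, 0 < ε → ∃ x₀ : ℝ, 0 < x₀ ∧ ∃ δ : ℝ, 0 < δ ∧
    ∀ x : ℝ, x₀ < x →
      δ * x ≤
        (({m : ℕ | (x ≤ (m : ℝ) ∧ (m : ℝ) ≤ (1 + ε) * x) ∧
            (1 - ε) * f n * f m ≤ f (n * m)} : Set ℕ).ncard : ℝ)

/-- `f` has normal order `g`: for every `ε > 0` the set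
`{n : |f(n) - g(n)| ≥ ε g(n)}` has upper density `0`. -/
def HasNormalOrder (f : ℕ → ℝ) (g : ℝ → ℝ) : Prop :=
  ∀ ε : ℝ, 0 < ε → upperDensity {n : ℕ | ε * g n ≤ |f n - g n|} = 0

/-- The essential limit of a sequence `a : ℕ → EReal` is `L`:
if `L = ⊤`, every set `{n : aₙ < M}` has density `0`; if `L` is a real number `l`,
for every `ε > 0` the set `{n : |aₙ - l| > ε}` has density `0`. -/
def EssLimitTo (a : ℕ → EReal) (L : EReal) : Prop :=
  (L = ⊤ ∧ ∀ M : ℝ, HasNatDensity {n : ℕ | a n < (M : EReal)} 0) ∨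
  (∃ l : ℝ, L = (l : EReal) ∧ ∀ ε : ℝ, 0 < ε →
    HasNatDensity
      {n : ℕ | a n < ((l - ε : ℝ) : EReal) ∨ ((l + ε : ℝ) : EReal) < a n} 0)

/-- `log f(n) / log n` as an extended real number, with the convention
`log 0 = -∞`. -/
noncomputable def logRatio (f : ℕ → ℝ) (n : ℕ) : EReal :=
  if f n = 0 then ⊥ else ((Real.log (f n) / Real.log n : ℝ) : EReal)

/-! ### Sets of density zero -/

/-- The part of `S` up to `N`, as counted in the definitions of density, is finite. -/
lemma finite_upTo (S : Set ℕ) (N : ℕ) : ({n | n ∈ S ∧ n ≤ N} : Set ℕ).Finite :=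
  (Set.finite_Iic N).subset fun _ h => h.2

lemma ratio_nonneg (S : Set ℕ) (N : ℕ) :
    0 ≤ (({n | n ∈ S ∧ n ≤ N} : Set ℕ).ncard : ℝ) / N := by positivity

lemma ratio_le_two (S : Set ℕ) (N : ℕ) :
    (({n | n ∈ S ∧ n ≤ N} : Set ℕ).ncard : ℝ) / N ≤ 2 := by
  rcases Nat.eq_zero_or_pos N with rfl | hN
  · simp
  · have h1 : ({n | n ∈ S ∧ n ≤ N} : Set ℕ).ncard ≤ N + 1 := by
      have := Set.ncard_le_ncard (s := {n | n ∈ S ∧ n ≤ N}) (t := ↑(Finset.range (N + 1)))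
        (fun n hn => by have := hn.2; simp; omega) (Finset.finite_toSet _)
      rwa [Set.ncard_coe_finset, Finset.card_range] at this
    have h2 : (({n | n ∈ S ∧ n ≤ N} : Set ℕ).ncard : ℝ) ≤ N + 1 := by exact_mod_cast h1
    have h3 : (1 : ℝ) ≤ N := by exact_mod_cast hN
    rw [div_le_iff₀ (by linarith)]
    linarith

/-- Quantitative form of having upper density `0`. -/
lemma eventually_count_le {S : Set ℕ} (hS : upperDensity S = 0) {η : ℝ} (hη : 0 < η) :
    ∀ᶠ N : ℕ in Filter.atTop, (({n | n ∈ S ∧ n ≤ N} : Set ℕ).ncard : ℝ) ≤ η * N := by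
  have hlt : upperDensity S < η := by rw [hS]; exact hη
  have hb : Filter.IsBoundedUnder (· ≤ ·) Filter.atTop
      (fun N : ℕ => (({n | n ∈ S ∧ n ≤ N} : Set ℕ).ncard : ℝ) / N) :=
    Filter.isBoundedUnder_of ⟨2, ratio_le_two S⟩
  have := Filter.eventually_lt_of_limsup_lt hlt hb
  filter_upwards [this, Filter.eventually_gt_atTop 0] with N hN hN0
  have h3 : (0 : ℝ) < N := by exact_mod_cast hN0
  exact ((div_lt_iff₀ h3).1 hN).le

/-- A set contained, up to finitely many elements, in a set of upper density `0` has natural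
density `0`. -/
lemma hasNatDensity_zero_of_subset {S E : Set ℕ} (hE : upperDensity E = 0) (K : ℕ)
    (h : ∀ n ∈ S, K ≤ n → n ∈ E) : HasNatDensity S 0 := by
  rw [HasNatDensity, Metric.tendsto_nhds]
  intro η hη
  obtain ⟨N₁, hN₁⟩ := exists_nat_gt ((K : ℝ) / (η / 2))
  filter_upwards [eventually_count_le hE (half_pos hη), Filter.eventually_gt_atTop 0,
    Filter.eventually_ge_atTop N₁] with N hN hN0 hNN
  have h3 : (0 : ℝ) < N := by exact_mod_cast hN0
  rw [Real.dist_eq, sub_zero, abs_of_nonneg (ratio_nonneg S N), div_lt_iff₀ h3]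
  have hsub : ({n | n ∈ S ∧ n ≤ N} : Set ℕ) ⊆
      {n | n ∈ E ∧ n ≤ N} ∪ (↑(Finset.range K) : Set ℕ) := by
    intro n hn
    by_cases hk : K ≤ n
    · exact Or.inl ⟨h n hn.1 hk, hn.2⟩
    · right; simp; omega
  have h4 := (Set.ncard_le_ncard hsub
    ((finite_upTo E N).union (Finset.finite_toSet _))).trans (Set.ncard_union_le _ _)
  rw [Set.ncard_coe_finset, Finset.card_range] at h4
  have h5 : (({n | n ∈ S ∧ n ≤ N} : Set ℕ).ncard : ℝ) ≤
      (({n | n ∈ E ∧ n ≤ N} : Set ℕ).ncard : ℝ) + K := by exact_mod_cast h4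
  have h6 : (K : ℝ) < η / 2 * N := by
    have : (N₁ : ℝ) ≤ N := by exact_mod_cast hNN
    have := (div_lt_iff₀ (half_pos hη)).1 (hN₁.trans_le this)
    linarith
  linarith

/-! ### Good multipliers -/

/-- For all large `x` some `m ∈ [x, (1+ε)x]` satisfies the super-multiplicative inequality while
both `m` and `n m` avoid a given set of upper density `0`. -/
lemma exists_good {f : ℕ → ℝ} (hwsm : WeaklySuperMult f) {E : Set ℕ} (hE : upperDensity E = 0)
    {n : ℕ} (hn : 0 < n) {ε : ℝ} (hε : 0 < ε) :
    ∃ x₁ : ℝ, 0 < x₁ ∧ ∀ x : ℝ, x₁ ≤ x → ∃ m : ℕ, x ≤ m ∧ (m : ℝ) ≤ (1 + ε) * x ∧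
      (1 - ε) * f n * f m ≤ f (n * m) ∧ m ∉ E ∧ n * m ∉ E := by
  obtain ⟨x₀, hx₀, δ, hδ, H⟩ := hwsm n hn ε hε
  have hn' : (0 : ℝ) < n := by exact_mod_cast hn
  have hη : 0 < δ / (4 * (n * (1 + ε))) := by positivity
  obtain ⟨N₀, hN₀⟩ := Filter.eventually_atTop.1 (eventually_count_le hE hη)
  refine ⟨x₀ + N₀ + 1, by positivity, fun x hx => ?_⟩
  have hN₀' : (0 : ℝ) ≤ N₀ := Nat.cast_nonneg _
  have hx0 : 0 < x := by linarith
  by_contra! hcon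
  set N : ℕ := n * ⌊(1 + ε) * x⌋₊ with hN
  have hNle : (N : ℝ) ≤ n * ((1 + ε) * x) := by
    rw [hN]; push_cast
    exact mul_le_mul_of_nonneg_left (Nat.floor_le (by positivity)) hn'.le
  have hfl : N₀ ≤ ⌊(1 + ε) * x⌋₊ := Nat.le_floor (by nlinarith)
  have hfN : ⌊(1 + ε) * x⌋₊ ≤ N := Nat.le_mul_of_pos_left _ hn
  have hcount := hN₀ N (hfl.trans hfN)
  have hsub : ({m : ℕ | (x ≤ (m : ℝ) ∧ (m : ℝ) ≤ (1 + ε) * x) ∧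
      (1 - ε) * f n * f m ≤ f (n * m)} : Set ℕ) ⊆
      {m | m ∈ E ∧ m ≤ N} ∪ {m | n * m ∈ E ∧ n * m ≤ N} := by
    rintro m ⟨⟨h1, h2⟩, h3⟩
    have h4 : m ≤ ⌊(1 + ε) * x⌋₊ := Nat.le_floor h2
    by_cases hm : m ∈ E
    · exact Or.inl ⟨hm, h4.trans hfN⟩
    · exact Or.inr ⟨hcon m h1 h2 h3 hm, Nat.mul_le_mul_left n h4⟩
  have hinj : Function.Injective (fun m : ℕ => n * m) := fun a b h =>
    Nat.eq_of_mul_eq_mul_left hn h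
  have hfin2 : ({m | n * m ∈ E ∧ n * m ≤ N} : Set ℕ).Finite :=
    (finite_upTo E N).preimage hinj.injOn
  have hc2 : ({m | n * m ∈ E ∧ n * m ≤ N} : Set ℕ).ncard ≤
      ({m | m ∈ E ∧ m ≤ N} : Set ℕ).ncard :=
    Set.ncard_le_ncard_of_injOn (fun m : ℕ => n * m) (fun m hm => hm) hinj.injOn
      (finite_upTo E N)
  have h5 := (Set.ncard_le_ncard hsub ((finite_upTo E N).union hfin2)).trans
    (Set.ncard_union_le _ _)
  have h6 := h5.trans (Nat.add_le_add_left hc2 _)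
  have h7 := (H x (by linarith)).trans (Nat.cast_le.2 h6)
  push_cast at h7
  have h8 : δ / (4 * (n * (1 + ε))) * N ≤ δ / 4 * x := by
    calc δ / (4 * (n * (1 + ε))) * N ≤ δ / (4 * (n * (1 + ε))) * (n * ((1 + ε) * x)) :=
          mul_le_mul_of_nonneg_left hNle hη.le
      _ = δ / 4 * x := by field_simp
  have : 0 < δ * x := by positivity
  linarith

/-! ### Polynomial growth of the normal order -/

/-- A monotone `g` that gains a factor `B ^ P` whenever its argument is multiplied by `B > 1`
grows at least like `y ^ P`.  The sign of `P` is arbitrary. -/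
lemma growth_of_step {g : ℝ → ℝ} (hgpos : ∀ x : ℝ, 0 < x → 0 < g x)
    (hgmono : ∀ x y : ℝ, 0 < x → x ≤ y → g x ≤ g y) {B P x₁ : ℝ} (hB : 1 < B) (hx₁ : 0 < x₁)
    (hstep : ∀ x, x₁ ≤ x → B ^ P * g x ≤ g (B * x)) :
    ∃ C : ℝ, 0 < C ∧ ∀ y, x₁ ≤ y → C * y ^ P ≤ g y := by
  have hB0 : 0 < B := by linarith
  have hD : 0 < x₁ ^ P + (B * x₁) ^ P := by positivity
  refine ⟨g x₁ / (x₁ ^ P + (B * x₁) ^ P), div_pos (hgpos _ hx₁) hD, ?_⟩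
  have hC : 0 < g x₁ / (x₁ ^ P + (B * x₁) ^ P) := div_pos (hgpos _ hx₁) hD
  have base : ∀ y, x₁ ≤ y → y ≤ B * x₁ → g x₁ / (x₁ ^ P + (B * x₁) ^ P) * y ^ P ≤ g y := by
    intro y h1 h2
    have hy : 0 < y := by linarith
    have hyP : y ^ P ≤ x₁ ^ P + (B * x₁) ^ P := by
      rcases le_total 0 P with hP | hP
      · have := Real.rpow_le_rpow hy.le h2 hP
        have : 0 < x₁ ^ P := by positivity
        linarith
      · have := Real.rpow_le_rpow_of_nonpos hx₁ h1 hP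
        have : 0 < (B * x₁) ^ P := by positivity
        linarith
    calc g x₁ / (x₁ ^ P + (B * x₁) ^ P) * y ^ P
        ≤ g x₁ / (x₁ ^ P + (B * x₁) ^ P) * (x₁ ^ P + (B * x₁) ^ P) :=
          mul_le_mul_of_nonneg_left hyP hC.le
      _ = g x₁ := by field_simp
      _ ≤ g y := hgmono _ _ hx₁ h1
  have main : ∀ k : ℕ, ∀ y, x₁ ≤ y → y ≤ B ^ (k + 1) * x₁ →
      g x₁ / (x₁ ^ P + (B * x₁) ^ P) * y ^ P ≤ g y := by
    intro k
    induction k with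
    | zero => intro y h1 h2; exact base y h1 (by simpa using h2)
    | succ k ih =>
      intro y h1 h2
      by_cases hy : y ≤ B * x₁
      · exact base y h1 hy
      · push Not at hy
        have h3 : x₁ ≤ y / B := by rw [le_div_iff₀ hB0]; linarith
        have h4 : y / B ≤ B ^ (k + 1) * x₁ := by
          rw [div_le_iff₀ hB0]; calc y ≤ _ := h2
            _ = _ := by ring
        have h5 := ih _ h3 h4
        have h6 := hstep _ h3
        have h7 : B * (y / B) = y := by field_simp
        rw [h7] at h6
        have h8 : y ^ P = B ^ P * (y / B) ^ P := by
          rw [← Real.mul_rpow hB0.le (by linarith), h7]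
        calc _ = B ^ P * (g x₁ / (x₁ ^ P + (B * x₁) ^ P) * (y / B) ^ P) := by rw [h8]; ring
          _ ≤ B ^ P * g (y / B) := mul_le_mul_of_nonneg_left h5 (by positivity)
          _ ≤ g y := h6
  intro y hy
  obtain ⟨k, hk⟩ := pow_unbounded_of_one_lt (y / x₁) hB
  refine main k y hy ?_
  have h1 : y ≤ B ^ k * x₁ := ((div_lt_iff₀ hx₁).1 hk).le
  have h2 : B ^ k ≤ B ^ (k + 1) := pow_le_pow_right₀ hB.le (Nat.le_succ k)
  nlinarith

/-! ### The essential limit -/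

/-- If a single ratio exceeds `M`, then the ratios below `M` form a set of density `0`. -/
lemma density_below {f : ℕ → ℝ} {g : ℝ → ℝ} (hf0 : ∀ n, 0 ≤ f n)
    (hwsm : WeaklySuperMult f) (hgpos : ∀ x : ℝ, 0 < x → 0 < g x)
    (hgmono : ∀ x y : ℝ, 0 < x → x ≤ y → g x ≤ g y) (hno : HasNormalOrder f g)
    {n : ℕ} (hn : 2 ≤ n) {M : ℝ} (hM : (M : EReal) < logRatio f n) :
    HasNatDensity {k : ℕ | logRatio f k < (M : EReal)} 0 := by
  have hfn : f n ≠ 0 := by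
    intro h; simp [logRatio, h] at hM
  have hfpos : 0 < f n := lt_of_le_of_ne (hf0 n) hfn.symm
  simp only [logRatio, if_neg hfn, EReal.coe_lt_coe_iff] at hM
  have hn2 : (2 : ℝ) ≤ n := by exact_mod_cast hn
  -- The gain exponent `log A / log B` depends continuously on `ε`, with value
  -- `log f(n) / log n > M` at `ε = 0`.
  have hcont : ContinuousAt
      (fun ε : ℝ => Real.log ((1 - ε) ^ 2 / (1 + ε) * f n) / Real.log (n * (1 + ε))) 0 := by
    refine ContinuousAt.div (ContinuousAt.log ?_ (by simpa using hfn))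
      (ContinuousAt.log (by fun_prop) (by simp; omega)) ?_
    · exact (ContinuousAt.div (by fun_prop) (by fun_prop) (by norm_num)).mul (by fun_prop)
    · simpa using (Real.log_pos (by linarith : (1 : ℝ) < n)).ne'
  have hev := hcont.eventually (lt_mem_nhds (by simpa using hM))
  have hev2 := (hev.filter_mono (nhdsWithin_le_nhds (s := Set.Ioi 0))).and
    (Ioo_mem_nhdsGT (show (0 : ℝ) < 1 / 2 by norm_num))
  obtain ⟨ε, hεM, hε0, hε1⟩ := hev2.exists
  set A : ℝ := (1 - ε) ^ 2 / (1 + ε) * f n with hA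
  set B : ℝ := n * (1 + ε) with hBdef
  have hB1 : 1 < B := by nlinarith
  have hA0 : 0 < A := by
    have : 0 < 1 - ε := by linarith
    positivity
  set P : ℝ := Real.log A / Real.log B with hP
  have hBP : B ^ P = A := by
    rw [Real.rpow_def_of_pos (by linarith), hP, mul_div_cancel₀ _ (Real.log_pos hB1).ne',
      Real.exp_log hA0]
  have hE := hno ε hε0
  obtain ⟨x₁, hx₁, hgood⟩ := exists_good hwsm hE (show 0 < n by omega) hε0
  obtain ⟨C, hC, hgrow⟩ := growth_of_step hgpos hgmono (P := P) hB1 hx₁ (by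
    intro x hx
    have hx0 : 0 < x := by linarith
    obtain ⟨m, h1, h2, h3, h4, h5⟩ := hgood x hx
    simp only [Set.mem_ofPred_eq, not_le, abs_lt] at h4 h5
    push_cast at h5
    have h6 : g x ≤ g m := hgmono _ _ hx0 h1
    have h7 : g (n * m) ≤ g (B * x) := by
      apply hgmono
      · have : 0 < (m : ℝ) := by linarith
        positivity
      · rw [hBdef, mul_assoc]; gcongr
    have h8 : (1 - ε) * g x ≤ f m := by nlinarith
    have h9 : (1 - ε) * f n * ((1 - ε) * g x) ≤ (1 + ε) * g (B * x) := by
      calc _ ≤ (1 - ε) * f n * f m :=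
            mul_le_mul_of_nonneg_left h8 (mul_nonneg (by linarith) hfpos.le)
        _ ≤ f (n * m) := h3
        _ ≤ (1 + ε) * g (n * m) := by linarith
        _ ≤ _ := by gcongr
    rw [hBP, hA]
    have h10 : (1 - ε) ^ 2 / (1 + ε) * f n * g x
        = ((1 - ε) * f n * ((1 - ε) * g x)) / (1 + ε) := by ring
    rw [h10, div_le_iff₀ (by linarith)]
    linarith)
  have hlim : Filter.Tendsto (fun k : ℕ => (k : ℝ) ^ (P - M)) Filter.atTop Filter.atTop :=
    (tendsto_rpow_atTop (by linarith)).comp tendsto_natCast_atTop_atTop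
  obtain ⟨K₁, hK₁⟩ := Filter.eventually_atTop.1 (hlim.eventually_ge_atTop (2 / C))
  obtain ⟨K₂, hK₂⟩ := exists_nat_gt x₁
  refine hasNatDensity_zero_of_subset hE (K₁ + K₂ + 2) fun k hk hkK => ?_
  by_contra hkE
  simp only [Set.mem_ofPred_eq, not_le, abs_lt] at hkE
  have hk2 : (2 : ℝ) ≤ k := by exact_mod_cast (by omega : 2 ≤ k)
  have hk0 : (0 : ℝ) < k := by linarith
  have hkx : x₁ ≤ k := hK₂.le.trans (by exact_mod_cast (by omega : K₂ ≤ k))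
  have h1 := hgrow k hkx
  have h2 := hK₁ k (by omega)
  have hgk := hgpos k hk0
  have h3 : g k / 2 ≤ f k := by nlinarith
  have h4 : (k : ℝ) ^ M ≤ f k := by
    have h5 : (k : ℝ) ^ P = (k : ℝ) ^ (P - M) * (k : ℝ) ^ M := by
      rw [← Real.rpow_add hk0]; congr 1; ring
    have h6 : 0 < (k : ℝ) ^ M := by positivity
    have h7 : 2 ≤ (k : ℝ) ^ (P - M) * C := (div_le_iff₀ hC).1 h2
    rw [h5] at h1
    nlinarith
  have hfk : 0 < f k := lt_of_lt_of_le (by positivity) h4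
  have hk' : logRatio f k < (M : EReal) := hk
  simp only [logRatio, if_neg hfk.ne', EReal.coe_lt_coe_iff] at hk'
  rw [div_lt_iff₀ (Real.log_pos (by linarith))] at hk'
  have := Real.log_le_log (by positivity) h4
  rw [Real.log_rpow hk0] at this
  linarith

/-- Theorem (monotone case): if `f : ℕ → [0,∞)` is weakly super-multiplicative and has
a strictly positive, non-decreasing normal order `g`, then
`sup_{n ≥ 2} log f(n) / log n = lim ess log f(n) / log n`. -/
theorem weakly_supermult_normal_order_monotone
    (f : ℕ → ℝ) (g : ℝ → ℝ)
    (hf0 : ∀ n, 0 ≤ f n)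
    (hwsm : WeaklySuperMult f)
    (hgpos : ∀ x : ℝ, 0 < x → 0 < g x)
    (hgmono : ∀ x y : ℝ, 0 < x → x ≤ y → g x ≤ g y)
    (hno : HasNormalOrder f g) :
    EssLimitTo (logRatio f) (⨆ n ∈ Set.Ici (2 : ℕ), logRatio f n) := by
  have hle : ∀ n : ℕ, 2 ≤ n → logRatio f n ≤ ⨆ n ∈ Set.Ici (2 : ℕ), logRatio f n :=
    fun n hn => le_iSup₂ (f := fun n (_ : n ∈ Set.Ici (2 : ℕ)) => logRatio f n) n hn
  have hbelow : ∀ M : ℝ, (M : EReal) < (⨆ n ∈ Set.Ici (2 : ℕ), logRatio f n) →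
      HasNatDensity {k : ℕ | logRatio f k < (M : EReal)} 0 := by
    intro M hM
    obtain ⟨n, hn⟩ := lt_iSup_iff.1 hM
    obtain ⟨hn2, hn⟩ := lt_iSup_iff.1 hn
    exact density_below hf0 hwsm hgpos hgmono hno hn2 hn
  -- The supremum is not `-∞`, because `f > 0` off the exceptional set for `ε = 1`.
  have hbot : (⨆ n ∈ Set.Ici (2 : ℕ), logRatio f n) ≠ ⊥ := by
    obtain ⟨x₁, hx₁, H⟩ := exists_good hwsm (hno 1 one_pos) one_pos one_pos
    obtain ⟨m, h1, -, -, h2, -⟩ := H (max x₁ 2) (le_max_left _ _)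
    have hm : (2 : ℝ) ≤ m := (le_max_right _ _).trans h1
    simp only [Set.mem_ofPred_eq, not_le, abs_lt] at h2
    have hfm : 0 < f m := by linarith
    intro hb
    have := hle m (by exact_mod_cast hm)
    rw [hb, logRatio, if_neg hfm.ne'] at this
    exact EReal.coe_ne_bot _ (le_bot_iff.1 this)
  generalize (⨆ n ∈ Set.Ici (2 : ℕ), logRatio f n) = L at *
  induction L with
  | bot => exact absurd rfl hbot
  | top => exact Or.inl ⟨rfl, fun M => hbelow M (EReal.coe_lt_top M)⟩
  | coe l =>
    refine Or.inr ⟨l, rfl, fun ε hε => ?_⟩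
    have hd := hbelow (l - ε) (EReal.coe_lt_coe_iff.2 (by linarith))
    have hu : upperDensity {k : ℕ | logRatio f k < ((l - ε : ℝ) : EReal)} = 0 := hd.limsup_eq
    refine hasNatDensity_zero_of_subset hu 2 fun n hn hn2 => ?_
    rcases hn with hn | hn
    · exact hn
    · have h1 := hn.trans_le (hle n hn2)
      rw [EReal.coe_lt_coe_iff] at h1
      linarith
end

section
/- Let G be a finitely generated residually finite group, and for n ∈ ℕ let f(n) denote the number of normal subgroups of G of index n. If f has a normal order g, where g : (0,∞) → (0,∞) is strictly positive and is either monotone or log-uniformly continuous, then G is isomorphic to the additive group of the integers (ℤ, +). -/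
/-- `g` is log-uniformly continuous: for every `ε > 0` there is `δ > 0` such that
`|x/y - 1| < δ` implies `|g(x)/g(y) - 1| < ε` for positive `x, y`. -/
def LogUniformlyContinuous (g : ℝ → ℝ) : Prop :=
  ∀ ε : ℝ, 0 < ε → ∃ δ : ℝ, 0 < δ ∧ ∀ x y : ℝ, 0 < x → 0 < y →
    |x / y - 1| < δ → |g x / g y - 1| < ε

/-- A group is residually finite if every nontrivial element is avoided by some
normal subgroup of finite index. -/
def ResiduallyFinite (G : Type*) [Group G] : Prop :=
  ∀ g : G, g ≠ 1 → ∃ N : Subgroup G, N.Normal ∧ N.FiniteIndex ∧ g ∉ N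

/-- The number of normal subgroups of `G` of index `n`. -/
noncomputable def normalCount (G : Type*) [Group G] (n : ℕ) : ℕ :=
  Nat.card {N : Subgroup G // N.Normal ∧ N.index = n}

/-! ### Normal subgroups of coprime and of nearly prime index -/

theorem finite_hom_of_fg {G H : Type*} [Group G] [Group H] [Finite H] (hFG : Group.FG G) :
    Finite (G →* H) := by
  obtain ⟨S, hS⟩ := hFG.out
  refine Finite.of_injective (fun (φ : G →* H) (s : S) => φ s) ?_
  intro φ ψ h
  refine MonoidHom.eq_of_eqOn_dense hS ?_
  intro s hs
  exact congrFun h ⟨s, hs⟩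

/-- A normal subgroup of index `n` is the kernel of a homomorphism to `Perm (Fin n)`, and a finitely
generated group has only finitely many of those. -/
theorem finite_normal {G : Type*} [Group G] (hFG : Group.FG G) {n : ℕ} (hn : n ≠ 0) :
    Finite {N : Subgroup G // N.Normal ∧ N.index = n} := by
  have := finite_hom_of_fg (H := Equiv.Perm (Fin n)) hFG
  have key : ∀ N : {N : Subgroup G // N.Normal ∧ N.index = n},
      ∃ φ : G →* Equiv.Perm (Fin n), φ.ker = N.1 := by
    rintro ⟨N, hN, hi⟩
    have : Finite (G ⧸ N) := by
      apply Nat.finite_of_card_ne_zero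
      rw [← Subgroup.index_eq_card, hi]; exact hn
    have e : (G ⧸ N) ≃ Fin n := Finite.equivFinOfCardEq (by rw [← Subgroup.index_eq_card, hi])
    refine ⟨(e.permCongrHom : Equiv.Perm (G ⧸ N) →* Equiv.Perm (Fin n)).comp (MulAction.toPermHom G (G ⧸ N)), ?_⟩
    have hk : (MulAction.toPermHom G (G ⧸ N)).ker = N := by
      rw [← Subgroup.normalCore_eq_ker, Subgroup.normalCore_eq_self]
    refine Eq.trans ?_ hk
    ext g
    rw [MonoidHom.mem_ker, MonoidHom.mem_ker]
    exact map_eq_one_iff _ (MulEquiv.injective e.permCongrHom)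
  choose Φ hΦ using key
  refine Finite.of_injective Φ ?_
  intro N N' h
  apply Subtype.ext
  rw [← hΦ N, ← hΦ N', h]

theorem index_inf_coprime {G : Type*} [Group G] {H K : Subgroup G} {a b : ℕ} (ha : H.index = a)
    (hb : K.index = b) (hab : a.Coprime b) (h0 : a ≠ 0) (h1 : b ≠ 0) :
    (H ⊓ K).index = a * b := by
  apply le_antisymm
  · rw [← ha, ← hb]; exact Subgroup.index_inf_le
  · apply Nat.le_of_dvd
    · apply Nat.pos_of_ne_zero; apply Subgroup.index_inf_ne_zero <;> simp [*]
    · apply Nat.Coprime.mul_dvd_of_dvd_of_dvd hab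
      · rw [← ha]; exact Subgroup.index_dvd_of_le inf_le_left
      · rw [← hb]; exact Subgroup.index_dvd_of_le inf_le_right

/-- An intersection of normal subgroups of coprime indices `a` and `b` determines the first factor:
it is the set of `g` such that `g ^ b` lies in the intersection. -/
theorem mem_iff_pow_mem_inf {G : Type*} [Group G] {H K : Subgroup G} [H.Normal] [K.Normal] {a b : ℕ}
    (ha : H.index = a) (hb : K.index = b) (hab : a.Coprime b) (g : G) :
    g ∈ H ↔ g ^ b ∈ H ⊓ K := by
  constructor
  · intro h
    exact ⟨H.pow_mem h _, hb ▸ K.pow_index_mem g⟩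
  · rintro ⟨h, -⟩
    have h2 : g ^ a ∈ H := ha ▸ H.pow_index_mem g
    have h3 : ∀ x : ℤ, g ^ ((a : ℤ) * x) ∈ H := fun x => by
      rw [zpow_mul, zpow_natCast]; exact H.zpow_mem h2 x
    have h4 : ∀ x : ℤ, g ^ ((b : ℤ) * x) ∈ H := fun x => by
      rw [zpow_mul, zpow_natCast]; exact H.zpow_mem h x
    have := Nat.gcd_eq_gcd_ab a b
    rw [hab] at this
    -- Bézout: `g = g ^ (a x) * g ^ (b y)`.
    have h5 := H.mul_mem (h3 (Nat.gcdA a b)) (h4 (Nat.gcdB a b))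
    rw [← zpow_add, ← this] at h5
    simpa using h5

/-- Supermultiplicativity on coprime arguments: intersecting is injective on pairs. -/
theorem normalCount_mul_le {G : Type*} [Group G] (hFG : Group.FG G) {a b : ℕ} (hab : a.Coprime b)
    (h0 : a ≠ 0) (h1 : b ≠ 0) : normalCount G a * normalCount G b ≤ normalCount G (a * b) := by
  unfold normalCount
  have := finite_normal hFG (mul_ne_zero h0 h1)
  rw [← Nat.card_prod]
  refine Nat.card_le_card_of_injective
    (fun x => ⟨x.1.1 ⊓ x.2.1, ?_, index_inf_coprime x.1.2.2 x.2.2.2 hab h0 h1⟩) ?_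
  · have := x.1.2.1; have := x.2.2.1; infer_instance
  · rintro ⟨⟨H, hH, hHi⟩, ⟨K, hK, hKi⟩⟩ ⟨⟨H', hH', hHi'⟩, ⟨K', hK', hKi'⟩⟩ h
    have h' : H ⊓ K = H' ⊓ K' := by simpa using h
    have e1 : H = H' := by
      ext g
      rw [mem_iff_pow_mem_inf hHi hKi hab, mem_iff_pow_mem_inf hHi' hKi' hab, h']
    have e2 : K = K' := by
      ext g
      rw [mem_iff_pow_mem_inf hKi hHi hab.symm, mem_iff_pow_mem_inf hKi' hHi' hab.symm,
        inf_comm, h', inf_comm]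
    subst e1 e2
    rfl

/-- In a finite group of order `p * m` with `p > m` and `gcd(m, p - 1) = 1` the Sylow
`p`-subgroup is normal and, since `gcd(p * m, p - 1) = 1`, it is central; Burnside's transfer
theorem then gives a normal complement. -/
theorem split_finite {Q : Type*} [Group Q] {p m : ℕ} (hp : p.Prime) (hm : m ≠ 0)
    (hpm : m < p) (hc : m.Coprime (p - 1)) (hQ : Nat.card Q = p * m) :
    ∃ H K : Subgroup Q, H.Normal ∧ K.Normal ∧ H.index = p ∧ K.index = m ∧ H ⊓ K = ⊥ := by
  have := Fact.mk hp
  have : Finite Q := Nat.finite_of_card_ne_zero (by rw [hQ]; exact mul_ne_zero hp.ne_zero hm)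
  have hndvd : ¬ p ∣ m := fun h => absurd (Nat.le_of_dvd (Nat.pos_of_ne_zero hm) h) (by omega)
  obtain ⟨P⟩ : Nonempty (Sylow p Q) := inferInstance
  have hPc : Nat.card P = p := by
    rw [P.card_eq_multiplicity, hQ, Nat.factorization_mul hp.ne_zero hm]
    simp [hp.factorization_self, Nat.factorization_eq_zero_of_not_dvd hndvd]
  have hPi : (P : Subgroup Q).index = m := by
    have := (P : Subgroup Q).card_mul_index
    rw [hPc, hQ] at this
    exact Nat.eq_of_mul_eq_mul_left hp.pos this
  have hcard : Nat.card (Sylow p Q) = 1 := by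
    have h1 := card_sylow_modEq_one p Q
    have h2 := P.card_dvd_index
    rw [hPi] at h2
    have h3 := Nat.le_of_dvd (Nat.pos_of_ne_zero hm) h2
    have h4 : Nat.card (Sylow p Q) < p := by omega
    unfold Nat.ModEq at h1
    rwa [Nat.mod_eq_of_lt h4, Nat.mod_eq_of_lt hp.one_lt] at h1
  have : Subsingleton (Sylow p Q) := (Nat.card_eq_one_iff_unique.mp hcard).1
  have hPn : (P : Subgroup Q).Normal := Sylow.normal_of_subsingleton P
  -- `Q / C(P)` embeds in `Aut P`, of order `p - 1`, while its own order divides `p * m`.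
  have hcyc : IsCyclic P := isCyclic_of_prime_card hPc
  have hle : Subgroup.normalizer P ≤ Subgroup.centralizer (P : Set Q) := by
    have key := Subgroup.card_dvd_of_injective _
      (QuotientGroup.kerLift_injective P.normalizerMonoidHom)
    rw [Subgroup.normalizerMonoidHom_ker, ← Subgroup.index, ← Subgroup.relIndex] at key
    refine Subgroup.relIndex_eq_one.mp (Nat.eq_one_of_dvd_coprimes ?_ dvd_rfl key)
    rw [hcyc.card_mulAut, hPc, Nat.totient_prime hp]
    apply Nat.Coprime.coprime_dvd_left (Subgroup.relIndex_dvd_card ..)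
    apply Nat.Coprime.coprime_dvd_left (Subgroup.card_subgroup_dvd_card _)
    rw [hQ]
    refine Nat.Coprime.mul_left ?_ hc
    rw [hp.coprime_iff_not_dvd]
    intro h
    have := Nat.le_of_dvd (by have := hp.two_le; omega) h
    have := hp.two_le
    omega
  have hcomp := MonoidHom.ker_transferSylow_isComplement' P hle
  refine ⟨(MonoidHom.transferSylow P hle).ker, P, inferInstance, hPn, ?_, hPi, ?_⟩
  · rw [hcomp.symm.index_eq_card, hPc]
  · exact hcomp.disjoint.eq_bot

/-- Submultiplicativity in a special case: every quotient of order `p * m` splits by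
`split_finite`, so its kernel is an intersection of normal subgroups of indices `p` and `m`. -/
theorem normalCount_le_mul {G : Type*} [Group G] (hFG : Group.FG G) {p m : ℕ} (hp : p.Prime)
    (hm : m ≠ 0) (hpm : m < p) (hc : m.Coprime (p - 1)) :
    normalCount G (p * m) ≤ normalCount G p * normalCount G m := by
  have := finite_normal hFG hp.ne_zero
  have := finite_normal hFG hm
  have key : ∀ N : {N : Subgroup G // N.Normal ∧ N.index = p * m},
      ∃ x : {N : Subgroup G // N.Normal ∧ N.index = p} ×
        {N : Subgroup G // N.Normal ∧ N.index = m}, x.1.1 ⊓ x.2.1 = N.1 := by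
    rintro ⟨N, hN, hi⟩
    obtain ⟨H, K, hH, hK, hHi, hKi, hHK⟩ := split_finite (Q := G ⧸ N) hp hm hpm hc
      (by rw [← Subgroup.index_eq_card, hi])
    have hs := QuotientGroup.mk'_surjective N
    refine ⟨⟨⟨H.comap (QuotientGroup.mk' N), inferInstance, ?_⟩,
      ⟨K.comap (QuotientGroup.mk' N), inferInstance, ?_⟩⟩, ?_⟩
    · rw [Subgroup.index_comap_of_surjective _ hs, hHi]
    · rw [Subgroup.index_comap_of_surjective _ hs, hKi]
    · simp only
      rw [← Subgroup.comap_inf, hHK, MonoidHom.comap_bot, QuotientGroup.ker_mk']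
  choose Φ hΦ using key
  unfold normalCount
  rw [← Nat.card_prod]
  refine Nat.card_le_card_of_injective Φ ?_
  intro N N' h
  apply Subtype.ext
  rw [← hΦ N, ← hΦ N', h]

/-! ### The free rank and subgroups of prime index -/

theorem monoidHom_eq_one_of_torsion {A : Type*} [Group A] {p T : ℕ} (hpT : p.Coprime T)
    (θ : A →* Multiplicative (ZMod p)) {t : A} (ht : t ^ T = 1) : θ t = 1 := by
  have h1 : (θ t) ^ T = 1 := by rw [← map_pow, ht, map_one]
  have h2 : (θ t) ^ p = 1 := by
    apply Multiplicative.toAdd.injective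
    rw [toAdd_pow, toAdd_one]
    simp
  have h3 := orderOf_dvd_of_pow_eq_one h1
  have h4 := orderOf_dvd_of_pow_eq_one h2
  exact orderOf_eq_one_iff.mp (Nat.eq_one_of_dvd_coprimes hpT h4 h3)

/-- The free rank `b` of the abelianization: there are `b` jointly surjective homomorphisms to `ℤ`,
with a dual family `e` of elements of `G` on which homomorphisms to `ZMod p` are determined for
every large prime `p`. -/
theorem exists_rank {G : Type*} [Group G] (hFG : Group.FG G) :
    ∃ (b T : ℕ) (φ : Fin b → (G →* Multiplicative ℤ)) (e : Fin b → G),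
      (∀ i j, φ i (e j) = Multiplicative.ofAdd (if i = j then 1 else 0)) ∧
      ∀ p : ℕ, p.Prime → T < p → ∀ χ χ' : G →* Multiplicative (ZMod p),
        (∀ i, χ (e i) = χ' (e i)) → χ = χ' := by
  classical
  have : Group.FG (Abelianization G) := QuotientGroup.fg _
  obtain ⟨ι, J, _, _, q, hq, k, ⟨E⟩⟩ :=
    CommGroup.equiv_free_prod_prod_multiplicative_zmod (Abelianization G)
  have : ∀ i, NeZero (q i ^ k i) := fun i => ⟨pow_ne_zero _ (hq i).ne_zero⟩
  let σ := (Fintype.equivFin J).symm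
  let ev : Abelianization G →* (J → Multiplicative ℤ) := (MonoidHom.fst _ _).comp E.toMonoidHom
  have hlift : ∀ j : J, ∃ g : G, E (Abelianization.of g) =
      (Pi.mulSingle j (Multiplicative.ofAdd 1), 1) := by
    intro j
    obtain ⟨g, hg⟩ := QuotientGroup.mk_surjective (s := commutator G) (E.symm (Pi.mulSingle j (Multiplicative.ofAdd 1), 1))
    refine ⟨g, ?_⟩
    have : Abelianization.of g = E.symm (Pi.mulSingle j (Multiplicative.ofAdd 1), 1) := hg
    rw [this, E.apply_symm_apply]
  choose e he using hlift
  let Tor := (i : ι) → Multiplicative (ZMod (q i ^ k i))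
  have : Finite Tor := by
    have : ∀ i, Finite (Multiplicative (ZMod (q i ^ k i))) := fun i =>
      inferInstanceAs (Finite (ZMod (q i ^ k i)))
    exact Pi.finite
  have hTpos : 0 < Nat.card Tor := Nat.card_pos
  refine ⟨Fintype.card J, Nat.card Tor,
    fun i => ((Pi.evalMonoidHom _ (σ i)).comp ev).comp Abelianization.of, fun i => e (σ i), ?_, ?_⟩
  · intro i j
    simp only [ev, MonoidHom.comp_apply, MulEquiv.coe_toMonoidHom, he, MonoidHom.coe_fst,
      Pi.evalMonoidHom_apply]
    by_cases h : i = j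
    · subst h; simp
    · simp [h]
  · intro p hp hTp χ χ' h
    have hcop : p.Coprime (Nat.card Tor) := by
      rw [hp.coprime_iff_not_dvd]
      intro hd
      exact absurd (Nat.le_of_dvd hTpos hd) (by omega)
    -- It is enough to compare the induced homomorphisms on `ℤ ^ J × Tor`; both kill `Tor`.
    let ρ : ((J → Multiplicative ℤ) × Tor) →* Multiplicative (ZMod p) :=
      (Abelianization.lift χ).comp E.symm.toMonoidHom
    let ρ' : ((J → Multiplicative ℤ) × Tor) →* Multiplicative (ZMod p) :=
      (Abelianization.lift χ').comp E.symm.toMonoidHom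
    have hρe : ∀ g, ρ (E (Abelianization.of g)) = χ g := fun g => by simp [ρ]
    have hρe' : ∀ g, ρ' (E (Abelianization.of g)) = χ' g := fun g => by simp [ρ']
    have hfree : ρ.comp (MonoidHom.inl _ _) = ρ'.comp (MonoidHom.inl _ _) := by
      apply MonoidHom.functions_ext'
      intro j
      apply MonoidHom.ext_mint
      have := h (σ.symm j)
      simp only [Equiv.apply_symm_apply] at this
      rw [← hρe, ← hρe', he] at this
      simpa using this
    have hρρ : ρ = ρ' := by
      ext1 ⟨v, t⟩
      have hvt : ((v, t) : (J → Multiplicative ℤ) × Tor) = (v, 1) * (1, t) := by simp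
      have hv : ρ (v, 1) = ρ' (v, 1) := DFunLike.congr_fun hfree v
      have ht : ((1, t) : (J → Multiplicative ℤ) × Tor) ^ (Nat.card Tor) = 1 := by
        rw [Prod.pow_mk, one_pow, pow_card_eq_one']; rfl
      rw [hvt, map_mul, map_mul, hv, monoidHom_eq_one_of_torsion hcop ρ ht,
        monoidHom_eq_one_of_torsion hcop ρ' ht]
    ext1 g
    rw [← hρe, ← hρe', hρρ]

/-- Multiplication of a homomorphism to `ZMod p` by a scalar. -/
noncomputable def scaleHom {G : Type*} [Group G] {p : ℕ} (u : ZMod p) (χ : G →* Multiplicative (ZMod p)) :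
    G →* Multiplicative (ZMod p) :=
  (AddMonoidHom.toMultiplicative (AddMonoidHom.mulLeft u)).comp χ

theorem scaleHom_apply {G : Type*} [Group G] {p : ℕ} (u : ZMod p) (χ : G →* Multiplicative (ZMod p))
    (g : G) : scaleHom u χ g = Multiplicative.ofAdd (u * (χ g).toAdd) := rfl

/-- Each normal subgroup of prime index `p` is the kernel of `p - 1` distinct nontrivial homomorphisms
to `ZMod p`, and there are at most `p ^ b` homomorphisms in total. -/
theorem normalCount_prime_le {G : Type*} [Group G] {b p : ℕ} (hp : p.Prime) (e : Fin b → G)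
    (he : ∀ χ χ' : G →* Multiplicative (ZMod p), (∀ i, χ (e i) = χ' (e i)) → χ = χ') :
    normalCount G p * (p - 1) + 1 ≤ p ^ b := by
  have := Fact.mk hp
  have hfin : Finite (Multiplicative (ZMod p)) := inferInstanceAs (Finite (ZMod p))
  have hinj : Function.Injective
      (fun (χ : G →* Multiplicative (ZMod p)) (i : Fin b) => χ (e i)) := by
    intro χ χ' h
    exact he χ χ' (fun i => congrFun h i)
  have hfinHom : Finite (G →* Multiplicative (ZMod p)) := Finite.of_injective _ hinj
  have hcard : Nat.card (G →* Multiplicative (ZMod p)) ≤ p ^ b := by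
    refine (Nat.card_le_card_of_injective _ hinj).trans ?_
    rw [Nat.card_fun]
    have : Nat.card (Multiplicative (ZMod p)) = p := Nat.card_zmod p
    rw [this]; simp
  have key : ∀ N : {N : Subgroup G // N.Normal ∧ N.index = p},
      ∃ χ : G →* Multiplicative (ZMod p), χ.ker = N.1 ∧ Function.Surjective χ := by
    rintro ⟨N, hN, hi⟩
    have h1 : Nat.card (G ⧸ N) = p := by rw [← Subgroup.index_eq_card, hi]
    have h2 : Nat.card (Multiplicative (ZMod p)) = p := Nat.card_zmod p
    let E := mulEquivOfPrimeCardEq h1 h2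
    refine ⟨(E : (G ⧸ N) →* Multiplicative (ZMod p)).comp (QuotientGroup.mk' N), ?_, ?_⟩
    · ext g
      rw [MonoidHom.mem_ker, MonoidHom.comp_apply]
      refine (map_eq_one_iff _ E.injective).trans ?_
      simp
    · exact E.surjective.comp (QuotientGroup.mk'_surjective N)
  choose χ hχ hχs using key
  have hker : ∀ N (u : (ZMod p)ˣ), (scaleHom (u : ZMod p) (χ N)).ker = N.1 := by
    intro N u
    rw [← hχ N]
    ext g
    rw [MonoidHom.mem_ker, MonoidHom.mem_ker, scaleHom_apply, ofAdd_eq_one]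
    rw [Units.mul_right_eq_zero]
    exact toAdd_eq_zero
  -- `none` goes to the trivial homomorphism, `(N, u)` to the `u`-multiple of the one chosen for `N`.
  let F : Option ({N : Subgroup G // N.Normal ∧ N.index = p} × (ZMod p)ˣ) →
      (G →* Multiplicative (ZMod p)) :=
    fun x => x.elim 1 (fun y => scaleHom (y.2 : ZMod p) (χ y.1))
  have hFinj : Function.Injective F := by
    have hne : ∀ N (u : (ZMod p)ˣ), scaleHom (u : ZMod p) (χ N) ≠ 1 := by
      intro N u h
      have h1 := hker N u
      rw [h, MonoidHom.ker_one] at h1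
      have h2 := N.2.2
      rw [← h1, Subgroup.index_top] at h2
      exact hp.one_lt.ne h2
    rintro (_ | ⟨N, u⟩) (_ | ⟨N', u'⟩) h
    · rfl
    · exact absurd h.symm (hne N' u')
    · exact absurd h (hne N u)
    · have h' : scaleHom (u : ZMod p) (χ N) = scaleHom (u' : ZMod p) (χ N') := h
      have hN : N = N' := by
        apply Subtype.ext
        rw [← hker N u, ← hker N' u', h']
      subst hN
      obtain ⟨g, hg⟩ := hχs N (Multiplicative.ofAdd 1)
      have h2 := DFunLike.congr_fun h' g
      rw [scaleHom_apply, scaleHom_apply, hg] at h2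
      have h3 : u = u' := by
        apply Units.ext
        simpa using h2
      rw [h3]
  have hO := Nat.card_le_card_of_injective F hFinj
  have hfinO : Finite (Option ({N : Subgroup G // N.Normal ∧ N.index = p} × (ZMod p)ˣ)) :=
    Finite.of_injective F hFinj
  have hfinP : Finite ({N : Subgroup G // N.Normal ∧ N.index = p} × (ZMod p)ˣ) :=
    Finite.of_injective _ (Option.some_injective _)
  rw [Finite.card_option, Nat.card_prod, Nat.card_units, Nat.card_zmod] at hO
  exact hO.trans hcard

/-! ### The lower bound along multiples of a fixed number -/

/-- The homomorphism `x ↦ ∑ i, v i * φ i x` to `ZMod n`. -/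
noncomputable def combHom {G : Type*} [Group G] {b : ℕ} (φ : Fin b → (G →* Multiplicative ℤ)) {n : ℕ}
    (v : Fin b → ZMod n) : G →* Multiplicative (ZMod n) where
  toFun x := Multiplicative.ofAdd (∑ i, v i * (((φ i x).toAdd : ℤ) : ZMod n))
  map_one' := by simp
  map_mul' x y := by simp [mul_add, Finset.sum_add_distrib, ofAdd_add]

theorem mem_ker_combHom {G : Type*} [Group G] {b : ℕ} {φ : Fin b → (G →* Multiplicative ℤ)} {n : ℕ}
    {v : Fin b → ZMod n} {x : G} :
    x ∈ (combHom φ v).ker ↔ ∑ i, v i * (((φ i x).toAdd : ℤ) : ZMod n) = 0 := by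
  rw [MonoidHom.mem_ker]
  exact Iff.rfl

/-- A vector with an entry `1` gives a kernel of index exactly `n`. -/
theorem index_ker_combHom {G : Type*} [Group G] {b : ℕ} {φ : Fin b → (G →* Multiplicative ℤ)}
    {e : Fin b → G} (he : ∀ i j, φ i (e j) = Multiplicative.ofAdd (if i = j then 1 else 0)) {n : ℕ}
    {v : Fin b → ZMod n} {i : Fin b} (hi : v i = 1) : (combHom φ v).ker.index = n := by
  have hs : Function.Surjective (combHom φ v) := by
    intro y
    obtain ⟨z, hz⟩ := ZMod.intCast_surjective (Multiplicative.toAdd y)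
    refine ⟨e i ^ z, ?_⟩
    apply Multiplicative.toAdd.injective
    rw [← hz]
    simp [combHom, he, hi]
  rw [Subgroup.index_ker, MonoidHom.range_eq_top.mpr hs, Nat.card_congr Subgroup.topEquiv.toEquiv]
  exact Nat.card_zmod n

/-- The kernel determines the vector up to proportionality: all `2 × 2` minors of `(v, w)`
vanish. -/
theorem cross_of_ker_eq {G : Type*} [Group G] {b : ℕ} {φ : Fin b → (G →* Multiplicative ℤ)}
    {e : Fin b → G} (he : ∀ i j, φ i (e j) = Multiplicative.ofAdd (if i = j then 1 else 0)) {n : ℕ}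
    {v w : Fin b → ZMod n} (h : (combHom φ v).ker = (combHom φ w).ker) (i j : Fin b) :
    v j * w i = v i * w j := by
  obtain ⟨a, ha⟩ := ZMod.intCast_surjective (v i)
  obtain ⟨c, hc⟩ := ZMod.intCast_surjective (v j)
  have key : ∀ u : Fin b → ZMod n,
      ∑ l, u l * (((φ l (e i ^ c * (e j ^ a)⁻¹)).toAdd : ℤ) : ZMod n) = u i * c - u j * a := by
    intro u
    simp [he, mul_add, Finset.sum_add_distrib, sub_eq_add_neg]
  have h1 : e i ^ c * (e j ^ a)⁻¹ ∈ (combHom φ v).ker := by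
    rw [mem_ker_combHom, key, ha, hc]; ring
  rw [h, mem_ker_combHom, key, ha, hc] at h1
  linear_combination h1

theorem cons_zero_one {c : ℕ} {α : Type*} (x y : α) (w : Fin c → α) :
    (Fin.cons x (Fin.cons y w) : Fin (c + 2) → α) 1 = y := rfl

/-- Kernels of homomorphisms onto `ZMod (2 * h)` with coefficient vectors `(1, *, ..., *)` and
`(2 * a, 1, *, ..., *)` are pairwise distinct. -/
theorem normalCount_ge_of_two_le_rank {G : Type*} [Group G] (hFG : Group.FG G) {c : ℕ}
    {φ : Fin (c + 2) → (G →* Multiplicative ℤ)} {e : Fin (c + 2) → G}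
    (he : ∀ i j, φ i (e j) = Multiplicative.ofAdd (if i = j then 1 else 0)) {h : ℕ} (hh : 0 < h) :
    3 * (2 * h) ^ (c + 1) ≤ 2 * normalCount G (2 * h) := by
  have hn : 2 * h ≠ 0 := by omega
  have : NeZero (2 * h) := ⟨hn⟩
  have := finite_normal hFG hn
  let V : ((Fin (c + 1) → ZMod (2 * h)) ⊕ (Fin h × (Fin c → ZMod (2 * h)))) →
      (Fin (c + 2) → ZMod (2 * h)) :=
    Sum.elim (fun w => Fin.cons 1 w)
      (fun y => Fin.cons (((2 * (y.1 : ℕ) : ℕ)) : ZMod (2 * h)) (Fin.cons 1 y.2))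
  let F : ((Fin (c + 1) → ZMod (2 * h)) ⊕ (Fin h × (Fin c → ZMod (2 * h)))) →
      {N : Subgroup G // N.Normal ∧ N.index = 2 * h} := fun x =>
    ⟨(combHom φ (V x)).ker, inferInstance, by
      rcases x with w | y
      · exact index_ker_combHom he (i := 0) rfl
      · exact index_ker_combHom he (i := 1) rfl⟩
  have hcross : ∀ (w : Fin (c + 1) → ZMod (2 * h)) (y : Fin h × (Fin c → ZMod (2 * h))),
      (combHom φ (V (Sum.inl w))).ker ≠ (combHom φ (V (Sum.inr y))).ker := by
    intro w y hk
    have h1 := cross_of_ker_eq he hk 0 1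
    have h2 : w 0 * (((2 * (y.1 : ℕ) : ℕ)) : ZMod (2 * h)) = 1 * 1 := h1
    -- `2 * a` is not a unit modulo an even number.
    have h3 := congrArg (ZMod.castHom (Dvd.intro h rfl : 2 ∣ 2 * h) (ZMod 2)) h2
    rw [map_mul, map_natCast, map_mul, map_one] at h3
    have h4 : ((2 : ℕ) : ZMod 2) = 0 := ZMod.natCast_self 2
    rw [Nat.cast_mul, h4] at h3
    simp at h3
  have hF : Function.Injective F := by
    rintro (w | y) (w' | y') hxy
    · have hk : (combHom φ (V (Sum.inl w))).ker = (combHom φ (V (Sum.inl w'))).ker :=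
        congrArg Subtype.val hxy
      congr 1
      ext i
      have h1 := cross_of_ker_eq he hk 0 i.succ
      have h2 : w i * 1 = 1 * w' i := h1
      simpa using h2
    · exact absurd (congrArg Subtype.val hxy) (hcross w y')
    · exact absurd (congrArg Subtype.val hxy).symm (hcross w' y)
    · have hk : (combHom φ (V (Sum.inr y))).ker = (combHom φ (V (Sum.inr y'))).ker :=
        congrArg Subtype.val hxy
      obtain ⟨a, w⟩ := y
      obtain ⟨a', w'⟩ := y'
      have h1 : (((2 * (a : ℕ) : ℕ)) : ZMod (2 * h)) * 1 = 1 * (((2 * (a' : ℕ) : ℕ)) : ZMod (2 * h)) :=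
        cross_of_ker_eq he hk 1 0
      have h2 : ∀ i : Fin c, w i * 1 = 1 * w' i := fun i => cross_of_ker_eq he hk 1 i.succ.succ
      rw [mul_one, one_mul, ZMod.natCast_eq_natCast_iff, Nat.ModEq, Nat.mod_eq_of_lt (by omega),
        Nat.mod_eq_of_lt (by omega)] at h1
      have ha : a = a' := Fin.ext (by omega)
      have hw : w = w' := funext fun i => by simpa using h2 i
      rw [ha, hw]
  have hcard := Nat.card_le_card_of_injective F hF
  have e1 : Nat.card ((Fin (c + 1) → ZMod (2 * h)) ⊕ (Fin h × (Fin c → ZMod (2 * h)))) =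
      (2 * h) ^ (c + 1) + h * (2 * h) ^ c := by
    rw [Nat.card_sum, Nat.card_prod, Nat.card_fun, Nat.card_fun]
    simp
  rw [e1] at hcard
  have e2 : 2 * ((2 * h) ^ (c + 1) + h * (2 * h) ^ c) = 3 * (2 * h) ^ (c + 1) := by ring
  rw [← e2]
  exact Nat.mul_le_mul_left 2 hcard

/-- For a surjection `φ : G → ℤ` with nontrivial kernel, residual finiteness supplies, besides
`φ⁻¹(k₀ j ℤ)`, a second normal subgroup of index `k₀ j`: one missing some element of `ker φ`. -/
theorem exists_two_le_normalCount {G : Type*} [Group G] (hFG : Group.FG G) (hRF : ResiduallyFinite G)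
    (hG : ¬ Nonempty (G ≃* Multiplicative ℤ)) {φ : G →* Multiplicative ℤ}
    (hφ : Function.Surjective φ) : ∃ k₀ : ℕ, 0 < k₀ ∧ ∀ j : ℕ, 0 < j → 2 ≤ normalCount G (k₀ * j) := by
  let H : ℕ → Subgroup (Multiplicative ℤ) := fun n =>
    (AddSubgroup.toSubgroup : AddSubgroup ℤ ≃o Subgroup (Multiplicative ℤ)) (AddSubgroup.zmultiples (n : ℤ))
  have hH : ∀ n, (H n).index = n := fun n => by
    have : (AddSubgroup.zmultiples (n : ℤ)).index = n := by simp
    exact this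
  obtain ⟨g, hgφ, hg1⟩ : ∃ g, φ g = 1 ∧ g ≠ 1 := by
    by_contra! hcon
    exact hG ⟨MulEquiv.ofBijective φ ⟨(injective_iff_map_eq_one φ).mpr hcon, hφ⟩⟩
  obtain ⟨N, hN, hNf, hgN⟩ := hRF g hg1
  -- The second subgroup is `φ⁻¹(N.index * j ℤ) ∩ N`, whose image under `φ` is `N.index * j ℤ`.
  have hr : N.index ≠ 0 := hNf.index_ne_zero
  have hle : ∀ j, H (N.index * j) ≤ N.map φ := by
    rintro j x hx
    obtain ⟨t, ht⟩ := (AddSubgroup.mem_zmultiples_iff (G := ℤ)).mp hx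
    obtain ⟨y, hy⟩ := hφ (Multiplicative.ofAdd (t * j))
    refine ⟨y ^ N.index, N.pow_index_mem y, ?_⟩
    rw [map_pow, hy]
    apply Multiplicative.toAdd.injective
    rw [toAdd_pow, toAdd_ofAdd, ← show t • ((N.index * j : ℕ) : ℤ) = x.toAdd from ht]
    push_cast
    simp only [smul_eq_mul, nsmul_eq_mul]
    ring
  have hs : (N.map φ).index ∣ N.index := Subgroup.index_map_dvd _ hφ
  obtain ⟨d, hd⟩ := hs
  have hs0 : (N.map φ).index ≠ 0 := fun h0 => hr (by rw [hd, h0, zero_mul])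
  have hd0 : d ≠ 0 := fun h0 => hr (by rw [hd, h0, mul_zero])
  have hrel : ∀ j, (H (N.index * j)).relIndex (N.map φ) = d * j := by
    intro j
    have h1 := Subgroup.relIndex_mul_index (hle j)
    rw [hH] at h1
    have h2 : (H (N.index * j)).relIndex (N.map φ) * (N.map φ).index
        = (d * j) * (N.map φ).index := by
      rw [h1]; nth_rewrite 1 [hd]; ring
    exact Nat.eq_of_mul_eq_mul_right (Nat.pos_of_ne_zero hs0) h2
  refine ⟨d * N.index, by positivity, ?_⟩
  intro j hj
  have := finite_normal hFG (n := d * N.index * j) (by positivity)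
  let A : {K : Subgroup G // K.Normal ∧ K.index = d * N.index * j} :=
    ⟨(H (d * N.index * j)).comap φ, inferInstance, by
      rw [Subgroup.index_comap_of_surjective _ hφ, hH]⟩
  let B : {K : Subgroup G // K.Normal ∧ K.index = d * N.index * j} :=
    ⟨(H (N.index * j)).comap φ ⊓ N, inferInstance, by
      rw [← Subgroup.relIndex_mul_index (inf_le_right : (H (N.index * j)).comap φ ⊓ N ≤ N),
        Subgroup.inf_relIndex_right, Subgroup.relIndex_comap, hrel]
      ring⟩
  have hAB : A ≠ B := by
    intro h
    have hA : g ∈ A.1 := by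
      change φ g ∈ H _
      rw [hgφ]; exact one_mem _
    rw [h] at hA
    exact hgN hA.2
  have : Nontrivial {K : Subgroup G // K.Normal ∧ K.index = d * N.index * j} := ⟨A, B, hAB⟩
  exact Finite.one_lt_card

/-- The lower bound in rank `b + 1`: along the multiples `n` of some `k₀` the count exceeds `n ^ b` by a
factor `3 / 2`. -/
theorem exists_normalCount_ge {G : Type*} [Group G] (hFG : Group.FG G) (hRF : ResiduallyFinite G)
    (hG : ¬ Nonempty (G ≃* Multiplicative ℤ)) {b : ℕ} {φ : Fin (b + 1) → (G →* Multiplicative ℤ)}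
    {e : Fin (b + 1) → G}
    (he : ∀ i j, φ i (e j) = Multiplicative.ofAdd (if i = j then 1 else 0)) :
    ∃ k₀ : ℕ, 0 < k₀ ∧ ∀ j : ℕ, 0 < j → 3 * (k₀ * j) ^ b ≤ 2 * normalCount G (k₀ * j) := by
  rcases b with _ | c
  · have hφ : Function.Surjective (φ 0) := by
      intro y
      refine ⟨e 0 ^ y.toAdd, ?_⟩
      rw [map_zpow, he]
      simp [← ofAdd_zsmul]
    obtain ⟨k₀, hk, hj⟩ := exists_two_le_normalCount hFG hRF hG hφ
    refine ⟨k₀, hk, fun j hj0 => ?_⟩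
    have := hj j hj0
    simp only [pow_zero]
    omega
  -- In rank at least two `k₀ = 2` works.
  · exact ⟨2, by norm_num, fun j hj => normalCount_ge_of_two_le_rank hFG he hj⟩

/-! ### Chebyshev-type estimates -/

/-- The primes `p` with `Y / 4 < p ≤ Y`. -/
def primeWindow (Y : ℕ) : Finset ℕ := (Finset.Icc 1 Y).filter (fun p => p.Prime ∧ Y < 4 * p)

theorem theta_nat (Y : ℕ) :
    Chebyshev.theta Y = ∑ p ∈ (Finset.Icc 1 Y).filter Nat.Prime, Real.log p := by
  rw [Chebyshev.theta, Nat.floor_natCast]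
  apply Finset.sum_congr _ (fun _ _ => rfl)
  ext p
  simp only [Finset.mem_filter, Finset.mem_Ioc, Finset.mem_Icc]
  constructor <;> intro h <;> exact ⟨⟨by omega, by omega⟩, h.2⟩

/-- Chebyshev: `θ(Y) - θ(Y / 4) ≥ Y / 4` for large `Y`. -/
theorem primeWindow_lower : ∃ Y₀ : ℕ, ∀ Y : ℕ, Y₀ ≤ Y →
    (Y : ℝ) / 4 ≤ ∑ p ∈ primeWindow Y, Real.log p := by
  have h1 : ∀ᶠ x : ℝ in Filter.atTop, Real.log x ≤ (1 / 100) * x ^ (1 / 4 : ℝ) := by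
    have := (isLittleO_log_rpow_atTop (show (0 : ℝ) < 1 / 4 by norm_num)).bound
      (show (0 : ℝ) < 1 / 100 by norm_num)
    filter_upwards [this, Filter.eventually_ge_atTop 1] with x hx hx1
    rw [Real.norm_of_nonneg (Real.log_nonneg hx1), Real.norm_of_nonneg (by positivity)] at hx
    exact hx
  have h2 := tendsto_natCast_atTop_atTop (R := ℝ) |>.eventually h1
  obtain ⟨Y₀, hY₀⟩ := Filter.eventually_atTop.mp (h2.and (Filter.eventually_ge_atTop 1000))
  refine ⟨Y₀, fun Y hY => ?_⟩
  obtain ⟨hlog, hY1⟩ := hY₀ Y hY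
  have hY1' : (1000 : ℝ) ≤ Y := by exact_mod_cast hY1
  have hθ := Chebyshev.theta_ge Y
  have hθ' := Chebyshev.theta_le_log4_mul_x (x := ((Y / 4 : ℕ) : ℝ)) (by positivity)
  have hsplit : Chebyshev.theta Y ≤ Chebyshev.theta ((Y / 4 : ℕ) : ℝ) + ∑ p ∈ primeWindow Y, Real.log p := by
    rw [theta_nat, theta_nat]
    have hsub : (Finset.Icc 1 Y).filter Nat.Prime ⊆
        (Finset.Icc 1 (Y / 4)).filter Nat.Prime ∪ primeWindow Y := by
      intro p hp
      simp only [primeWindow, Finset.mem_union, Finset.mem_filter, Finset.mem_Icc] at hp ⊢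
      by_cases h : Y < 4 * p
      · right; exact ⟨hp.1, hp.2, h⟩
      · left; exact ⟨⟨hp.1.1, by omega⟩, hp.2⟩
    have hnn : ∀ p : ℕ, 0 ≤ Real.log p := fun p => Real.log_natCast_nonneg p
    refine (Finset.sum_le_sum_of_subset_of_nonneg hsub (fun p _ _ => hnn p)).trans ?_
    rw [← Finset.sum_union_inter]
    have := Finset.sum_nonneg (s := (Finset.Icc 1 (Y / 4)).filter Nat.Prime ∩ primeWindow Y)
      (fun p _ => hnn p)
    linarith
  have hdiv : ((Y / 4 : ℕ) : ℝ) ≤ Y / 4 := by exact_mod_cast Nat.cast_div_le (α := ℝ) (m := Y) (n := 4)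
  have hl4 : Real.log 4 = 2 * Real.log 2 := by
    rw [show (4 : ℝ) = 2 ^ 2 by norm_num, Real.log_pow]; norm_num
  have hl2 := Real.log_two_gt_d9
  have hl2' := Real.log_two_lt_d9
  have e1 : √(Y : ℝ) * (Y : ℝ) ^ (1 / 4 : ℝ) ≤ Y := by
    rw [Real.sqrt_eq_rpow, ← Real.rpow_add (by linarith)]
    calc (Y : ℝ) ^ ((1 : ℝ) / 2 + 1 / 4) ≤ (Y : ℝ) ^ (1 : ℝ) :=
          Real.rpow_le_rpow_of_exponent_le (by linarith) (by norm_num)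
      _ = Y := Real.rpow_one _
  have e2 : √(Y : ℝ) * Real.log Y ≤ (1 / 100) * Y := by
    calc √(Y : ℝ) * Real.log Y ≤ √(Y : ℝ) * ((1 / 100) * (Y : ℝ) ^ (1 / 4 : ℝ)) := by gcongr
      _ = (1 / 100) * (√(Y : ℝ) * (Y : ℝ) ^ (1 / 4 : ℝ)) := by ring
      _ ≤ _ := by gcongr
  have e3 : (1 : ℝ) ≤ √(Y : ℝ) := by rw [Real.one_le_sqrt]; linarith
  have e4 : Real.log (Y + 1) ≤ 1 + Real.log Y := by
    have : Real.log (Y + 1) ≤ Real.log (Y * 2) := Real.log_le_log (by linarith) (by linarith)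
    rw [Real.log_mul (by linarith) (by norm_num)] at this
    linarith
  have e5 : Real.log Y ≤ √(Y : ℝ) * Real.log Y :=
    le_mul_of_one_le_left (Real.log_natCast_nonneg Y) e3
  have e6 : Real.log 4 * ((Y / 4 : ℕ) : ℝ) ≤ 2 * Real.log 2 * (Y / 4) := by
    rw [hl4]; gcongr
  have e7 : 0.69 * (Y : ℝ) ≤ Real.log 2 * Y := by gcongr; linarith
  nlinarith

/-- The `q`-free part of `X!` divides `∏ i < X, (1 + q * (i + 1))`: modulo it `q` is invertible, and
dividing each factor by `q` turns the product into a product of `X` consecutive integers. -/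
theorem ordCompl_factorial_dvd {q : ℕ} (hq : q.Prime) (X : ℕ) :
    X.factorial / q ^ X.factorial.factorization q ∣ ∏ i ∈ Finset.range X, (1 + q * (i + 1)) := by
  set D := X.factorial / q ^ X.factorial.factorization q with hD
  have hDX : D ∣ X.factorial := Nat.ordCompl_dvd _ _
  have hcop : q.Coprime D := Nat.coprime_ordCompl hq (Nat.factorial_ne_zero X)
  rw [← ZMod.natCast_eq_zero_iff]
  let U := ZMod.unitOfCoprime q hcop
  obtain ⟨u, hu⟩ : ∃ u : ℕ, (u : ZMod D) * q = 1 := by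
    have : NeZero D := ⟨fun h => Nat.factorial_ne_zero X (by rw [h] at hDX; exact zero_dvd_iff.mp hDX)⟩
    refine ⟨(U⁻¹ : (ZMod D)ˣ).1.val, ?_⟩
    rw [ZMod.natCast_zmod_val, ← ZMod.coe_unitOfCoprime q hcop]
    exact U.inv_mul
  have h1 : ((u ^ X * ∏ i ∈ Finset.range X, (1 + q * (i + 1)) : ℕ) : ZMod D) = 0 := by
    have h2 : ((u ^ X * ∏ i ∈ Finset.range X, (1 + q * (i + 1)) : ℕ) : ZMod D) =
        (((u + 1).ascFactorial X : ℕ) : ZMod D) := by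
      rw [Nat.ascFactorial_eq_prod_range]
      push_cast
      have hc : (u : ZMod D) ^ X = ∏ _i ∈ Finset.range X, (u : ZMod D) := by simp
      rw [hc, ← Finset.prod_mul_distrib]
      apply Finset.prod_congr rfl
      intro i _
      linear_combination ((i : ZMod D) + 1) * hu
    rw [h2, ZMod.natCast_eq_zero_iff]
    exact hDX.trans (Nat.factorial_dvd_ascFactorial _ _)
  calc ((∏ i ∈ Finset.range X, (1 + q * (i + 1)) : ℕ) : ZMod D)
      = (q : ZMod D) ^ X * ((u ^ X * ∏ i ∈ Finset.range X, (1 + q * (i + 1)) : ℕ) : ZMod D) := by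
        push_cast
        rw [← mul_assoc, ← mul_pow, mul_comm (q : ZMod D), hu, one_pow, one_mul]
    _ = 0 := by rw [h1, mul_zero]

/-- The primes in question have the form `1 + q * j` with `j ≤ X = Y / q` and exceed `X`; hence
their product times the `q`-free part of `X!` divides `∏ j ≤ X, (1 + q * j)`, which is at most
`q ^ (2 * X) * X!`. The power of `q` dividing `X!` is at most `q ^ X`. -/
theorem prod_primes_one_mod_le {q Y : ℕ} (hq : q.Prime) (hq4 : 4 ≤ q) :
    ∏ p ∈ (primeWindow Y).filter (fun p => q ∣ p - 1), p ≤ q ^ (3 * (Y / q)) := by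
  set X := Y / q with hX
  set P := (primeWindow Y).filter (fun p => q ∣ p - 1) with hP
  set v := X.factorial.factorization q with hv
  set D := X.factorial / q ^ v with hD
  set B := ∏ i ∈ Finset.range X, (1 + q * (i + 1)) with hB
  have hPp : ∀ p ∈ P, p.Prime := fun p hp => by
    simp only [hP, primeWindow, Finset.mem_filter] at hp; exact hp.1.2.1
  have hPX : ∀ p ∈ P, X < p := fun p hp => by
    simp only [hP, primeWindow, Finset.mem_filter] at hp
    rw [hX, Nat.div_lt_iff_lt_mul hq.pos]
    nlinarith [hp.1.2.2]
  have hPB : ∀ p ∈ P, p ∣ B := fun p hp => by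
    have hpp := hPp p hp
    simp only [hP, primeWindow, Finset.mem_filter, Finset.mem_Icc] at hp
    obtain ⟨j, hj⟩ := hp.2
    have hp1 := hpp.two_le
    have hj0 : j ≠ 0 := by rintro rfl; omega
    have hjX : j ≤ X := by
      rw [hX, Nat.le_div_iff_mul_le hq.pos, mul_comm, ← hj]; omega
    have : p = 1 + q * ((j - 1) + 1) := by
      rw [Nat.sub_add_cancel (by omega), ← hj]; omega
    rw [this]
    exact Finset.dvd_prod_of_mem (fun i => 1 + q * (i + 1)) (Finset.mem_range.mpr (by omega))
  have hdvd : (∏ p ∈ P, p) ∣ B :=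
    Finset.prod_primes_dvd B (fun p hp => (hPp p hp).prime) hPB
  have hcop : (∏ p ∈ P, p).Coprime D := by
    apply Nat.Coprime.prod_left
    intro p hp
    rw [(hPp p hp).coprime_iff_not_dvd]
    intro h
    have := ((hPp p hp).dvd_factorial).mp (h.trans (Nat.ordCompl_dvd _ _))
    exact absurd this (not_le.mpr (hPX p hp))
  have hBpos : 0 < B := Finset.prod_pos (fun i _ => by positivity)
  have h1 : (∏ p ∈ P, p) * D ≤ B :=
    Nat.le_of_dvd hBpos (hcop.mul_dvd_of_dvd_of_dvd hdvd (ordCompl_factorial_dvd hq X))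
  -- Crude: `1 + q * (i + 1) ≤ q ^ 2 * (i + 1)` is enough.
  have h2 : B ≤ (q ^ 2) ^ X * X.factorial := by
    have hc : (q ^ 2) ^ X = ∏ _i ∈ Finset.range X, q ^ 2 := by simp
    rw [← Finset.prod_range_add_one_eq_factorial, hc, ← Finset.prod_mul_distrib]
    apply Finset.prod_le_prod'
    intro i _
    calc 1 + q * (i + 1) ≤ (1 + q) * (i + 1) := by nlinarith [Nat.zero_le i]
      _ ≤ q ^ 2 * (i + 1) := Nat.mul_le_mul_right _ (by nlinarith)
  have h3 : q ^ v * D = X.factorial := Nat.ordProj_mul_ordCompl_eq_self _ _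
  have hvX : v ≤ X := by
    have := Fact.mk hq
    have h4 := sub_one_mul_padicValNat_factorial (p := q) X
    rw [← Nat.factorization_def _ hq] at h4
    calc v ≤ (q - 1) * v := Nat.le_mul_of_pos_left _ (by omega)
      _ ≤ X := by rw [h4]; exact Nat.sub_le _ _
  have hDpos : 0 < D := Nat.ordCompl_pos q (Nat.factorial_ne_zero X)
  refine Nat.le_of_mul_le_mul_right ?_ hDpos
  calc (∏ p ∈ P, p) * D ≤ (q ^ 2) ^ X * (q ^ v * D) := by rw [h3]; exact h1.trans h2
    _ ≤ (q ^ 2) ^ X * (q ^ X * D) := by gcongr; exact hq.one_le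
    _ = q ^ (3 * X) * D := by ring

/-- A Chebyshev-type bound for primes congruent to `1` modulo a prime `q`, with the saving
`q ^ (-1 / 2)` uniformly in `q`. -/
theorem sum_log_one_mod_le {q Y : ℕ} (hq : q.Prime) (hq4 : 4 ≤ q) :
    ∑ p ∈ (primeWindow Y).filter (fun p => q ∣ p - 1), Real.log p ≤ 6 * Y * (1 / √(q : ℝ)) := by
  have hne : ∀ p ∈ (primeWindow Y).filter (fun p => q ∣ p - 1), (p : ℝ) ≠ 0 := fun p hp => by
    simp only [primeWindow, Finset.mem_filter] at hp
    exact_mod_cast hp.1.2.1.ne_zero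
  have hq0 : (0 : ℝ) < q := by exact_mod_cast hq.pos
  rw [← Real.log_prod hne]
  have h1 : (∏ p ∈ (primeWindow Y).filter (fun p => q ∣ p - 1), (p : ℝ)) ≤ (q : ℝ) ^ (3 * (Y / q)) := by
    have := prod_primes_one_mod_le (Y := Y) hq hq4
    rw [← Nat.cast_prod, ← Nat.cast_pow]
    exact Nat.cast_le.mpr this
  have h2 := Real.log_le_log (Finset.prod_pos (fun p hp =>
    lt_of_le_of_ne (Nat.cast_nonneg p) (hne p hp).symm)) h1
  rw [Real.log_pow] at h2
  refine h2.trans ?_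
  have h3 : ((Y / q : ℕ) : ℝ) ≤ Y / q := Nat.cast_div_le
  have h4 : Real.log q ≤ 2 * √(q : ℝ) := by
    have hs : 0 < √(q : ℝ) := Real.sqrt_pos.mpr hq0
    have := Real.log_le_sub_one_of_pos hs
    rw [Real.log_sqrt hq0.le] at this
    linarith
  have hs : 0 < √(q : ℝ) := Real.sqrt_pos.mpr hq0
  push_cast
  calc 3 * ((Y / q : ℕ) : ℝ) * Real.log q ≤ 3 * (Y / q) * (2 * √(q : ℝ)) := by
        gcongr
    _ = 6 * Y * (√(q : ℝ) / q) := by ring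
    _ = 6 * Y * (1 / √(q : ℝ)) := by
        rw [Real.sqrt_div_self, one_div]

/-! ### Primes `p` with `p - 1` coprime to `m` -/

/-- The sum of `1 / √q` over the prime factors `q` of `m`. -/
noncomputable def primeWeight (m : ℕ) : ℝ := ∑ q ∈ m.primeFactors, 1 / √(q : ℝ)

/-- Most primes `p` of the window (in logarithmic weight) have `p - 1` coprime to `m`, provided
the prime factors of `m` are sparse: the excluded `p` satisfy `q ∣ p - 1` for some prime `q ∣ m`, and
`sum_log_one_mod_le` bounds their total weight by `6 * Y * primeWeight m`. -/
theorem good_count : ∃ Y₀ : ℕ, ∀ Y m : ℕ, Y₀ ≤ Y → (∀ q ∈ m.primeFactors, 4 ≤ q) → m ≠ 0 →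
    primeWeight m ≤ 1 / 48 →
    (Y : ℝ) / 8 ≤ ((primeWindow Y).filter (fun p => m.Coprime (p - 1))).card * Real.log Y := by
  obtain ⟨Y₀, hY₀⟩ := primeWindow_lower
  refine ⟨Y₀, fun Y m hY hq4 hm hw => ?_⟩
  have h1 := hY₀ Y hY
  have hnn : ∀ p : ℕ, 0 ≤ Real.log p := fun p => Real.log_natCast_nonneg p
  rw [← Finset.sum_filter_add_sum_filter_not _ (fun p => m.Coprime (p - 1))] at h1
  have h2 : ∑ p ∈ (primeWindow Y).filter (fun p => ¬ m.Coprime (p - 1)), Real.log p ≤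
      6 * Y * primeWeight m := by
    calc _ ≤ ∑ p ∈ (primeWindow Y).filter (fun p => ¬ m.Coprime (p - 1)),
            ∑ q ∈ m.primeFactors, if q ∣ p - 1 then Real.log p else 0 := by
          apply Finset.sum_le_sum
          intro p hp
          rw [Finset.mem_filter] at hp
          obtain ⟨q, hq, hqm, hqp⟩ := Nat.Prime.not_coprime_iff_dvd.mp hp.2
          have := Finset.single_le_sum (f := fun q => if q ∣ p - 1 then Real.log p else 0)
            (fun q _ => by split_ifs <;> simp [hnn]) (Nat.mem_primeFactors.mpr ⟨hq, hqm, hm⟩)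
          simpa [hqp] using this
      _ ≤ ∑ p ∈ primeWindow Y, ∑ q ∈ m.primeFactors, if q ∣ p - 1 then Real.log p else 0 := by
          apply Finset.sum_le_sum_of_subset_of_nonneg (Finset.filter_subset _ _)
          intro p _ _
          exact Finset.sum_nonneg (fun q _ => by split_ifs <;> simp [hnn])
      _ = ∑ q ∈ m.primeFactors, ∑ p ∈ (primeWindow Y).filter (fun p => q ∣ p - 1), Real.log p := by
          rw [Finset.sum_comm]
          simp only [Finset.sum_filter]
      _ ≤ ∑ q ∈ m.primeFactors, 6 * Y * (1 / √(q : ℝ)) :=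
          Finset.sum_le_sum (fun q hq => sum_log_one_mod_le (Nat.prime_of_mem_primeFactors hq) (hq4 q hq))
      _ = 6 * Y * primeWeight m := by rw [primeWeight, Finset.mul_sum]
  have h3 : ∑ p ∈ (primeWindow Y).filter (fun p => m.Coprime (p - 1)), Real.log p ≤
      ((primeWindow Y).filter (fun p => m.Coprime (p - 1))).card * Real.log Y := by
    rw [← nsmul_eq_mul]
    apply Finset.sum_le_card_nsmul
    intro p hp
    simp only [primeWindow, Finset.mem_filter, Finset.mem_Icc] at hp
    exact Real.log_le_log (by exact_mod_cast hp.1.1.1) (by exact_mod_cast hp.1.1.2)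
  have h4 : 6 * (Y : ℝ) * primeWeight m ≤ 6 * Y * (1 / 48) := by gcongr
  linarith

/-! ### Integers with sparse prime factors -/

/-- The tails of the convergent series `∑ q ^ (-3 / 2)`. -/
theorem exists_tail_small (z₀ : ℕ) {ε : ℝ} (hε : 0 < ε) : ∃ z : ℕ, z₀ ≤ z ∧
    ∀ s : Finset ℕ, (∀ q ∈ s, z < q) → ∑ q ∈ s, 1 / √(q : ℝ) * (1 / q) ≤ ε := by
  have hs : Summable (fun q : ℕ => 1 / √(q : ℝ) * (1 / (q : ℝ))) := by
    have := Real.summable_one_div_nat_rpow.mpr (show (1 : ℝ) < 1 / 2 + 1 by norm_num)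
    refine this.congr (fun q => ?_)
    rcases Nat.eq_zero_or_pos q with rfl | hq
    · simp; norm_num
    · have hq' : (0 : ℝ) < q := by exact_mod_cast hq
      rw [Real.rpow_add hq', Real.rpow_one, ← Real.sqrt_eq_rpow, one_div_mul_one_div]
  obtain ⟨s, hs⟩ := summable_iff_vanishing_norm.mp hs ε hε
  refine ⟨max z₀ (s.sup id), le_max_left _ _, fun t ht => ?_⟩
  refine (le_abs_self _).trans (hs t ?_).le
  rw [Finset.disjoint_left]
  intro q hq hqs
  have h1 := ht q hq
  have h2 : q ≤ s.sup id := Finset.le_sup (f := id) hqs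
  have := le_max_right z₀ (s.sup id)
  omega

theorem harmonic_upper (T : ℕ) :
    ∑ s ∈ Finset.range T, 1 / ((s : ℝ) + 1) ≤ 1 + Real.log T := by
  have := harmonic_le_one_add_log T
  simpa [harmonic] using this

theorem harmonic_lower (T : ℕ) (hT : 0 < T) :
    Real.log T ≤ ∑ s ∈ Finset.range T, 1 / ((s : ℝ) + 1) := by
  have := log_add_one_le_harmonic T
  have h2 : Real.log T ≤ Real.log ((T + 1 : ℕ) : ℝ) :=
    Real.log_le_log (by exact_mod_cast hT) (by push_cast; linarith)
  simpa [harmonic] using h2.trans this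

/-- Among the `m ≡ 1 mod W`, those divisible by `q` carry at most about `1 / q` of the logarithmic
mass. -/
theorem sum_multiples_le {W : ℕ} (hW : 0 < W) {q : ℕ} (hq : 0 < q) (T : ℕ) :
    ∑ t ∈ (Finset.range T).filter (fun t => q ∣ 1 + t * W), 1 / ((1 + t * W : ℕ) : ℝ) ≤
      1 / q * (1 + (1 + Real.log T) / W) := by
  have hq' : (0 : ℝ) < q := by exact_mod_cast hq
  have hW' : (0 : ℝ) < W := by exact_mod_cast hW
  -- If `q ∣ 1 + t * W` then `1 + t * W ≥ q * max 1 (s * W)` with `s = t / q`, and `s` determines `t`.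
  let F : ℕ → ℝ := fun s => 1 / q * (if s = 0 then (1 : ℝ) else 1 / ((s : ℝ) * W))
  have hF : ∀ s, 0 ≤ F s := fun s => by
    simp only [F]; split_ifs <;> positivity
  have hinj : Set.InjOn (fun t => t / q)
      ((Finset.range T).filter (fun t => q ∣ 1 + t * W) : Finset ℕ) := by
    intro t ht t' ht' h
    simp only [Finset.coe_filter, Finset.mem_range, Set.mem_ofPred_eq] at ht ht'
    have hcop : q.Coprime W := by
      rw [Nat.coprime_iff_gcd_eq_one, ← Nat.dvd_one]
      have h1 : q.gcd W ∣ 1 + t * W := (Nat.gcd_dvd_left _ _).trans ht.2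
      exact (Nat.dvd_add_left ((Nat.gcd_dvd_right q W).mul_left t)).mp h1
    have h2 : 1 + t * W ≡ 1 + t' * W [MOD q] :=
      (Nat.modEq_zero_iff_dvd.mpr ht.2).trans (Nat.modEq_zero_iff_dvd.mpr ht'.2).symm
    have h3 : t ≡ t' [MOD q] :=
      Nat.ModEq.cancel_right_of_coprime hcop (Nat.ModEq.add_left_cancel' 1 h2)
    have h : t / q = t' / q := h
    rw [← Nat.div_add_mod t q, ← Nat.div_add_mod t' q, h, h3]
  calc ∑ t ∈ (Finset.range T).filter (fun t => q ∣ 1 + t * W), 1 / ((1 + t * W : ℕ) : ℝ)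
      ≤ ∑ t ∈ (Finset.range T).filter (fun t => q ∣ 1 + t * W), F (t / q) := by
        apply Finset.sum_le_sum
        intro t ht
        rw [Finset.mem_filter] at ht
        simp only [F]
        split_ifs with h0
        · rw [mul_one]
          apply one_div_le_one_div_of_le hq'
          exact_mod_cast Nat.le_of_dvd (by omega) ht.2
        · rw [one_div_mul_one_div]
          have : 0 < t / q := Nat.pos_of_ne_zero h0
          apply one_div_le_one_div_of_le (by positivity)
          have h1 : q * (t / q) ≤ t := Nat.mul_div_le t q
          have h2 : q * (t / q * W) ≤ 1 + t * W := by
            rw [← mul_assoc]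
            have := Nat.mul_le_mul_right W h1
            omega
          exact_mod_cast h2
    _ = ∑ s ∈ ((Finset.range T).filter (fun t => q ∣ 1 + t * W)).image (fun t => t / q), F s :=
        (Finset.sum_image hinj).symm
    _ ≤ ∑ s ∈ Finset.range (T + 1), F s := by
        apply Finset.sum_le_sum_of_subset_of_nonneg
        · intro s hs
          obtain ⟨t, ht, rfl⟩ := Finset.mem_image.mp hs
          rw [Finset.mem_filter, Finset.mem_range] at ht
          have := Nat.div_le_self t q
          rw [Finset.mem_range]; omega
        · exact fun s _ _ => hF s
    _ = 1 / q * (1 + (∑ s ∈ Finset.range T, 1 / ((s : ℝ) + 1)) / W) := by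
        rw [Finset.sum_range_succ', mul_add, add_comm, Finset.sum_div, Finset.mul_sum]
        congr 1
        apply Finset.sum_congr rfl
        intro s _
        simp only [F, Nat.succ_ne_zero, if_false, div_div]
        push_cast
        rfl
    _ ≤ _ := by gcongr; exact harmonic_upper T

/-- For suitable highly divisible `W`, at least half of the `m ≡ 1 mod W` (in logarithmic density)
have sparse prime factors. With `W = z!` only primes `q > z` divide such an `m`, so that the average
of `primeWeight` is about `∑ q > z, q ^ (-3 / 2)`, and Markov's inequality applies. -/
theorem exists_sparse (z₀ : ℕ) : ∃ W : ℕ, 0 < W ∧ (∀ i, 0 < i → i ≤ z₀ → i ∣ W) ∧ ∃ T₀ : ℕ,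
    ∀ T, T₀ ≤ T → Real.log T / (2 * W) ≤
      ∑ t ∈ (Finset.range T).filter (fun t => primeWeight (1 + t * W) ≤ 1 / 48),
        1 / ((1 + t * W : ℕ) : ℝ) := by
  obtain ⟨z, hz, htail⟩ := exists_tail_small z₀ (show (0 : ℝ) < 1 / (48 * 8) by norm_num)
  have hW : 0 < z.factorial := Nat.factorial_pos z
  refine ⟨z.factorial, hW, fun i hi hi' => Nat.dvd_factorial hi (hi'.trans hz), ?_⟩
  set W := z.factorial with hWdef
  have hW' : (0 : ℝ) < W := by exact_mod_cast hW
  have hlog : ∀ᶠ T : ℕ in Filter.atTop, (W : ℝ) + 1 ≤ Real.log T :=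
    (Real.tendsto_log_atTop.comp tendsto_natCast_atTop_atTop).eventually_ge_atTop _
  obtain ⟨T₀, hT₀⟩ := Filter.eventually_atTop.mp (hlog.and (Filter.eventually_ge_atTop 1))
  refine ⟨T₀, fun T hT => ?_⟩
  obtain ⟨hlogT, hT1⟩ := hT₀ T hT
  set m : ℕ → ℕ := fun t => 1 + t * W with hm
  have hmpos : ∀ t, (0 : ℝ) < m t := fun t => by simp only [hm]; positivity
  have hlow : Real.log T / W ≤ ∑ t ∈ Finset.range T, 1 / (m t : ℝ) := by
    calc Real.log T / W ≤ (∑ s ∈ Finset.range T, 1 / ((s : ℝ) + 1)) / W := by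
          gcongr; exact harmonic_lower T hT1
      _ ≤ _ := by
        rw [Finset.sum_div]
        apply Finset.sum_le_sum
        intro s _
        rw [div_div]
        apply one_div_le_one_div_of_le (hmpos s)
        have : m s ≤ (s + 1) * W := by simp only [hm]; rw [add_mul]; omega
        exact_mod_cast this
  have hwt : ∑ t ∈ Finset.range T, primeWeight (m t) * (1 / (m t : ℝ)) ≤
      1 / (48 * 8) * (1 + (1 + Real.log T) / W) := by
    set Q := (Finset.Icc (z + 1) (T * W)) with hQ
    calc ∑ t ∈ Finset.range T, primeWeight (m t) * (1 / (m t : ℝ))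
        ≤ ∑ t ∈ Finset.range T, ∑ q ∈ Q, if q ∣ m t then 1 / √(q : ℝ) * (1 / (m t : ℝ)) else 0 := by
          apply Finset.sum_le_sum
          intro t ht
          rw [Finset.mem_range] at ht
          rw [primeWeight, Finset.sum_mul, ← Finset.sum_filter]
          apply Finset.sum_le_sum_of_subset_of_nonneg
          · intro q hq
            have hqp := Nat.prime_of_mem_primeFactors hq
            have hqm := Nat.dvd_of_mem_primeFactors hq
            rw [Finset.mem_filter, hQ, Finset.mem_Icc]
            refine ⟨⟨?_, ?_⟩, hqm⟩
            · by_contra hlt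
              have h1 : q ∣ W := Nat.dvd_factorial hqp.pos (by omega)
              have h2 : q ∣ 1 := (Nat.dvd_add_left (h1.mul_left t)).mp hqm
              exact hqp.one_lt.ne' (Nat.dvd_one.mp h2)
            · have h1 := Nat.le_of_dvd (by simp only [hm]; omega) hqm
              have h2 : (t + 1) * W ≤ T * W := Nat.mul_le_mul_right W ht
              rw [add_mul] at h2
              simp only [hm] at h1
              omega
          · intro q _ _
            have := hmpos t
            positivity
      _ = ∑ q ∈ Q, 1 / √(q : ℝ) * ∑ t ∈ (Finset.range T).filter (fun t => q ∣ m t), 1 / (m t : ℝ) := by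
          rw [Finset.sum_comm]
          simp only [Finset.mul_sum, Finset.sum_filter, mul_ite, mul_zero]
      _ ≤ ∑ q ∈ Q, 1 / √(q : ℝ) * (1 / q * (1 + (1 + Real.log T) / W)) := by
          apply Finset.sum_le_sum
          intro q hq
          rw [hQ, Finset.mem_Icc] at hq
          gcongr
          exact sum_multiples_le hW (by omega) T
      _ = (∑ q ∈ Q, 1 / √(q : ℝ) * (1 / q)) * (1 + (1 + Real.log T) / W) := by
          rw [Finset.sum_mul]
          simp only [mul_assoc]
      _ ≤ _ := by
          have : 0 ≤ Real.log T := Real.log_natCast_nonneg T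
          gcongr
          apply htail
          intro q hq
          rw [hQ, Finset.mem_Icc] at hq
          omega
  have hbad : ∑ t ∈ (Finset.range T).filter (fun t => ¬ primeWeight (m t) ≤ 1 / 48), 1 / (m t : ℝ) ≤
      48 * ∑ t ∈ Finset.range T, primeWeight (m t) * (1 / (m t : ℝ)) := by
    rw [Finset.mul_sum]
    refine le_trans ?_ (Finset.sum_le_sum_of_subset_of_nonneg
      (Finset.filter_subset (fun t => ¬ primeWeight (m t) ≤ 1 / 48) (Finset.range T)) ?_)
    · apply Finset.sum_le_sum
      intro t ht
      rw [Finset.mem_filter, not_le] at ht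
      have := (one_div_pos.mpr (hmpos t))
      nlinarith [ht.2]
    · intro t _ _
      have := hmpos t
      have : 0 ≤ primeWeight (m t) := Finset.sum_nonneg (fun _ _ => by positivity)
      positivity
  rw [← Finset.sum_filter_add_sum_filter_not _ (fun t => primeWeight (m t) ≤ 1 / 48)] at hlow
  have key : Real.log T / (2 * W) ≤ Real.log T / W - 1 / 8 * (1 + (1 + Real.log T) / W) := by
    have : Real.log T / W - 1 / 8 * (1 + (1 + Real.log T) / W) - Real.log T / (2 * W) =
      (3 * Real.log T - W - 1) / (8 * W) := by field_simp; ring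
    have h2 : 0 ≤ (3 * Real.log T - W - 1) / (8 * W) := by
      apply div_nonneg <;> linarith
    linarith
  linarith

/-! ### Sets of density zero -/

/-- Sets of natural numbers of natural density zero. -/
def DensityZero (E : Set ℕ) : Prop :=
  ∀ η : ℝ, 0 < η → ∀ᶠ N : ℕ in Filter.atTop, (({n | n ∈ E ∧ n ≤ N} : Set ℕ).ncard : ℝ) ≤ η * N

theorem finite_le (E : Set ℕ) (N : ℕ) : ({n | n ∈ E ∧ n ≤ N} : Set ℕ).Finite :=
  (Set.finite_Iic N).subset (fun _ hn => hn.2)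

theorem densityZero_of_upperDensity {E : Set ℕ} (h : upperDensity E = 0) : DensityZero E := by
  intro η hη
  have hb : Filter.IsBoundedUnder (· ≤ ·) Filter.atTop
      (fun N : ℕ => (({n | n ∈ E ∧ n ≤ N} : Set ℕ).ncard : ℝ) / N) := by
    refine Filter.isBoundedUnder_of ⟨2, fun N => ?_⟩
    rcases Nat.eq_zero_or_pos N with rfl | hN
    · simp
    · have hN' : (1 : ℝ) ≤ N := by exact_mod_cast hN
      rw [div_le_iff₀ (by linarith)]
      have h1 : ({n | n ∈ E ∧ n ≤ N} : Set ℕ).ncard ≤ (Set.Iic N).ncard :=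
        Set.ncard_le_ncard (fun _ hn => hn.2) (Set.finite_Iic N)
      have h2 : (Set.Iic N).ncard = N + 1 := by
        rw [← Finset.coe_Iic, Set.ncard_coe_finset, Nat.card_Iic]
      rw [h2] at h1
      have : (({n | n ∈ E ∧ n ≤ N} : Set ℕ).ncard : ℝ) ≤ N + 1 := by exact_mod_cast h1
      linarith
  have h1 : Filter.limsup (fun N : ℕ => (({n | n ∈ E ∧ n ≤ N} : Set ℕ).ncard : ℝ) / N)
      Filter.atTop < η := by
    rw [upperDensity] at h; rw [h]; exact hη
  filter_upwards [Filter.eventually_lt_of_limsup_lt h1 hb, Filter.eventually_gt_atTop 0] with N hN hN0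
  have hN0' : (0 : ℝ) < N := by exact_mod_cast hN0
  rw [div_lt_iff₀ hN0'] at hN
  exact hN.le

theorem DensityZero.dilate {E : Set ℕ} (hE : DensityZero E) (B : ℕ) :
    DensityZero {n | ∃ i, 0 < i ∧ i ≤ B ∧ i * n ∈ E} := by
  intro η hη
  have hη' : 0 < η / (B ^ 2 + 1 : ℝ) := by positivity
  have h1 := hE _ hη'
  rcases Nat.eq_zero_or_pos B with rfl | hB
  · refine Filter.Eventually.of_forall (fun N => ?_)
    have : ({n | n ∈ {n | ∃ i, 0 < i ∧ i ≤ 0 ∧ i * n ∈ E} ∧ n ≤ N} : Set ℕ) = ∅ := by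
      ext n
      simp only [Set.mem_ofPred_eq, Set.mem_empty_iff_false, iff_false]
      rintro ⟨⟨i, hi, hi', _⟩, _⟩
      omega
    rw [this]
    simp
    positivity
  -- `n ↦ i * n` maps each part of the dilated set into `E ∩ [0, B * N]`.
  have ht : Filter.Tendsto (fun N : ℕ => B * N) Filter.atTop Filter.atTop :=
    Filter.tendsto_id.const_mul_atTop' hB
  filter_upwards [ht.eventually h1] with N hN
  have hsub : ({n | n ∈ {n | ∃ i, 0 < i ∧ i ≤ B ∧ i * n ∈ E} ∧ n ≤ N} : Set ℕ) ⊆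
      ⋃ i ∈ Finset.Icc 1 B, {n | i * n ∈ E ∧ n ≤ N} := by
    rintro n ⟨⟨i, hi, hi', hn⟩, hnN⟩
    simp only [Set.mem_iUnion]
    exact ⟨i, Finset.mem_Icc.mpr ⟨hi, hi'⟩, hn, hnN⟩
  have hfin : ∀ i, ({n | i * n ∈ E ∧ n ≤ N} : Set ℕ).Finite := fun i =>
    (Set.finite_Iic N).subset (fun _ hn => hn.2)
  have h2 : ∀ i ∈ Finset.Icc 1 B, ({n | i * n ∈ E ∧ n ≤ N} : Set ℕ).ncard ≤
      ({n | n ∈ E ∧ n ≤ B * N} : Set ℕ).ncard := by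
    intro i hi
    rw [Finset.mem_Icc] at hi
    apply Set.ncard_le_ncard_of_injOn (fun n => i * n) _ _ (finite_le E _)
    · rintro n ⟨hn, hnN⟩
      exact ⟨hn, Nat.mul_le_mul hi.2 hnN⟩
    · intro a _ b _ hab
      exact Nat.eq_of_mul_eq_mul_left hi.1 hab
  have h3 : ({n | n ∈ {n | ∃ i, 0 < i ∧ i ≤ B ∧ i * n ∈ E} ∧ n ≤ N} : Set ℕ).ncard ≤
      B * ({n | n ∈ E ∧ n ≤ B * N} : Set ℕ).ncard := by
    calc _ ≤ (⋃ i ∈ Finset.Icc 1 B, {n | i * n ∈ E ∧ n ≤ N}).ncard :=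
          Set.ncard_le_ncard hsub (Set.Finite.biUnion (Finset.finite_toSet _) (fun i _ => hfin i))
      _ ≤ ∑ i ∈ Finset.Icc 1 B, ({n | i * n ∈ E ∧ n ≤ N} : Set ℕ).ncard :=
          Finset.set_ncard_biUnion_le _ _
      _ ≤ ∑ i ∈ Finset.Icc 1 B, ({n | n ∈ E ∧ n ≤ B * N} : Set ℕ).ncard := Finset.sum_le_sum h2
      _ = _ := by simp
  have h4 : (({n | n ∈ {n | ∃ i, 0 < i ∧ i ≤ B ∧ i * n ∈ E} ∧ n ≤ N} : Set ℕ).ncard : ℝ) ≤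
      B * ({n | n ∈ E ∧ n ≤ B * N} : Set ℕ).ncard := by exact_mod_cast h3
  refine h4.trans ?_
  push_cast at hN
  calc (B : ℝ) * ({n | n ∈ E ∧ n ≤ B * N} : Set ℕ).ncard ≤ B * (η / (B ^ 2 + 1) * (B * N)) := by gcongr
    _ = η * N * (B ^ 2 / (B ^ 2 + 1)) := by ring
    _ ≤ η * N * 1 := by
      gcongr
      rw [div_le_one (by positivity)]
      linarith
    _ = η * N := mul_one _

/-- The primes `p` of the window for which `p - 1` is coprime to `m`. -/
def goodPrimes (Y m : ℕ) : Finset ℕ := (primeWindow Y).filter (fun p => m.Coprime (p - 1))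

open Classical in
/-- For a set `E` of density zero, few `m` have `p * m ∈ E` for all good primes `p` with
`p * m ≍ c * (T * W) ^ 4`. As `p > T * W ≥ m`, the products `p * m` are pairwise distinct, so their
number, at least `∑ x / (16 * m * log x)` by `good_count`, is at most the number of elements of `E` up
to `x = c * (T * W) ^ 4`. -/
theorem bad_sum {E : Set ℕ} (hE : DensityZero E) {W : ℕ} (hW : 0 < W)
    (hW3 : ∀ i, 0 < i → i ≤ 3 → i ∣ W) {c : ℕ} (hc : 0 < c) : ∀ᶠ T : ℕ in Filter.atTop,
    ∑ t ∈ (Finset.range T).filter (fun t => primeWeight (1 + t * W) ≤ 1 / 48 ∧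
        ∀ p ∈ goodPrimes (c * (T * W) ^ 4 / (1 + t * W)) (1 + t * W), p * (1 + t * W) ∈ E),
      1 / ((1 + t * W : ℕ) : ℝ) ≤ Real.log T / (8 * W) := by
  obtain ⟨Y₀, hY₀⟩ := good_count
  have hW' : (0 : ℝ) < W := by exact_mod_cast hW
  have hx : Filter.Tendsto (fun T : ℕ => c * (T * W) ^ 4) Filter.atTop Filter.atTop := by
    apply Filter.tendsto_atTop_mono (f := fun T => T) _ Filter.tendsto_id
    intro T
    calc T = 1 * (T * 1) ^ 1 := by ring
      _ ≤ c * (T * W) ^ 1 := by gcongr <;> omega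
      _ ≤ c * (T * W) ^ 4 := by
        rcases Nat.eq_zero_or_pos T with rfl | hT
        · simp
        · exact Nat.mul_le_mul_left _ (Nat.pow_le_pow_right (Nat.mul_pos hT hW) (by norm_num))
  have hlog : ∀ᶠ T : ℕ in Filter.atTop, Real.log c + 4 * Real.log W ≤ Real.log T :=
    (Real.tendsto_log_atTop.comp tendsto_natCast_atTop_atTop).eventually_ge_atTop _
  filter_upwards [hx.eventually (hE (1 / (1000 * W)) (by positivity)), hlog,
    Filter.eventually_ge_atTop (Y₀ + 10)] with T hT hlogT hTY
  set M := T * W with hM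
  set x := c * M ^ 4 with hxdef
  set S := (Finset.range T).filter (fun t => primeWeight (1 + t * W) ≤ 1 / 48 ∧
        ∀ p ∈ goodPrimes (x / (1 + t * W)) (1 + t * W), p * (1 + t * W) ∈ E) with hS
  have hTM : T ≤ M := Nat.le_mul_of_pos_right T hW
  have hm : ∀ t ∈ S, 1 + t * W ≤ M := by
    intro t ht
    rw [hS, Finset.mem_filter, Finset.mem_range] at ht
    have : (t + 1) * W ≤ T * W := Nat.mul_le_mul_right W ht.1
    rw [add_mul] at this
    omega
  have hM3x : ∀ t ∈ S, M ^ 3 ≤ x / (1 + t * W) := by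
    intro t ht
    rw [Nat.le_div_iff_mul_le (by omega)]
    calc M ^ 3 * (1 + t * W) ≤ M ^ 3 * M := Nat.mul_le_mul_left _ (hm t ht)
      _ = 1 * M ^ 4 := by ring
      _ ≤ x := Nat.mul_le_mul_right _ hc
  have hM3 : 100 * M ≤ M ^ 3 := by
    calc 100 * M ≤ M ^ 2 * M := Nat.mul_le_mul_right _ (by nlinarith)
      _ = M ^ 3 := by ring
  have hxM : M ^ 4 ≤ x := Nat.le_mul_of_pos_left _ hc
  have hx0 : 1 < x := by
    have : M ^ 3 * 1 ≤ M ^ 3 * M := Nat.mul_le_mul_left _ (by omega)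
    have : M ^ 4 = M ^ 3 * M := by ring
    omega
  have hp : ∀ t ∈ S, ∀ p ∈ goodPrimes (x / (1 + t * W)) (1 + t * W), p.Prime ∧ M < p ∧
      p * (1 + t * W) ≤ x := by
    intro t ht p hp
    have h1 := hM3x t ht
    simp only [goodPrimes, primeWindow, Finset.mem_filter, Finset.mem_Icc] at hp
    exact ⟨hp.1.2.1, by omega, (Nat.le_div_iff_mul_le (by omega)).mp hp.1.1.2⟩
  have hcard : ∑ t ∈ S, (goodPrimes (x / (1 + t * W)) (1 + t * W)).card ≤
      ({n | n ∈ E ∧ n ≤ x} : Set ℕ).ncard := by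
    rw [← Finset.card_sigma, ← Set.ncard_coe_finset]
    apply Set.ncard_le_ncard_of_injOn (fun a : (_ : ℕ) × ℕ => a.2 * (1 + a.1 * W)) _ _ (finite_le E _)
    · rintro ⟨t, p⟩ ha
      simp only [Finset.coe_sigma, Set.mem_sigma_iff, Finset.mem_coe] at ha
      refine ⟨?_, (hp t ha.1 p ha.2).2.2⟩
      have h1 := ha.1
      rw [hS, Finset.mem_filter] at h1
      exact h1.2.2 p ha.2
    · rintro ⟨t, p⟩ ha ⟨t', p'⟩ ha' heq
      simp only [Finset.coe_sigma, Set.mem_sigma_iff, Finset.mem_coe] at ha ha' heq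
      obtain ⟨hpp, hpM, _⟩ := hp t ha.1 p ha.2
      obtain ⟨hpp', hpM', _⟩ := hp t' ha'.1 p' ha'.2
      have h1 : p ∣ p' * (1 + t' * W) := heq ▸ Dvd.intro _ rfl
      have h2 : p ∣ p' := by
        rcases hpp.dvd_mul.mp h1 with h | h
        · exact h
        · have := Nat.le_of_dvd (by omega) h
          have := hm t' ha'.1
          omega
      have h3 : p = p' := (Nat.prime_dvd_prime_iff_eq hpp hpp').mp h2
      subst h3
      have h4 := Nat.eq_of_mul_eq_mul_left hpp.pos heq
      have h5 : t = t' := Nat.eq_of_mul_eq_mul_right hW (by omega)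
      subst h5
      rfl
  have hxr : (0 : ℝ) < x := by exact_mod_cast (by omega : 0 < x)
  have hlogx : 0 < Real.log x := Real.log_pos (by exact_mod_cast hx0)
  have hlow : ∀ t ∈ S, x / 16 * (1 / ((1 + t * W : ℕ) : ℝ)) ≤
      ((goodPrimes (x / (1 + t * W)) (1 + t * W)).card : ℝ) * Real.log x := by
    intro t ht
    set m := 1 + t * W with hmdef
    have hm0 : 0 < m := by omega
    have hmr : (0 : ℝ) < m := by exact_mod_cast hm0
    have h1 : M ^ 3 ≤ x / m := hM3x t ht
    have hYpos : 0 < x / m := by omega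
    have h2 : (((x / m : ℕ) : ℕ) : ℝ) / 8 ≤
        ((goodPrimes (x / m) m).card : ℝ) * Real.log ((x / m : ℕ) : ℝ) := by
      apply hY₀ (x / m) m (by omega) _ hm0.ne'
      · have := ht
        rw [hS, Finset.mem_filter] at this
        exact this.2.1
      · intro q hq
        by_contra hlt
        have hqp := Nat.prime_of_mem_primeFactors hq
        have hqm := Nat.dvd_of_mem_primeFactors hq
        have h3 := (hW3 q hqp.pos (by omega)).mul_left t
        exact hqp.one_lt.ne' (Nat.dvd_one.mp ((Nat.dvd_add_left h3).mp hqm))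
    have h3 : Real.log ((x / m : ℕ) : ℝ) ≤ Real.log x :=
      Real.log_le_log (by exact_mod_cast hYpos) (by exact_mod_cast Nat.div_le_self _ _)
    have h4 : x ≤ 2 * (x / m) * m := by
      have := Nat.div_add_mod x m
      have := Nat.mod_lt x hm0
      have : m * 1 ≤ m * (x / m) := Nat.mul_le_mul_left _ hYpos
      calc x ≤ 2 * (m * (x / m)) := by omega
        _ = _ := by ring
    have h5 : (x : ℝ) ≤ 2 * ((x / m : ℕ) : ℝ) * m := by exact_mod_cast h4
    calc (x : ℝ) / 16 * (1 / (m : ℝ)) = x / m / 16 := by ring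
      _ ≤ (2 * ((x / m : ℕ) : ℝ)) / 16 := by
        gcongr
        rw [div_le_iff₀ hmr]; exact h5
      _ = ((x / m : ℕ) : ℝ) / 8 := by ring
      _ ≤ _ := h2
      _ ≤ _ := by gcongr
  have hsum : x / 16 * ∑ t ∈ S, 1 / ((1 + t * W : ℕ) : ℝ) ≤ 1 / (1000 * W) * x * Real.log x := by
    rw [Finset.mul_sum]
    calc _ ≤ ∑ t ∈ S, ((goodPrimes (x / (1 + t * W)) (1 + t * W)).card : ℝ) * Real.log x :=
          Finset.sum_le_sum hlow
      _ = ((∑ t ∈ S, (goodPrimes (x / (1 + t * W)) (1 + t * W)).card : ℕ) : ℝ) * Real.log x := by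
          rw [← Finset.sum_mul]; push_cast; rfl
      _ ≤ (({n | n ∈ E ∧ n ≤ x} : Set ℕ).ncard : ℝ) * Real.log x := by gcongr
      _ ≤ _ := by gcongr
  have hT0 : (T : ℝ) ≠ 0 := by exact_mod_cast (by omega : T ≠ 0)
  have hlogx' : Real.log x ≤ 5 * Real.log T := by
    have : Real.log x = Real.log c + 4 * (Real.log T + Real.log W) := by
      rw [hxdef, hM]
      push_cast
      rw [Real.log_mul (by exact_mod_cast hc.ne') (by positivity), Real.log_pow,
        Real.log_mul hT0 hW'.ne']
      norm_num
    linarith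
  have h5 : x / 16 * ∑ t ∈ S, 1 / ((1 + t * W : ℕ) : ℝ) ≤ x / 16 * (Real.log T / (8 * W)) := by
    calc _ ≤ 1 / (1000 * W) * x * (5 * Real.log T) := by
          refine hsum.trans ?_
          gcongr
      _ = x / 16 * (Real.log T / (8 * W)) * (640 / 1000) := by field_simp; ring
      _ ≤ x / 16 * (Real.log T / (8 * W)) * 1 := by
          have := Real.log_natCast_nonneg T
          gcongr
          norm_num
      _ = _ := mul_one _
  exact le_of_mul_le_mul_left h5 (by positivity)

/-! ### Two products avoiding a set of density zero -/

open Classical in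
/-- Outside a set of density zero one finds numbers `p * m` and `p' * m` with a common cofactor `m`
free of small factors, where the ratio of the primes `p` and `p'` is about a prescribed number. The two
primes come from the windows belonging to `(T * W) ^ 4` and `4 * R * (T * W) ^ 4`; by `bad_sum` the
`m` that fail for one of them carry at most half of the mass given by `exists_sparse`. -/
theorem exists_pair {E : Set ℕ} (hE : DensityZero E) {R : ℕ} (hR : 0 < R) (z₀ L : ℕ) :
    ∃ m p p' : ℕ, 0 < m ∧ (∀ i, 0 < i → i ≤ z₀ → m.Coprime i) ∧ p.Prime ∧ p'.Prime ∧ L < p ∧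
      L < p' ∧ m < p ∧ m < p' ∧ m.Coprime (p' - 1) ∧ p * m ∉ E ∧ p' * m ∉ E ∧
      R * p ≤ p' ∧ p' ≤ 16 * R * p := by
  obtain ⟨W, hW, hWdvd, T₀, hT₀⟩ := exists_sparse (max z₀ 3)
  have hW3 : ∀ i, 0 < i → i ≤ 3 → i ∣ W := fun i hi hi' =>
    hWdvd i hi (hi'.trans (le_max_right _ _))
  have hW' : (0 : ℝ) < W := by exact_mod_cast hW
  obtain ⟨T, hb1, hb2, hT⟩ := ((bad_sum hE hW hW3 one_pos).and
    ((bad_sum hE hW hW3 (show 0 < 4 * R by omega)).and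
      (Filter.eventually_ge_atTop (T₀ + L + 10)))).exists
  have htot := hT₀ T (by omega)
  set S := (Finset.range T).filter (fun t => primeWeight (1 + t * W) ≤ 1 / 48) with hS
  have hlogT : 0 < Real.log T := Real.log_pos (by exact_mod_cast (by omega : 1 < T))
  obtain ⟨t, htT, htw, ht1, ht2⟩ : ∃ t, t < T ∧ primeWeight (1 + t * W) ≤ 1 / 48 ∧
      (¬ ∀ p ∈ goodPrimes (1 * (T * W) ^ 4 / (1 + t * W)) (1 + t * W), p * (1 + t * W) ∈ E) ∧
      (¬ ∀ p ∈ goodPrimes (4 * R * (T * W) ^ 4 / (1 + t * W)) (1 + t * W), p * (1 + t * W) ∈ E) := by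
    by_contra hcon
    push Not at hcon
    have hsub : S ⊆ (Finset.range T).filter (fun t => primeWeight (1 + t * W) ≤ 1 / 48 ∧
        ∀ p ∈ goodPrimes (1 * (T * W) ^ 4 / (1 + t * W)) (1 + t * W), p * (1 + t * W) ∈ E) ∪
      (Finset.range T).filter (fun t => primeWeight (1 + t * W) ≤ 1 / 48 ∧
        ∀ p ∈ goodPrimes (4 * R * (T * W) ^ 4 / (1 + t * W)) (1 + t * W), p * (1 + t * W) ∈ E) := by
      intro t ht
      rw [hS, Finset.mem_filter, Finset.mem_range] at ht
      rw [Finset.mem_union, Finset.mem_filter, Finset.mem_filter, Finset.mem_range]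
      by_cases h : ∀ p ∈ goodPrimes (1 * (T * W) ^ 4 / (1 + t * W)) (1 + t * W), p * (1 + t * W) ∈ E
      · exact Or.inl ⟨ht.1, ht.2, h⟩
      · push Not at h
        exact Or.inr ⟨ht.1, ht.2, hcon t ht.1 ht.2 h⟩
    have hnn : ∀ t : ℕ, (0 : ℝ) ≤ 1 / ((1 + t * W : ℕ) : ℝ) := fun t => by positivity
    have h1 := Finset.sum_le_sum_of_subset_of_nonneg hsub (fun t _ _ => hnn t)
    have h2 := Finset.sum_union_inter (f := fun t : ℕ => 1 / ((1 + t * W : ℕ) : ℝ))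
      (s₁ := (Finset.range T).filter (fun t => primeWeight (1 + t * W) ≤ 1 / 48 ∧
        ∀ p ∈ goodPrimes (1 * (T * W) ^ 4 / (1 + t * W)) (1 + t * W), p * (1 + t * W) ∈ E))
      (s₂ := (Finset.range T).filter (fun t => primeWeight (1 + t * W) ≤ 1 / 48 ∧
        ∀ p ∈ goodPrimes (4 * R * (T * W) ^ 4 / (1 + t * W)) (1 + t * W), p * (1 + t * W) ∈ E))
    have h3 := Finset.sum_nonneg (s := ((Finset.range T).filter (fun t => primeWeight (1 + t * W) ≤ 1 / 48 ∧
        ∀ p ∈ goodPrimes (1 * (T * W) ^ 4 / (1 + t * W)) (1 + t * W), p * (1 + t * W) ∈ E)) ∩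
      (Finset.range T).filter (fun t => primeWeight (1 + t * W) ≤ 1 / 48 ∧
        ∀ p ∈ goodPrimes (4 * R * (T * W) ^ 4 / (1 + t * W)) (1 + t * W), p * (1 + t * W) ∈ E))
      (fun t _ => hnn t)
    have h4 : Real.log T / (8 * W) * 2 < Real.log T / (2 * W) := by
      have : Real.log T / (2 * W) = Real.log T / (8 * W) * 4 := by field_simp; norm_num
      have : 0 < Real.log T / (8 * W) := by positivity
      linarith
    linarith
  push Not at ht1 ht2
  obtain ⟨p, hp, hpE⟩ := ht1
  obtain ⟨p', hp', hpE'⟩ := ht2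
  set m := 1 + t * W with hm
  set M := T * W with hM
  have hm0 : 0 < m := by omega
  have hTM : T ≤ M := Nat.le_mul_of_pos_right T hW
  have hmM : m ≤ M := by
    have : (t + 1) * W ≤ T * W := Nat.mul_le_mul_right W htT
    rw [add_mul] at this
    omega
  have hM3 : 100 * M ≤ M ^ 3 := by
    calc 100 * M ≤ M ^ 2 * M := Nat.mul_le_mul_right _ (by nlinarith)
      _ = M ^ 3 := by ring
  rw [one_mul] at hp
  have hY : M ^ 3 ≤ M ^ 4 / m := by
    rw [Nat.le_div_iff_mul_le hm0]
    calc M ^ 3 * m ≤ M ^ 3 * M := Nat.mul_le_mul_left _ hmM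
      _ = M ^ 4 := by ring
  have hY1 : 4 * R * (M ^ 4 / m) ≤ 4 * R * M ^ 4 / m := Nat.mul_div_le_mul_div_assoc _ _ _
  have hY2 : 4 * R * M ^ 4 / m ≤ 4 * R * (M ^ 4 / m + 1) := by
    apply Nat.div_le_of_le_mul
    have h1 := Nat.div_add_mod (M ^ 4) m
    have h2 := Nat.mod_lt (M ^ 4) hm0
    calc 4 * R * M ^ 4 ≤ 4 * R * (m * (M ^ 4 / m) + m) := Nat.mul_le_mul_left _ (by omega)
      _ = m * (4 * R * (M ^ 4 / m + 1)) := by ring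
  simp only [goodPrimes, primeWindow, Finset.mem_filter, Finset.mem_Icc] at hp hp'
  have hRp : R * p ≤ p' := by
    have h1 : 4 * R * p ≤ 4 * R * (M ^ 4 / m) := Nat.mul_le_mul_left _ hp.1.1.2
    have h2 : 4 * (R * p) < 4 * p' := by
      calc 4 * (R * p) = 4 * R * p := by ring
        _ < _ := by omega
    omega
  have hpp' : p ≤ p' := (Nat.le_mul_of_pos_left p hR).trans hRp
  refine ⟨m, p, p', hm0, fun i hi hi' => ?_, hp.1.2.1, hp'.1.2.1, by omega, by omega, by omega,
    by omega, hp'.2, hpE, hpE', hRp, ?_⟩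
  · have hiW := (hWdvd i hi (hi'.trans (le_max_left _ _))).mul_left t
    have h1 : m.gcd i ∣ 1 :=
      (Nat.dvd_add_left ((Nat.gcd_dvd_right m i).trans hiW)).mp (Nat.gcd_dvd_left m i)
    exact Nat.dvd_one.mp h1
  · calc p' ≤ 4 * R * (M ^ 4 / m + 1) := hp'.1.1.2.trans hY2
      _ ≤ 4 * R * (4 * p) := Nat.mul_le_mul_left _ (by omega)
      _ = 16 * R * p := by ring

/-! ### Jumps of the counting function -/

/-- If `G` is not infinite cyclic, then outside any set of density zero there are `n₁, n₂` as close to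
each other as desired, and in either order, with `f n₁ ≥ 6 / 5 * f n₂`.
Here `n₂ = p' * m` and `n₁ = K * m`, where `K` is a multiple of `k₀ * p` next to `p'`: the one below
for `s = 0`, the one above for `s = 1`. -/
theorem exists_jump {G : Type*} [Group G] (hFG : Group.FG G) (hRF : ResiduallyFinite G)
    (hG : ¬ Nonempty (G ≃* Multiplicative ℤ)) {E : Set ℕ} (hE : DensityZero E) {δ : ℝ} (hδ : 0 < δ)
    {s : ℕ} (hs : s ≤ 1) : ∃ n₁ n₂ : ℕ, 0 < n₁ ∧ 0 < n₂ ∧ n₁ ∉ E ∧ n₂ ∉ E ∧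
      (s = 0 → n₁ ≤ n₂) ∧ (s = 1 → n₂ ≤ n₁) ∧ |(n₁ : ℝ) / n₂ - 1| < δ ∧
      6 * normalCount G n₂ ≤ 5 * normalCount G n₁ := by
  obtain ⟨b, T, φ, e, hφ, hT⟩ := exists_rank hFG
  rcases b with _ | b
  -- In rank `0` there are no normal subgroups of large prime index, and `f (p' * m) = 0`.
  · obtain ⟨m, p, p', hm, -, -, hp', -, hL', -, hmp', hcop, -, hE', -, -⟩ :=
      exists_pair hE one_pos 0 (max T 2)
    have hp2 := (le_max_right T 2).trans_lt hL'
    have h1 := normalCount_prime_le hp' e (hT p' hp' ((le_max_left T 2).trans_lt hL'))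
    have h2 := normalCount_le_mul hFG hp' hm.ne' hmp' hcop
    have h3 : normalCount G p' = 0 := by
      rw [pow_zero] at h1
      have h4 : normalCount G p' * (p' - 1) = 0 := by omega
      rcases Nat.mul_eq_zero.mp h4 with h | h <;> omega
    have hpos : 0 < p' * m := Nat.mul_pos hp'.pos hm
    have hne : ((p' * m : ℕ) : ℝ) ≠ 0 := by exact_mod_cast hpos.ne'
    refine ⟨p' * m, p' * m, hpos, hpos, hE', hE', fun _ => le_rfl, fun _ => le_rfl, ?_, ?_⟩
    · rw [div_self hne]; simpa using hδ
    · rw [h3, zero_mul] at h2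
      omega
  · obtain ⟨k₀, hk₀, hlow⟩ := exists_normalCount_ge hFG hRF hG hφ
    -- `J` controls the relative distance of `K` and `p'`, hence also that of `K ^ b` and `p' ^ b`.
    obtain ⟨J, hJ⟩ := exists_nat_gt (max (1 / δ) (10 * b + 1))
    have hJδ : 1 / δ < J := (le_max_left _ _).trans_lt hJ
    have hJb : (10 * b + 1 : ℝ) < J := (le_max_right _ _).trans_lt hJ
    have hJ1 : (1 : ℝ) < J := by
      have : (0 : ℝ) ≤ b := Nat.cast_nonneg b
      linarith
    have hJ0 : 0 < J := by exact_mod_cast zero_lt_one.trans hJ1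
    set B := k₀ * (16 * J + 1) with hB
    obtain ⟨m, p, p', hm, hmc, hp, hp', -, hL', hmp, hmp', hcop, hEp, hEp', hRp, hRp'⟩ :=
      exists_pair (hE.dilate B) (Nat.mul_pos hJ0 hk₀) B (max T 11)
    have hkp : 0 < k₀ * p := Nat.mul_pos hk₀ hp.pos
    have hB1 : 1 ≤ B := Nat.mul_pos hk₀ (by omega)
    have hj1 : J ≤ p' / (k₀ * p) := by
      rw [Nat.le_div_iff_mul_le hkp, ← mul_assoc]; exact hRp
    have hj2 : p' / (k₀ * p) ≤ 16 * J := by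
      apply Nat.div_le_of_le_mul
      calc p' ≤ 16 * (J * k₀) * p := hRp'
        _ = k₀ * p * (16 * J) := by ring
    set j := p' / (k₀ * p) + s with hj
    have hdm := Nat.div_add_mod p' (k₀ * p)
    have hml := Nat.mod_lt p' hkp
    set K := k₀ * (j * p) with hK
    have hKeq : K = k₀ * p * (p' / (k₀ * p)) + s * (k₀ * p) := by rw [hK, hj]; ring
    have hK1 : K ≤ p' + k₀ * p := by
      have := Nat.mul_le_mul_right (k₀ * p) hs
      omega
    have hK2 : p' ≤ K + k₀ * p := by omega
    have hK0 : 0 < K := Nat.mul_pos hk₀ (Nat.mul_pos (by omega) hp.pos)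
    have hkjB : k₀ * j ≤ B := Nat.mul_le_mul_left _ (by omega)
    have hkj0 : 0 < k₀ * j := Nat.mul_pos hk₀ (by omega)
    have hp'r : (0 : ℝ) < p' := by exact_mod_cast hp'.pos
    have hmr : (0 : ℝ) < m := by exact_mod_cast hm
    have hJr : (0 : ℝ) < J := by linarith
    have hdist : (k₀ * p : ℝ) ≤ 1 / J * p' := by
      rw [one_div, inv_mul_eq_div, le_div_iff₀ hJr]
      have : (J * k₀ * p : ℝ) ≤ p' := by exact_mod_cast hRp
      linarith
    have hK1r : (K : ℝ) ≤ p' + k₀ * p := by exact_mod_cast hK1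
    have hK2r : (p' : ℝ) ≤ K + k₀ * p := by exact_mod_cast hK2
    refine ⟨K * m, p' * m, Nat.mul_pos hK0 hm, Nat.mul_pos hp'.pos hm, ?_, ?_, ?_, ?_, ?_, ?_⟩
    · intro h
      refine hEp ⟨k₀ * j, hkj0, hkjB, ?_⟩
      rwa [show k₀ * j * (p * m) = K * m by rw [hK]; ring]
    · intro h
      exact hEp' ⟨1, one_pos, hB1, by rwa [one_mul]⟩
    · rintro rfl
      exact Nat.mul_le_mul_right _ (by omega)
    · rintro rfl
      exact Nat.mul_le_mul_right _ (by omega)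
    · have h1 : ((K * m : ℕ) : ℝ) / ((p' * m : ℕ) : ℝ) - 1 = (K - p') / p' := by
        push_cast
        field_simp
      rw [h1, abs_div, abs_of_pos hp'r, div_lt_iff₀ hp'r]
      have h2 : |(K : ℝ) - p'| ≤ 1 / J * p' := by
        rw [abs_le]; constructor <;> linarith
      have h3 : 1 / (J : ℝ) < δ := by
        rw [div_lt_iff₀ hδ] at hJδ
        rw [div_lt_iff₀ hJr]; linarith
      exact h2.trans_lt (by gcongr)
    · have hKm : K.Coprime m := by
        rw [show K = (k₀ * j) * p by rw [hK]; ring]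
        apply Nat.Coprime.mul_left
        · exact (hmc _ hkj0 hkjB).symm
        · rw [hp.coprime_iff_not_dvd]
          exact fun h => absurd (Nat.le_of_dvd hm h) (not_le.mpr hmp)
      have hf1 := normalCount_mul_le hFG hKm hK0.ne' hm.ne'
      have hf2 := normalCount_le_mul hFG hp' hm.ne' hmp' hcop
      have hlowK := hlow (j * p) (Nat.mul_pos (by omega) hp.pos)
      have hup := normalCount_prime_le hp' e (hT p' hp' ((le_max_left T 11).trans_lt hL'))
      have h11 := (le_max_right T 11).trans_lt hL'
      have key : (6 : ℝ) * normalCount G p' ≤ 5 * normalCount G K := by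
        have h11r : (11 : ℝ) < p' := by exact_mod_cast h11
        have hlowr : 3 * (K : ℝ) ^ b ≤ 2 * normalCount G K := by exact_mod_cast hlowK
        have hupr : (normalCount G p' : ℝ) * (p' - 1) ≤ (p' : ℝ) ^ b * p' := by
          have h1 : normalCount G p' * (p' - 1) ≤ p' ^ b * p' := by
            rw [← pow_succ]; omega
          have h2 : ((normalCount G p' * (p' - 1) : ℕ) : ℝ) ≤ ((p' ^ b * p' : ℕ) : ℝ) :=
            Nat.cast_le.mpr h1
          rw [Nat.cast_mul, Nat.cast_sub hp'.one_le] at h2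
          push_cast at h2
          exact h2
        -- Bernoulli's inequality.
        have hpow : (9 / 10 : ℝ) * (p' : ℝ) ^ b ≤ (K : ℝ) ^ b := by
          have h1 : (9 / 10 : ℝ) ≤ (1 + -(1 / (J : ℝ))) ^ b := by
            have h2 : (1 : ℝ) / J ≤ 1 := by rw [div_le_one hJr]; exact hJ1.le
            refine le_trans ?_ (one_add_mul_le_pow (by linarith) b)
            have h3 : (b : ℝ) * (1 / J) ≤ 1 / 10 := by
              rw [mul_one_div, div_le_iff₀ hJr]; linarith
            linarith
          have h2 : (1 + -(1 / (J : ℝ))) * p' ≤ K := by linarith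
          have h3 : 0 ≤ 1 + -(1 / (J : ℝ)) := by
            have : (1 : ℝ) / J ≤ 1 := by rw [div_le_one hJr]; exact hJ1.le
            linarith
          calc (9 / 10 : ℝ) * (p' : ℝ) ^ b ≤ (1 + -(1 / (J : ℝ))) ^ b * (p' : ℝ) ^ b := by gcongr
            _ = ((1 + -(1 / (J : ℝ))) * p') ^ b := (mul_pow _ _ _).symm
            _ ≤ _ := by gcongr
        have hPb : (0 : ℝ) < (p' : ℝ) ^ b := by positivity
        have hup2 : (normalCount G p' : ℝ) ≤ 11 / 10 * (p' : ℝ) ^ b := by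
          have h1 : (0 : ℝ) < p' - 1 := by linarith
          refine le_of_mul_le_mul_right (hupr.trans ?_) h1
          nlinarith
        linarith
      have key' : 6 * normalCount G p' ≤ 5 * normalCount G K := by exact_mod_cast key
      calc 6 * normalCount G (p' * m) ≤ 6 * (normalCount G p' * normalCount G m) := by omega
        _ = (6 * normalCount G p') * normalCount G m := by ring
        _ ≤ (5 * normalCount G K) * normalCount G m := Nat.mul_le_mul_right _ key'
        _ = 5 * (normalCount G K * normalCount G m) := by ring
        _ ≤ _ := Nat.mul_le_mul_left _ hf1

/-- Corollary: if `G` is a finitely generated residually finite group whose normal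
subgroup counting function has a strictly positive normal order which is monotone
or log-uniformly continuous, then `G ≅ (ℤ, +)`. -/
theorem normal_growth_normal_order_implies_int
    (G : Type*) [Group G] (hFG : Group.FG G) (hRF : ResiduallyFinite G)
    (g : ℝ → ℝ)
    (hgpos : ∀ x : ℝ, 0 < x → 0 < g x)
    (hgreg : (∀ x y : ℝ, 0 < x → x ≤ y → g x ≤ g y) ∨
             (∀ x y : ℝ, 0 < x → x ≤ y → g y ≤ g x) ∨
             LogUniformlyContinuous g)
    (hno : HasNormalOrder (fun n => (normalCount G n : ℝ)) g) :
    Nonempty (G ≃* Multiplicative ℤ) := by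
  by_contra hG
  have hE := densityZero_of_upperDensity (hno (1 / 41) (by norm_num))
  -- A jump of `f` by `6 / 5` outside the exceptional set forces one of `g` by
  -- `(6 / 5) * (1 - 1 / 41) / (1 + 1 / 41) = 8 / 7`.
  have hjump : ∀ δ : ℝ, 0 < δ → ∀ s : ℕ, s ≤ 1 → ∃ x y : ℝ, 0 < x ∧ 0 < y ∧
      (s = 0 → x ≤ y) ∧ (s = 1 → y ≤ x) ∧ |x / y - 1| < δ ∧ 8 / 7 * g y < g x := by
    intro δ hδ s hs
    obtain ⟨n₁, n₂, h1, h2, hE1, hE2, hs0, hs1, hd, hf⟩ := exists_jump hFG hRF hG hE hδ hs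
    have h1r : (0 : ℝ) < n₁ := by exact_mod_cast h1
    have h2r : (0 : ℝ) < n₂ := by exact_mod_cast h2
    refine ⟨n₁, n₂, h1r, h2r, fun h => by exact_mod_cast hs0 h, fun h => by exact_mod_cast hs1 h,
      hd, ?_⟩
    simp only [Set.mem_ofPred_eq, not_le, abs_lt] at hE1 hE2
    have hfr : (6 : ℝ) * normalCount G n₂ ≤ 5 * normalCount G n₁ := by exact_mod_cast hf
    have hg1 := hgpos _ h1r
    have hg2 := hgpos _ h2r
    linarith [hE1.2, hE2.1]
  rcases hgreg with h | h | h
  · obtain ⟨x, y, hx, hy, hs, -, -, hlt⟩ := hjump 1 one_pos 0 (by norm_num)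
    have := h x y hx (hs rfl)
    have := hgpos y hy
    linarith
  · obtain ⟨x, y, hx, hy, -, hs, -, hlt⟩ := hjump 1 one_pos 1 le_rfl
    have := h y x hy (hs rfl)
    have := hgpos y hy
    linarith
  · obtain ⟨δ, hδ, hcont⟩ := h (1 / 7) (by norm_num)
    obtain ⟨x, y, hx, hy, -, -, hd, hlt⟩ := hjump δ hδ 0 (by norm_num)
    have h1 := (abs_lt.mp (hcont x y hx hy hd)).2
    have hgy := hgpos y hy
    have h2 : g x / g y < 8 / 7 := by linarith
    rw [div_lt_iff₀ hgy] at h2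
    linarith
end

section
/- The set of positive integers n such that P⁺(n) > √n and gcd(P⁺(n) − 1, n) = 1 has natural density (log 2)·∏_p (1 − 1/(p(p−1))), where the product runs over all primes p. -/
/-!
An integer `n ≥ 1` has `P⁺(n) > √n` exactly when `n = m p` with `p` prime and `0 < m < p`; then
`p = P⁺(n)`, the pair `(m, p)` is unique, and `gcd (p - 1) n = gcd (p - 1) m` (`setOf_eq_image`).
Möbius inversion of this gcd condition (`card_coprime_pairs`) gives
`#{n ≤ N} = ∑ μ(d) #(pairs N d)`, where `pairs N d` consists of the `(m, p)` with `m p ≤ N`,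
`m < p`, `d ∣ m` and `d ∣ p - 1`.

* For fixed `d`, primes `p ≤ √N` contribute `o(N)`, and a prime `p > √N` contributes
  `N / (d p) + O(1)`, so `#(pairs N d) / N → log 2 / (d φ(d))` (`tendsto_card_pairs_div`) follows
  from `∑_{√N < p ≤ N, p ≡ 1 mod d} 1 / p → log 2 / φ(d)`. This is weaker than the prime number
  theorem in progressions: Karamata's Tauberian argument (`tendsto_sum_div_mul_log`) derives it from
  the simple pole at `s = 1` of the Dirichlet series of `Λ` on the residue class of `1`, which is
  available from the proof of Dirichlet's theorem.
* Uniformly in `d`, `#(pairs N d) = O(N (1 + log d) / d²)` (`card_pairs_le`). The input is an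
  elementary bound for the number of primes `p ≤ y` with `p ≡ 1 mod d` (`card_primesOneMod_le`),
  obtained from the divisibility `n! ∣ d ^ n ∏_{k ≤ n} (d k + 1)`.

These bounds are summable over `d`, so Tannery's theorem allows the limit to be taken termwise, with
value `log 2 ∑ μ(d) / (d φ(d))`; the Euler product of the last sum is `∏ (1 - 1 / (p (p - 1)))`
(`tsum_singularTerm`).
-/

/-- `P⁺(n)`, the largest prime divisor of `n ≥ 2`, with `P⁺(1) = 1` (and `P⁺(0) = 0`). -/
def Pplus (n : ℕ) : ℕ :=
  if n ≤ 1 then n else n.primeFactors.sup id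

/-! ### Karamata means: from monomials to continuous functions -/

section LaplaceMeans

open Filter Topology MeasureTheory Set

/-- The mean `σ ∑ a(n) n^{-1-σ} f(n^{-σ})` of `f : [0, 1] → ℝ`. As `σ → 0⁺` these means converge
to `l ∫₀¹ f` when the Dirichlet series `∑ a(n) n^{-s}` has a simple pole of residue `l` at
`s = 1`. The term `n = 0` vanishes for `σ > 0`, since `0 ^ (1 + σ) = 0` and `x / 0 = 0`. -/
noncomputable def laplaceMean (a : ℕ → ℝ) (σ : ℝ) (f : ℝ → ℝ) : ℝ :=
  ∑' n : ℕ, σ * (a n / (n : ℝ) ^ (1 + σ)) * f ((n : ℝ) ^ (-σ))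

lemma natCast_rpow_neg_mem_Icc (n : ℕ) {σ : ℝ} (hσ : 0 < σ) : (n : ℝ) ^ (-σ) ∈ Icc (0 : ℝ) 1 := by
  refine ⟨by positivity, ?_⟩
  rcases Nat.eq_zero_or_pos n with rfl | hn
  · simp [Real.zero_rpow (neg_ne_zero.mpr hσ.ne')]
  · exact Real.rpow_le_one_of_one_le_of_nonpos (by exact_mod_cast hn) (by linarith)

section Karamata

variable {a : ℕ → ℝ} {l : ℝ}

lemma summable_laplaceMean (ha : ∀ n, 0 ≤ a n)
    (hs : ∀ s : ℝ, 1 < s → Summable fun n : ℕ => a n / (n : ℝ) ^ s) {σ : ℝ} (hσ : 0 < σ)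
    {f : ℝ → ℝ} {M : ℝ} (hf : ∀ t ∈ Icc (0 : ℝ) 1, |f t| ≤ M) :
    Summable fun n : ℕ => σ * (a n / (n : ℝ) ^ (1 + σ)) * f ((n : ℝ) ^ (-σ)) := by
  refine Summable.of_norm_bounded (((hs (1 + σ) (by linarith)).mul_left σ).mul_right M) fun n => ?_
  have h0 : 0 ≤ σ * (a n / (n : ℝ) ^ (1 + σ)) :=
    mul_nonneg hσ.le (div_nonneg (ha n) (by positivity))
  rw [Real.norm_eq_abs, abs_mul, abs_of_nonneg h0]
  exact mul_le_mul_of_nonneg_left (hf _ (natCast_rpow_neg_mem_Icc n hσ)) h0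

lemma laplaceMean_mono (ha : ∀ n, 0 ≤ a n)
    (hs : ∀ s : ℝ, 1 < s → Summable fun n : ℕ => a n / (n : ℝ) ^ s) {σ : ℝ} (hσ : 0 < σ)
    {f g : ℝ → ℝ} {M M' : ℝ} (hf : ∀ t ∈ Icc (0 : ℝ) 1, |f t| ≤ M)
    (hg : ∀ t ∈ Icc (0 : ℝ) 1, |g t| ≤ M') (hfg : ∀ t ∈ Icc (0 : ℝ) 1, f t ≤ g t) :
    laplaceMean a σ f ≤ laplaceMean a σ g := by
  refine Summable.tsum_le_tsum (fun n => ?_) (summable_laplaceMean ha hs hσ hf)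
    (summable_laplaceMean ha hs hσ hg)
  have h0 : 0 ≤ σ * (a n / (n : ℝ) ^ (1 + σ)) :=
    mul_nonneg hσ.le (div_nonneg (ha n) (by positivity))
  exact mul_le_mul_of_nonneg_left (hfg _ (natCast_rpow_neg_mem_Icc n hσ)) h0

lemma exists_bound_Icc {f : ℝ → ℝ} (hf : ContinuousOn f (Icc 0 1)) :
    ∃ M, ∀ t ∈ Icc (0 : ℝ) 1, |f t| ≤ M := by
  obtain ⟨M, hM⟩ := isCompact_Icc.exists_bound_of_continuousOn hf
  exact ⟨M, hM⟩

/-- For `f(t) = t ^ k` the mean is the Dirichlet series at `s = 1 + (k + 1) σ`, up to the factor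
`σ = (s - 1) / (k + 1)`. -/
lemma tendsto_laplaceMean_pow
    (hl : Tendsto (fun s : ℝ => (s - 1) * ∑' n : ℕ, a n / (n : ℝ) ^ s) (𝓝[>] 1) (𝓝 l)) (k : ℕ) :
    Tendsto (fun σ => laplaceMean a σ (fun t => t ^ k)) (𝓝[>] 0) (𝓝 (l * (1 / (k + 1)))) := by
  have hk : (0 : ℝ) < k + 1 := by positivity
  have h1 : Tendsto (fun σ : ℝ => 1 + (k + 1) * σ) (𝓝[>] 0) (𝓝[>] 1) := by
    refine tendsto_nhdsWithin_iff.mpr ⟨?_, ?_⟩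
    · have : Tendsto (fun σ : ℝ => 1 + (k + 1) * σ) (𝓝 0) (𝓝 (1 + (k + 1) * 0)) :=
        (Continuous.tendsto (by fun_prop) 0)
      simpa using this.mono_left nhdsWithin_le_nhds
    · filter_upwards [self_mem_nhdsWithin] with σ hσ
      have : 0 < (k + 1) * σ := mul_pos hk hσ
      simpa using this
  have h2 := (hl.comp h1).mul_const (1 / ((k : ℝ) + 1))
  refine h2.congr' ?_
  filter_upwards [self_mem_nhdsWithin] with σ hσ
  have hσ' : 0 < σ := hσ
  simp only [Function.comp, laplaceMean]
  rw [← tsum_mul_left, ← tsum_mul_right]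
  refine tsum_congr fun n => ?_
  rcases Nat.eq_zero_or_pos n with rfl | hn
  · have h3 : (1 : ℝ) + σ ≠ 0 := by positivity
    have h4 : (1 : ℝ) + (k + 1) * σ ≠ 0 := by positivity
    simp [Real.zero_rpow h3, Real.zero_rpow h4]
  · have hn' : (0 : ℝ) < n := by exact_mod_cast hn
    rw [← Real.rpow_natCast, ← Real.rpow_mul hn'.le, div_eq_mul_inv, div_eq_mul_inv (a n),
      ← Real.rpow_neg hn'.le, ← Real.rpow_neg hn'.le,
      show -(1 + ((k : ℝ) + 1) * σ) = -(1 + σ) + -σ * k by ring, Real.rpow_add hn']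
    field_simp
    ring

lemma tendsto_laplaceMean_polynomial (ha : ∀ n, 0 ≤ a n)
    (hs : ∀ s : ℝ, 1 < s → Summable fun n : ℕ => a n / (n : ℝ) ^ s)
    (hl : Tendsto (fun s : ℝ => (s - 1) * ∑' n : ℕ, a n / (n : ℝ) ^ s) (𝓝[>] 1) (𝓝 l))
    (p : Polynomial ℝ) :
    Tendsto (fun σ => laplaceMean a σ (fun t => p.eval t)) (𝓝[>] 0)
      (𝓝 (l * ∫ t in (0 : ℝ)..1, p.eval t)) := by
  induction p using Polynomial.induction_on' with
  | add p q hp hq =>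
    have hpc : Continuous fun t => p.eval t := p.continuous
    have hqc : Continuous fun t => q.eval t := q.continuous
    simp only [Polynomial.eval_add]
    rw [intervalIntegral.integral_add (hpc.intervalIntegrable _ _) (hqc.intervalIntegrable _ _),
      mul_add]
    refine (hp.add hq).congr' ?_
    filter_upwards [self_mem_nhdsWithin] with σ hσ
    obtain ⟨M, hM⟩ := exists_bound_Icc hpc.continuousOn
    obtain ⟨M', hM'⟩ := exists_bound_Icc hqc.continuousOn
    simp only [laplaceMean, mul_add]
    exact ((summable_laplaceMean ha hs hσ hM).tsum_add (summable_laplaceMean ha hs hσ hM')).symm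
  | monomial k c =>
    have h := (tendsto_laplaceMean_pow hl k).const_mul c
    simp only [Polynomial.eval_monomial]
    rw [intervalIntegral.integral_const_mul, integral_pow]
    convert! h using 2
    · simp only [laplaceMean]
      rw [← tsum_mul_left]
      exact tsum_congr fun n => by ring
    · simp; ring

/-- Weierstrass approximation extends the limit from polynomials to continuous functions; the error
is controlled by the mean of a constant, which uses `a ≥ 0`. -/
lemma tendsto_laplaceMean_continuous (ha : ∀ n, 0 ≤ a n)
    (hs : ∀ s : ℝ, 1 < s → Summable fun n : ℕ => a n / (n : ℝ) ^ s)
    (hl : Tendsto (fun s : ℝ => (s - 1) * ∑' n : ℕ, a n / (n : ℝ) ^ s) (𝓝[>] 1) (𝓝 l))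
    {f : ℝ → ℝ} (hf : Continuous f) :
    Tendsto (fun σ => laplaceMean a σ f) (𝓝[>] 0) (𝓝 (l * ∫ t in (0 : ℝ)..1, f t)) := by
  rw [Metric.tendsto_nhds]
  intro ε hε
  obtain ⟨M₁, hM₁⟩ := exists_bound_Icc hf.continuousOn
  set δ : ℝ := ε / (2 * (2 * |l| + 2)) with hδ
  have hδ0 : 0 < δ := by positivity
  obtain ⟨p, hp⟩ := exists_polynomial_near_of_continuousOn 0 1 f hf.continuousOn δ hδ0
  have hpc : Continuous fun t => p.eval t := p.continuous
  obtain ⟨M₂, hM₂⟩ := exists_bound_Icc hpc.continuousOn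
  have h1 := tendsto_laplaceMean_polynomial ha hs hl p
  have h2 := tendsto_laplaceMean_polynomial ha hs hl (Polynomial.C δ)
  simp only [Polynomial.eval_C, intervalIntegral.integral_const, sub_zero, smul_eq_mul,
    one_mul] at h2
  have hint : |(∫ t in (0 : ℝ)..1, p.eval t) - ∫ t in (0 : ℝ)..1, f t| ≤ δ := by
    rw [← intervalIntegral.integral_sub (hpc.intervalIntegrable _ _) (hf.intervalIntegrable _ _)]
    have := intervalIntegral.norm_integral_le_of_norm_le_const (a := (0 : ℝ)) (b := 1) (C := δ)
      (f := fun t => p.eval t - f t) (fun t ht => by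
        rw [uIoc_of_le zero_le_one] at ht
        exact (hp t ⟨ht.1.le, ht.2⟩).le)
    simpa using this
  have hδl : |l| * δ + δ + (l * δ + δ) < ε := by
    have : δ * (2 * (2 * |l| + 2)) = ε := by rw [hδ]; field_simp
    nlinarith [le_abs_self l]
  filter_upwards [self_mem_nhdsWithin, Metric.tendsto_nhds.mp h1 δ hδ0,
    Metric.tendsto_nhds.mp h2 δ hδ0] with σ hσ h3 h4
  rw [Real.dist_eq] at h3 h4 ⊢
  have h5 : |laplaceMean a σ f - laplaceMean a σ (fun t => p.eval t)| ≤
      laplaceMean a σ (fun _ => δ) := by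
    simp only [laplaceMean]
    rw [← (summable_laplaceMean ha hs hσ hM₁).tsum_sub (summable_laplaceMean ha hs hσ hM₂)]
    have hb : ∀ t ∈ Icc (0 : ℝ) 1, |(fun _ => δ : ℝ → ℝ) t| ≤ δ := fun t _ => (abs_of_pos hδ0).le
    rw [← Real.norm_eq_abs]
    refine tsum_of_norm_bounded (summable_laplaceMean ha hs hσ hb).hasSum fun n => ?_
    have h0 : 0 ≤ σ * (a n / (n : ℝ) ^ (1 + σ)) :=
      mul_nonneg (le_of_lt hσ) (div_nonneg (ha n) (by positivity))
    rw [← mul_sub, norm_mul, Real.norm_of_nonneg h0, Real.norm_eq_abs, abs_sub_comm]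
    exact mul_le_mul_of_nonneg_left (hp _ (natCast_rpow_neg_mem_Icc n hσ)).le h0
  have h6 : |l * (∫ t in (0 : ℝ)..1, p.eval t) - l * ∫ t in (0 : ℝ)..1, f t| ≤ |l| * δ := by
    rw [← mul_sub, abs_mul]
    exact mul_le_mul_of_nonneg_left hint (abs_nonneg _)
  rw [abs_le] at h5 h6
  rw [abs_lt] at h3 h4 ⊢
  constructor <;> linarith [h5.1, h5.2, h6.1, h6.2, h3.1, h3.2, h4.1, h4.2]

end Karamata

end LaplaceMeans

/-! ### The window `√N < n ≤ N` and the Tauberian theorem -/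

section Window

open Filter Topology MeasureTheory Set

section Sandwich

/-- The projection of `t` onto the interval `[e^{-1}, e^{-1/2}]`. -/
noncomputable def windowClamp (t : ℝ) : ℝ := max (Real.exp (-1)) (min t (Real.exp (-1 / 2)))

/-- A continuous extension to `ℝ` of `t ↦ 1 / (-t log t)` on `[e^{-1}, e^{-1/2}]`. With
`t = n^{-σ}` and `σ = 1 / log N` the interval is `√N ≤ n ≤ N`, and the weight turns the summand
`σ a(n) n^{-1-σ}` into `a(n) / (n log n)`. -/
noncomputable def windowWeight (t : ℝ) : ℝ := (windowClamp t * -Real.log (windowClamp t))⁻¹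

lemma exp_neg_one_lt : Real.exp (-1) < Real.exp (-1 / 2) := Real.exp_lt_exp.mpr (by norm_num)

lemma exp_neg_half_lt : Real.exp (-1 / 2) < 1 := by
  have := Real.exp_lt_exp.mpr (show (-1 / 2 : ℝ) < 0 by norm_num)
  rwa [Real.exp_zero] at this

lemma windowClamp_mem (t : ℝ) : windowClamp t ∈ Icc (Real.exp (-1)) (Real.exp (-1 / 2)) :=
  ⟨le_max_left _ _, max_le exp_neg_one_lt.le (min_le_right _ _)⟩

lemma windowClamp_pos (t : ℝ) : 0 < windowClamp t := (Real.exp_pos _).trans_le (windowClamp_mem t).1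

lemma windowClamp_of_mem {t : ℝ} (ht : t ∈ Icc (Real.exp (-1)) (Real.exp (-1 / 2))) :
    windowClamp t = t := by
  rw [windowClamp, min_eq_left ht.2, max_eq_right ht.1]

lemma half_le_neg_log_windowClamp (t : ℝ) : 1 / 2 ≤ -Real.log (windowClamp t) := by
  have := Real.log_le_log (windowClamp_pos t) (windowClamp_mem t).2
  rw [Real.log_exp] at this
  linarith

lemma windowClamp_mul_pos (t : ℝ) : 0 < windowClamp t * -Real.log (windowClamp t) :=
  mul_pos (windowClamp_pos t) (by linarith [half_le_neg_log_windowClamp t])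

lemma continuous_windowClamp : Continuous windowClamp := by unfold windowClamp; fun_prop

lemma continuous_windowWeight : Continuous windowWeight := by
  unfold windowWeight
  refine Continuous.inv₀ ?_ fun t => (windowClamp_mul_pos t).ne'
  exact continuous_windowClamp.mul
    (continuous_windowClamp.log fun t => (windowClamp_pos t).ne').neg

lemma windowWeight_nonneg (t : ℝ) : 0 ≤ windowWeight t := inv_nonneg.mpr (windowClamp_mul_pos t).le

lemma windowWeight_le (t : ℝ) : windowWeight t ≤ 2 * Real.exp 1 := by
  have h : Real.exp (-1) * (1 / 2) ≤ windowClamp t * -Real.log (windowClamp t) :=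
    mul_le_mul (windowClamp_mem t).1 (half_le_neg_log_windowClamp t) (by norm_num)
      (windowClamp_pos t).le
  have h2 := inv_anti₀ (by positivity) h
  refine h2.trans (le_of_eq ?_)
  rw [Real.exp_neg, mul_inv, inv_inv]; ring

/-- An antiderivative of `-1 / (t log t)` is `-log (-log t)`; between `-log t = 1` and
`-log t = 1 / 2` it grows by `log 2`. This is where the factor `log 2` comes from. -/
lemma integral_windowWeight :
    ∫ t in (Real.exp (-1))..(Real.exp (-1 / 2)), windowWeight t = Real.log 2 := by
  have hd : ∀ t ∈ uIcc (Real.exp (-1)) (Real.exp (-1 / 2)),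
      HasDerivAt (fun t => -Real.log (-Real.log t)) (windowWeight t) t := by
    intro t ht
    rw [uIcc_of_le exp_neg_one_lt.le] at ht
    have hp := windowClamp_pos t
    have hl := half_le_neg_log_windowClamp t
    rw [windowWeight]
    rw [windowClamp_of_mem ht] at hp hl ⊢
    have h1 := ((Real.hasDerivAt_log hp.ne').neg.log (by simp only [Pi.neg_apply]; linarith)).neg
    convert! h1 using 1
    have : Real.log t ≠ 0 := by intro h; rw [h] at hl; norm_num at hl
    simp only [Pi.neg_apply]
    field_simp
  rw [intervalIntegral.integral_eq_sub_of_hasDerivAt hd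
    (continuous_windowWeight.intervalIntegrable _ _)]
  rw [Real.log_exp, Real.log_exp]
  norm_num
  rw [one_div, Real.log_inv, neg_neg]

/-- The weight cut off to the closed window `[e^{-1}, e^{-1/2}]`: the almost everywhere limit of the
continuous majorants `upperStep k` and minorants `lowerStep k`. -/
noncomputable def windowStep (t : ℝ) : ℝ :=
  (Icc (Real.exp (-1)) (Real.exp (-1 / 2))).indicator windowWeight t

lemma integral_windowStep : ∫ t in (0 : ℝ)..1, windowStep t = Real.log 2 := by
  unfold windowStep
  rw [intervalIntegral.integral_of_le zero_le_one, setIntegral_indicator measurableSet_Icc,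
    inter_eq_right.mpr, integral_Icc_eq_integral_Ioc,
    ← intervalIntegral.integral_of_le exp_neg_one_lt.le, integral_windowWeight]
  exact fun t ht => ⟨(Real.exp_pos _).trans_le ht.1, ht.2.trans exp_neg_half_lt.le⟩

/-- A continuous majorant of the cut-off weight: it decays linearly to `0` within distance `1 / k`
of the window. -/
noncomputable def upperStep (k : ℕ) (t : ℝ) : ℝ :=
  windowWeight t * max 0 (1 - k * |t - windowClamp t|)

/-- A continuous minorant of the cut-off weight: it rises linearly from `0` at the ends of the window
to the full weight at distance `1 / k` inside. -/
noncomputable def lowerStep (k : ℕ) (t : ℝ) : ℝ :=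
  windowWeight t * min 1 (k * max 0 (min (t - Real.exp (-1)) (Real.exp (-1 / 2) - t)))

lemma continuous_upperStep (k : ℕ) : Continuous (upperStep k) := by
  unfold upperStep
  have := continuous_windowWeight
  have := continuous_windowClamp
  fun_prop

lemma continuous_lowerStep (k : ℕ) : Continuous (lowerStep k) := by
  unfold lowerStep
  have := continuous_windowWeight
  fun_prop

lemma tendsto_integral_upperStep :
    Tendsto (fun k => ∫ t in (0 : ℝ)..1, upperStep k t) atTop (𝓝 (Real.log 2)) := by
  rw [← integral_windowStep]
  refine intervalIntegral.tendsto_integral_filter_of_dominated_convergence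
    (fun _ => 2 * Real.exp 1) (Eventually.of_forall fun k =>
      (continuous_upperStep k).aestronglyMeasurable) ?_ (by simp) ?_
  · refine Eventually.of_forall fun k => Eventually.of_forall fun t _ => ?_
    unfold upperStep
    have h1 : (0 : ℝ) ≤ max 0 (1 - k * |t - windowClamp t|) := le_max_left _ _
    have h2 : max 0 (1 - k * |t - windowClamp t|) ≤ 1 := by
      refine max_le zero_le_one ?_
      have : 0 ≤ k * |t - windowClamp t| := by positivity
      linarith
    rw [Real.norm_of_nonneg (mul_nonneg (windowWeight_nonneg t) h1)]
    exact (mul_le_of_le_one_right (windowWeight_nonneg t) h2).trans (windowWeight_le t)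
  · refine Eventually.of_forall fun t _ => ?_
    unfold upperStep windowStep
    by_cases ht : t ∈ Icc (Real.exp (-1)) (Real.exp (-1 / 2))
    · simp [indicator_of_mem ht, windowClamp_of_mem ht]
    · rw [indicator_of_notMem ht]
      have hpos : 0 < |t - windowClamp t| := by
        rw [abs_pos, sub_ne_zero]
        intro h
        exact ht (h ▸ windowClamp_mem t)
      refine tendsto_const_nhds.congr' ?_
      obtain ⟨K, hK⟩ := exists_nat_ge (1 / |t - windowClamp t|)
      filter_upwards [eventually_ge_atTop K] with k hk
      have h1 : 1 ≤ (k : ℝ) * |t - windowClamp t| := by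
        rw [div_le_iff₀ hpos] at hK
        refine hK.trans (mul_le_mul_of_nonneg_right (by exact_mod_cast hk) hpos.le)
      rw [max_eq_left (by linarith), mul_zero]

lemma tendsto_integral_lowerStep :
    Tendsto (fun k => ∫ t in (0 : ℝ)..1, lowerStep k t) atTop (𝓝 (Real.log 2)) := by
  rw [← integral_windowStep]
  refine intervalIntegral.tendsto_integral_filter_of_dominated_convergence
    (fun _ => 2 * Real.exp 1) (Eventually.of_forall fun k =>
      (continuous_lowerStep k).aestronglyMeasurable) ?_ (by simp) ?_
  · refine Eventually.of_forall fun k => Eventually.of_forall fun t _ => ?_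
    unfold lowerStep
    have h1 : (0 : ℝ) ≤
        min 1 (k * max 0 (min (t - Real.exp (-1)) (Real.exp (-1 / 2) - t))) :=
      le_min zero_le_one (mul_nonneg (Nat.cast_nonneg k) (le_max_left _ _))
    rw [Real.norm_of_nonneg (mul_nonneg (windowWeight_nonneg t) h1)]
    exact (mul_le_of_le_one_right (windowWeight_nonneg t) (min_le_left _ _)).trans
      (windowWeight_le t)
  · have hne : ∀ᵐ t : ℝ, t ≠ Real.exp (-1) ∧ t ≠ Real.exp (-1 / 2) :=
      (Measure.ae_ne volume _).and (Measure.ae_ne volume _)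
    filter_upwards [hne] with t hne _
    unfold lowerStep windowStep
    by_cases ht : t ∈ Icc (Real.exp (-1)) (Real.exp (-1 / 2))
    · rw [indicator_of_mem ht]
      have hpos : 0 < min (t - Real.exp (-1)) (Real.exp (-1 / 2) - t) :=
        lt_min (sub_pos.mpr (lt_of_le_of_ne ht.1 (Ne.symm hne.1)))
          (sub_pos.mpr (lt_of_le_of_ne ht.2 hne.2))
      refine tendsto_const_nhds.congr' ?_
      obtain ⟨K, hK⟩ := exists_nat_ge (1 / min (t - Real.exp (-1)) (Real.exp (-1 / 2) - t))
      filter_upwards [eventually_ge_atTop K] with k hk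
      rw [max_eq_right hpos.le, min_eq_left, mul_one]
      rw [div_le_iff₀ hpos] at hK
      exact hK.trans (mul_le_mul_of_nonneg_right (by exact_mod_cast hk) hpos.le)
    · rw [indicator_of_notMem ht]
      have : min (t - Real.exp (-1)) (Real.exp (-1 / 2) - t) ≤ 0 := by
        by_contra! h
        rw [lt_min_iff] at h
        exact ht ⟨by linarith [h.1], by linarith [h.2]⟩
      simp [max_eq_left this]

/-- The weight cut off to `[e^{-1}, e^{-1/2})`. The half-open window corresponds exactly to
`√N < n ≤ N`. -/
noncomputable def windowIco (t : ℝ) : ℝ :=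
  (Ico (Real.exp (-1)) (Real.exp (-1 / 2))).indicator windowWeight t

lemma windowIco_le_upperStep (k : ℕ) (t : ℝ) : windowIco t ≤ upperStep k t := by
  unfold windowIco upperStep
  by_cases ht : t ∈ Ico (Real.exp (-1)) (Real.exp (-1 / 2))
  · simp [indicator_of_mem ht, windowClamp_of_mem (Ico_subset_Icc_self ht)]
  · rw [indicator_of_notMem ht]
    exact mul_nonneg (windowWeight_nonneg t) (le_max_left _ _)

lemma lowerStep_le_windowIco (k : ℕ) (t : ℝ) : lowerStep k t ≤ windowIco t := by
  unfold windowIco lowerStep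
  by_cases ht : t ∈ Ico (Real.exp (-1)) (Real.exp (-1 / 2))
  · rw [indicator_of_mem ht]
    exact mul_le_of_le_one_right (windowWeight_nonneg t) (min_le_left _ _)
  · rw [indicator_of_notMem ht]
    have : min (t - Real.exp (-1)) (Real.exp (-1 / 2) - t) ≤ 0 := by
      by_contra! h
      rw [lt_min_iff] at h
      exact ht ⟨by linarith [h.1], by linarith [h.2]⟩
    simp [max_eq_left this]

lemma abs_windowIco_le (t : ℝ) : |windowIco t| ≤ 2 * Real.exp 1 := by
  unfold windowIco
  by_cases ht : t ∈ Ico (Real.exp (-1)) (Real.exp (-1 / 2))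
  · rw [indicator_of_mem ht, abs_of_nonneg (windowWeight_nonneg t)]
    exact windowWeight_le t
  · rw [indicator_of_notMem ht, abs_zero]
    positivity

variable {a : ℕ → ℝ} {l : ℝ}

/-- Karamata's step: the limit passes to the discontinuous cut-off weight, squeezed between continuous
functions whose integrals tend to the same value. -/
lemma tendsto_laplaceMean_windowIco (ha : ∀ n, 0 ≤ a n)
    (hs : ∀ s : ℝ, 1 < s → Summable fun n : ℕ => a n / (n : ℝ) ^ s)
    (hl : Tendsto (fun s : ℝ => (s - 1) * ∑' n : ℕ, a n / (n : ℝ) ^ s) (𝓝[>] 1) (𝓝 l)) :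
    Tendsto (fun σ => laplaceMean a σ windowIco) (𝓝[>] 0) (𝓝 (l * Real.log 2)) := by
  refine tendsto_order.mpr ⟨fun b hb => ?_, fun b hb => ?_⟩
  · have h1 := (tendsto_integral_lowerStep.const_mul l)
    obtain ⟨k, hk⟩ := ((tendsto_order.mp h1).1 b hb).exists
    have h2 := tendsto_laplaceMean_continuous ha hs hl (continuous_lowerStep k)
    obtain ⟨M, hM⟩ := exists_bound_Icc (continuous_lowerStep k).continuousOn
    filter_upwards [(tendsto_order.mp h2).1 b hk, self_mem_nhdsWithin] with σ h3 hσ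
    exact h3.trans_le (laplaceMean_mono ha hs hσ hM (fun t _ => abs_windowIco_le t)
      fun t _ => lowerStep_le_windowIco k t)
  · have h1 := (tendsto_integral_upperStep.const_mul l)
    obtain ⟨k, hk⟩ := ((tendsto_order.mp h1).2 b hb).exists
    have h2 := tendsto_laplaceMean_continuous ha hs hl (continuous_upperStep k)
    obtain ⟨M, hM⟩ := exists_bound_Icc (continuous_upperStep k).continuousOn
    filter_upwards [(tendsto_order.mp h2).2 b hk, self_mem_nhdsWithin] with σ h3 hσ
    exact (laplaceMean_mono ha hs hσ (fun t _ => abs_windowIco_le t) hM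
      fun t _ => windowIco_le_upperStep k t).trans_lt h3

/-- The Tauberian theorem: a simple pole of `∑ a(n) n^{-s}` with residue `l` at `s = 1` gives
`∑_{√N < n ≤ N} a(n) / (n log n) → l log 2` for `a ≥ 0`. -/
lemma tendsto_sum_div_mul_log (ha : ∀ n, 0 ≤ a n)
    (hs : ∀ s : ℝ, 1 < s → Summable fun n : ℕ => a n / (n : ℝ) ^ s)
    (hl : Tendsto (fun s : ℝ => (s - 1) * ∑' n : ℕ, a n / (n : ℝ) ^ s) (𝓝[>] 1) (𝓝 l)) :
    Tendsto (fun N : ℕ => ∑ n ∈ Finset.Icc 1 N with N < n ^ 2, a n / (n * Real.log n)) atTop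
      (𝓝 (l * Real.log 2)) := by
  have hlog : Tendsto (fun N : ℕ => Real.log N) atTop atTop :=
    Real.tendsto_log_atTop.comp tendsto_natCast_atTop_atTop
  have hσ : Tendsto (fun N : ℕ => (Real.log N)⁻¹) atTop (𝓝[>] 0) :=
    tendsto_inv_atTop_nhdsGT_zero.comp hlog
  refine ((tendsto_laplaceMean_windowIco ha hs hl).comp hσ).congr' ?_
  filter_upwards [eventually_ge_atTop 2] with N hN
  have hN0 : (0 : ℝ) < N := by exact_mod_cast (by omega : 0 < N)
  have hL : 0 < Real.log N := Real.log_pos (by exact_mod_cast hN)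
  have hmem : ∀ n : ℕ, 0 < n → ((n : ℝ) ^ (-(Real.log N)⁻¹) ∈
      Ico (Real.exp (-1)) (Real.exp (-1 / 2)) ↔ n ≤ N ∧ N < n ^ 2) := by
    intro n hn
    have hn0 : (0 : ℝ) < n := by exact_mod_cast hn
    rw [Real.rpow_def_of_pos hn0, mem_Ico, Real.exp_le_exp, Real.exp_lt_exp]
    refine and_congr ?_ ?_
    · rw [mul_neg, neg_le_neg_iff, ← div_eq_mul_inv, div_le_one hL, Real.log_le_log_iff hn0 hN0]
      exact_mod_cast Iff.rfl
    · rw [mul_neg, neg_div, neg_lt_neg_iff, ← div_eq_mul_inv, lt_div_iff₀ hL]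
      have : (N : ℝ) < (n : ℝ) ^ 2 ↔ N < n ^ 2 := by exact_mod_cast Iff.rfl
      rw [← this, ← Real.log_lt_log_iff hN0 (by positivity), Real.log_pow]
      push_cast
      constructor <;> intro h <;> linarith
  simp only [Function.comp, laplaceMean]
  rw [tsum_eq_sum (s := (Finset.Icc 1 N).filter (N < · ^ 2))]
  · refine Finset.sum_congr rfl fun n hn => ?_
    simp only [Finset.mem_filter, Finset.mem_Icc] at hn
    have hn0 : (0 : ℝ) < n := by exact_mod_cast hn.1.1
    have hm := (hmem n hn.1.1).mpr ⟨hn.1.2, hn.2⟩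
    rw [windowIco, indicator_of_mem hm, windowWeight, windowClamp_of_mem (Ico_subset_Icc_self hm),
      Real.log_rpow hn0, Real.rpow_add hn0, Real.rpow_one, Real.rpow_neg hn0.le]
    have : (n : ℝ) ^ (Real.log N)⁻¹ ≠ 0 := (Real.rpow_pos_of_pos hn0 _).ne'
    field_simp
  · intro n hn
    rcases Nat.eq_zero_or_pos n with rfl | h0
    · have : 1 + (Real.log N)⁻¹ ≠ 0 := by positivity
      simp [Real.zero_rpow this]
    · have : (n : ℝ) ^ (-(Real.log N)⁻¹) ∉ Ico (Real.exp (-1)) (Real.exp (-1 / 2)) := by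
        rw [hmem n h0]
        intro h
        exact hn (by simp only [Finset.mem_filter, Finset.mem_Icc]; exact ⟨⟨h0, h.1⟩, h.2⟩)
      rw [windowIco, indicator_of_notMem this, mul_zero]

end Sandwich

end Window

/-! ### Reciprocals of primes congruent to 1 mod `d` -/

section Reciprocals

open Filter Topology MeasureTheory Set

section PrimesOneMod

open ArithmeticFunction ArithmeticFunction.vonMangoldt

variable (d : ℕ)

lemma summable_residueClass_div_rpow {s : ℝ} (hs : 1 < s) :
    Summable fun n : ℕ => residueClass (1 : ZMod d) n / (n : ℝ) ^ s := by
  have h := LSeriesSummable_of_abscissaOfAbsConv_lt_re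
    (f := fun n => (residueClass (1 : ZMod d) n : ℂ)) (s := s) <|
      (abscissaOfAbsConv_residueClass_le_one (1 : ZMod d)).trans_lt <| by
          rw [Complex.ofReal_re]; exact_mod_cast hs
  have h2 := Complex.reCLM.summable h
  refine h2.congr fun n => ?_
  rcases eq_or_ne n 0 with rfl | hn
  · simp only [LSeries.term_zero, residueClass_apply_zero, zero_div, _root_.map_zero]
  · simp only [LSeries.term_of_ne_zero hn, ← Complex.ofReal_natCast n,
          ← Complex.ofReal_cpow n.cast_nonneg, ← Complex.ofReal_div, Complex.reCLM_apply,
          Complex.ofReal_re]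

variable [NeZero d]

/-- The Dirichlet series of `Λ` restricted to `n ≡ 1 mod d` has a simple pole at `1` with residue
`1 / φ(d)`: the function with the pole removed is continuous on `re s ≥ 1`. -/
lemma tendsto_sub_one_mul_residueClass :
    Tendsto (fun s : ℝ => (s - 1) * ∑' n : ℕ, residueClass (1 : ZMod d) n / (n : ℝ) ^ s)
      (𝓝[>] 1) (𝓝 (d.totient : ℝ)⁻¹) := by
  have hcont := continuousOn_LFunctionResidueClassAux (1 : ZMod d)
  have h1 : ContinuousWithinAt (fun s : ℝ => (LFunctionResidueClassAux (1 : ZMod d) s).re)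
      (Ioi 1) 1 := by
    refine Complex.continuous_re.continuousAt.comp_continuousWithinAt ?_
    have h2 : ContinuousWithinAt (LFunctionResidueClassAux (1 : ZMod d)) {s | 1 ≤ s.re}
        ((1 : ℝ) : ℂ) := hcont _ (by simp)
    exact h2.comp Complex.continuous_ofReal.continuousWithinAt fun s hs => by
      simpa using le_of_lt (mem_Ioi.mp hs)
  have h3 : Tendsto (fun s : ℝ => s - 1) (𝓝[>] 1) (𝓝 0) := by
    have : Tendsto (fun s : ℝ => s - 1) (𝓝 1) (𝓝 (1 - 1)) := (continuous_sub_right 1).tendsto 1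
    simpa using this.mono_left nhdsWithin_le_nhds
  have h4 := (h3.mul h1.tendsto).add_const (d.totient : ℝ)⁻¹
  rw [zero_mul, zero_add] at h4
  refine h4.congr' ?_
  filter_upwards [self_mem_nhdsWithin] with s hs
  have hs' : (1 : ℝ) < s := hs
  have hs0 : s - 1 ≠ 0 := by linarith
  have h5 := eqOn_LFunctionResidueClassAux (q := d) isUnit_one
    (show ((s : ℝ) : ℂ) ∈ {s : ℂ | 1 < s.re} from hs)
  have h6 : (LFunctionResidueClassAux (1 : ZMod d) s).re =
      (∑' n : ℕ, residueClass (1 : ZMod d) n / (n : ℝ) ^ s) - (d.totient : ℝ)⁻¹ / (s - 1) := by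
    rw [h5, Complex.sub_re]
    congr 1
    · rw [LSeries, Complex.re_tsum <| LSeriesSummable_of_abscissaOfAbsConv_lt_re <|
        (abscissaOfAbsConv_residueClass_le_one (1 : ZMod d)).trans_lt <| by
          rw [Complex.ofReal_re]; exact_mod_cast hs']
      refine tsum_congr fun n => ?_
      rcases eq_or_ne n 0 with rfl | hn
      · simp only [LSeries.term_zero, Complex.zero_re, residueClass_apply_zero, zero_div]
      · simp only [LSeries.term_of_ne_zero hn, ← Complex.ofReal_natCast n,
          ← Complex.ofReal_cpow n.cast_nonneg, ← Complex.ofReal_div, Complex.ofReal_re]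
    · rw [← Complex.ofReal_natCast, ← Complex.ofReal_one, ← Complex.ofReal_sub,
        ← Complex.ofReal_inv, ← Complex.ofReal_div, Complex.ofReal_re]
  rw [h6]
  field_simp
  ring

/-- Mertens on the window `√N < p ≤ N` for the primes `p ≡ 1 mod d`: the Tauberian theorem is applied
to `Λ` on the primes of the class, where `Λ(p) / (p log p) = 1 / p`. -/
lemma tendsto_sum_inv_prime_modEq_one :
    Tendsto (fun N : ℕ => ∑ p ∈ Finset.Icc 1 N with N < p ^ 2 ∧ p.Prime ∧ d ∣ p - 1, (1 : ℝ) / p)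
      atTop (𝓝 ((d.totient : ℝ)⁻¹ * Real.log 2)) := by
  set b : ℕ → ℝ := fun n => if n.Prime then residueClass (1 : ZMod d) n else 0 with hb
  set c : ℕ → ℝ := fun n => if n.Prime then 0 else residueClass (1 : ZMod d) n with hc
  have hr := residueClass_nonneg (1 : ZMod d)
  have hb0 : ∀ n, 0 ≤ b n := fun n => by simp only [hb]; split_ifs; exacts [hr n, le_rfl]
  have hc0 : ∀ n, 0 ≤ c n := fun n => by simp only [hc]; split_ifs; exacts [le_rfl, hr n]
  have hbc : ∀ n, residueClass (1 : ZMod d) n = b n + c n := fun n => by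
    simp only [hb, hc]; split_ifs <;> simp
  have hbs : ∀ s : ℝ, 1 < s → Summable fun n : ℕ => b n / (n : ℝ) ^ s := fun s hs =>
    (summable_residueClass_div_rpow d hs).of_nonneg_of_le
      (fun n => div_nonneg (hb0 n) (by positivity))
      fun n => div_le_div_of_nonneg_right (by rw [hbc]; linarith [hc0 n]) (by positivity)
  have hcs : ∀ s : ℝ, 1 < s → Summable fun n : ℕ => c n / (n : ℝ) ^ s := fun s hs =>
    (summable_residueClass_div_rpow d hs).of_nonneg_of_le
      (fun n => div_nonneg (hc0 n) (by positivity))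
      fun n => div_le_div_of_nonneg_right (by rw [hbc]; linarith [hb0 n]) (by positivity)
  have hc1 : Summable fun n : ℕ => c n / n := summable_residueClass_non_primes_div (1 : ZMod d)
  have h3 : Tendsto (fun s : ℝ => s - 1) (𝓝[>] 1) (𝓝 0) := by
    have : Tendsto (fun s : ℝ => s - 1) (𝓝 1) (𝓝 (1 - 1)) := (continuous_sub_right 1).tendsto 1
    simpa using this.mono_left nhdsWithin_le_nhds
  -- prime powers contribute a series converging at `s = 1`, hence no residue
  have hcl : Tendsto (fun s : ℝ => (s - 1) * ∑' n : ℕ, c n / (n : ℝ) ^ s) (𝓝[>] 1) (𝓝 0) := by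
    have h4 := h3.mul_const (∑' n : ℕ, c n / n)
    rw [zero_mul] at h4
    refine tendsto_of_tendsto_of_tendsto_of_le_of_le' tendsto_const_nhds h4 ?_ ?_
    · filter_upwards [self_mem_nhdsWithin] with s hs
      have hs' : (1 : ℝ) < s := hs
      exact mul_nonneg (by linarith) (tsum_nonneg fun n => div_nonneg (hc0 n) (by positivity))
    · filter_upwards [self_mem_nhdsWithin] with s hs
      have hs' : (1 : ℝ) < s := hs
      refine mul_le_mul_of_nonneg_left ((hcs s hs').tsum_le_tsum (fun n => ?_) hc1) (by linarith)
      rcases Nat.eq_zero_or_pos n with rfl | hn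
      · simp [Real.zero_rpow (show s ≠ 0 by linarith)]
      · have hn1 : (1 : ℝ) ≤ n := by exact_mod_cast hn
        refine div_le_div_of_nonneg_left (hc0 n) (by linarith) ?_
        simpa using Real.rpow_le_rpow_of_exponent_le hn1 hs'.le
  have hbl : Tendsto (fun s : ℝ => (s - 1) * ∑' n : ℕ, b n / (n : ℝ) ^ s) (𝓝[>] 1)
      (𝓝 (d.totient : ℝ)⁻¹) := by
    have h5 := (tendsto_sub_one_mul_residueClass d).sub hcl
    rw [sub_zero] at h5
    refine h5.congr' ?_
    filter_upwards [self_mem_nhdsWithin] with s hs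
    rw [← mul_sub, ← (summable_residueClass_div_rpow d hs).tsum_sub (hcs s hs)]
    congr 1
    refine tsum_congr fun n => ?_
    rw [hbc]; ring
  refine (tendsto_sum_div_mul_log hb0 hbs hbl).congr fun N => ?_
  have hset : Finset.filter (fun p => N < p ^ 2 ∧ p.Prime ∧ d ∣ p - 1) (Finset.Icc 1 N) =
      Finset.filter (fun p => p.Prime ∧ d ∣ p - 1)
        (Finset.filter (fun p => N < p ^ 2) (Finset.Icc 1 N)) := by
    rw [Finset.filter_filter]
  conv_rhs => rw [hset, Finset.sum_filter]
  refine Finset.sum_congr rfl fun n hn => ?_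
  simp only [hb]
  by_cases hp : n.Prime
  · have hiff : ((n : ZMod d) = 1) ↔ d ∣ n - 1 := by
      rw [← Nat.cast_one, eq_comm, ZMod.natCast_eq_natCast_iff, Nat.modEq_iff_dvd' hp.one_le]
    have hlog : Real.log n ≠ 0 := (Real.log_pos (by exact_mod_cast hp.one_lt)).ne'
    by_cases hd : d ∣ n - 1
    · have hres : residueClass (1 : ZMod d) n = Real.log n :=
        (indicator_of_mem (show n ∈ {n : ℕ | (n : ZMod d) = 1} from hiff.mpr hd) _).trans
          (vonMangoldt_apply_prime hp)
      rw [if_pos hp, if_pos ⟨hp, hd⟩, hres]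
      field_simp
    · have hres : residueClass (1 : ZMod d) n = 0 :=
        indicator_of_notMem (show n ∉ {n : ℕ | (n : ZMod d) = 1} from fun h => hd (hiff.mp h)) _
      rw [if_pos hp, if_neg (fun h => hd h.2), hres, zero_div]
  · rw [if_neg hp, if_neg (fun h => hp h.1), zero_div]

end PrimesOneMod

end Reciprocals

/-! ### An upper bound for primes congruent to 1 mod `d` -/

section UpperBound

open Finset

section BrunTitchmarsh

/-- Every prime power dividing `n!` divides `d ^ n * ∏ (d k + 1)`: for a prime `ℓ ∣ d` because
`v_ℓ(n!) ≤ n`, and for `ℓ ∤ d` because, after scaling by an inverse `u` of `d`, the product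
becomes the product of the `n` consecutive integers `u + k`. -/
lemma factorial_dvd_pow_mul_prod (d n : ℕ) :
    n.factorial ∣ d ^ n * ∏ k ∈ Icc 1 n, (d * k + 1) := by
  rw [Nat.dvd_iff_prime_pow_dvd_dvd]
  intro ℓ e hℓ he
  by_cases hd : ℓ ∣ d
  · have hen : e ≤ n := by
      have h1 : ℓ ^ e ∣ n.factorial := he
      have h2 : e ≤ padicValNat ℓ n.factorial := by
        have := Fact.mk hℓ
        exact (padicValNat_dvd_iff_le n.factorial_ne_zero).mp h1
      have h3 := Fact.mk hℓ
      have h4 := sub_one_mul_padicValNat_factorial (p := ℓ) n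
      have h5 : 1 ≤ ℓ - 1 := by have := hℓ.two_le; omega
      calc e ≤ padicValNat ℓ n.factorial := h2
        _ ≤ (ℓ - 1) * padicValNat ℓ n.factorial := Nat.le_mul_of_pos_left _ h5
        _ ≤ n := by rw [h4]; exact Nat.sub_le _ _
    exact Dvd.dvd.mul_right ((pow_dvd_pow ℓ hen).trans (pow_dvd_pow_of_dvd hd n)) _
  · have hcop : Nat.Coprime d (ℓ ^ e) :=
      ((Nat.Prime.coprime_iff_not_dvd hℓ).mpr hd).symm.pow_right e
    rcases Nat.eq_zero_or_pos e with rfl | he0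
    · simp
    obtain ⟨u, -, hu⟩ := Nat.exists_mul_mod_eq_one_of_coprime hcop (Nat.one_lt_pow he0.ne' hℓ.one_lt)
    have hdu : d * u ≡ 1 [MOD ℓ ^ e] := by
      rw [Nat.ModEq, hu, Nat.mod_eq_of_lt (Nat.one_lt_pow he0.ne' hℓ.one_lt)]
    have hcu : Nat.Coprime (ℓ ^ e) (u ^ n) := by
      refine Nat.Coprime.pow_right n ?_
      have h1 : Nat.gcd (d * u) (ℓ ^ e) = 1 := by rw [hdu.gcd_eq]; simp
      exact (Nat.Coprime.coprime_mul_left h1).symm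
    refine Dvd.dvd.mul_left (hcu.dvd_of_dvd_mul_left ?_) _
    have hprod : u ^ n * ∏ k ∈ Icc 1 n, (d * k + 1) ≡ ∏ k ∈ Icc 1 n, (u + k) [MOD ℓ ^ e] := by
      have : u ^ n = ∏ _k ∈ Icc 1 n, u := by simp
      rw [this, ← prod_mul_distrib]
      refine Nat.ModEq.prod fun k _ => ?_
      calc u * (d * k + 1) = d * u * k + u := by ring
        _ ≡ 1 * k + u [MOD ℓ ^ e] := (hdu.mul_right k).add_right u
        _ = u + k := by ring
    have hasc : ∏ k ∈ Icc 1 n, (u + k) = (u + 1).ascFactorial n := by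
      rw [Nat.ascFactorial_eq_prod_range, Finset.range_eq_Ico, Finset.prod_Ico_eq_prod_range,
        ← Finset.Ico_succ_right_eq_Icc, Finset.prod_Ico_eq_prod_range]
      refine prod_congr (by simp) fun k _ => by ring
    rw [hprod.dvd_iff dvd_rfl, hasc]
    exact he.trans (Nat.factorial_dvd_ascFactorial _ _)

/-- The primes `p ≤ y` with `d ∣ p - 1`, that is, `p ≡ 1 mod d`. -/
def primesOneMod (d y : ℕ) : Finset ℕ := {p ∈ Icc 1 y | p.Prime ∧ d ∣ p - 1}

/-- The primes `n < p ≤ y` with `p ≡ 1 mod d` all divide `∏_{k ≤ n} (d k + 1)` and are coprime to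
`n!`, so their product is at most `d ^ n ∏ (d k + 1) / n! ≤ d ^ (2 n) (n + 1)`. -/
lemma card_primesOneMod_gt_mul_log_le {d y n : ℕ} (hd : 0 < d) (hn : 0 < n) (hy : y / d ≤ n) :
    (#{p ∈ primesOneMod d y | n < p} : ℝ) * Real.log n ≤ 2 * n * Real.log d + Real.log (n + 1) := by
  set S : Finset ℕ := {p ∈ primesOneMod d y | n < p} with hS
  have hmem : ∀ p ∈ S, p.Prime ∧ d ∣ p - 1 ∧ p ≤ y ∧ n < p := by
    intro p hp
    simp only [hS, primesOneMod, mem_filter, mem_Icc] at hp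
    tauto
  have hcop : Nat.Coprime (∏ p ∈ S, p) n.factorial := by
    refine Nat.Coprime.prod_left fun p hp => ?_
    obtain ⟨h1, -, -, h2⟩ := hmem p hp
    rw [Nat.Prime.coprime_iff_not_dvd h1, h1.dvd_factorial]
    omega
  have hdvd : (∏ p ∈ S, p) ∣ ∏ k ∈ Icc 1 n, (d * k + 1) := by
    refine Finset.prod_primes_dvd _ (fun p hp => (hmem p hp).1.prime) fun p hp => ?_
    obtain ⟨h1, ⟨k, hk⟩, h3, -⟩ := hmem p hp
    have hp1 : p = d * k + 1 := by have := h1.two_le; omega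
    rw [hp1]
    refine Finset.dvd_prod_of_mem (fun k => d * k + 1) ?_
    rw [mem_Icc]
    constructor
    · rcases Nat.eq_zero_or_pos k with rfl | h
      · have := h1.two_le; omega
      · exact h
    · refine le_trans ?_ hy
      rw [Nat.le_div_iff_mul_le hd, mul_comm]
      omega
  have hmul : (∏ p ∈ S, p) * n.factorial ∣ d ^ n * ∏ k ∈ Icc 1 n, (d * k + 1) :=
    hcop.mul_dvd_of_dvd_of_dvd (hdvd.mul_left _) (factorial_dvd_pow_mul_prod d n)
  have hle1 : ∏ k ∈ Icc 1 n, (d * k + 1) ≤ d ^ n * (n + 1).factorial := by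
    have h1 : ∏ k ∈ Icc 1 n, (d * k + 1) ≤ ∏ k ∈ Icc 1 n, d * (k + 1) :=
      prod_le_prod' fun k _ => by rw [mul_add]; omega
    refine h1.trans (le_of_eq ?_)
    rw [prod_mul_distrib, prod_const, Nat.card_Icc, Nat.add_sub_cancel]
    congr 1
    clear * -
    induction n with
    | zero => simp
    | succ m ih => rw [prod_Icc_succ_top (by omega), ih, Nat.factorial_succ (m + 1), mul_comm]
  have hle2 : (∏ p ∈ S, p) * n.factorial ≤ (d ^ (2 * n) * (n + 1)) * n.factorial := by
    refine (Nat.le_of_dvd (by positivity) hmul).trans ?_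
    calc d ^ n * ∏ k ∈ Icc 1 n, (d * k + 1) ≤ d ^ n * (d ^ n * (n + 1).factorial) :=
          Nat.mul_le_mul_left _ hle1
      _ = (d ^ (2 * n) * (n + 1)) * n.factorial := by rw [Nat.factorial_succ, two_mul, pow_add]; ring
  have hle3 : n ^ #S ≤ d ^ (2 * n) * (n + 1) := by
    refine le_trans ?_ (Nat.le_of_mul_le_mul_right hle2 n.factorial_pos)
    rw [← prod_const]
    exact prod_le_prod' fun p hp => (hmem p hp).2.2.2.le
  have hle4 : (n : ℝ) ^ #S ≤ (d : ℝ) ^ (2 * n) * (n + 1) := by exact_mod_cast hle3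
  have hn' : (0 : ℝ) < n := by exact_mod_cast hn
  have hd' : (0 : ℝ) < d := by exact_mod_cast hd
  have h := Real.log_le_log (by positivity) hle4
  rw [Real.log_pow, Real.log_mul (by positivity) (by positivity), Real.log_pow] at h
  push_cast at h
  exact h

lemma primeCounting_le_div_log {n : ℕ} (hn : 2 ≤ n) :
    (n.primeCounting : ℝ) ≤ 6 * n / Real.log n := by
  have hn1 : (1 : ℝ) < n := by exact_mod_cast hn
  have h := Chebyshev.pi_le_log4_mul_div hn1
  rw [Nat.floor_natCast] at h
  have hL : 0 < Real.log n := Real.log_pos hn1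
  have hsq : Real.log √n = Real.log n / 2 := Real.log_sqrt (by positivity)
  have h1 : Real.log n / 2 ≤ √n := by
    rw [← hsq]
    exact (Real.log_le_sub_one_of_pos (by positivity)).trans (by linarith)
  have h4 : Real.log 4 ≤ 2 := by
    have : Real.log 4 = 2 * Real.log 2 := by
      rw [show (4 : ℝ) = 2 ^ 2 by norm_num, Real.log_pow]; norm_num
    linarith [Real.log_two_lt_d9]
  rw [hsq] at h
  rw [le_div_iff₀ hL]
  have h5 : √(n : ℝ) * √n = n := Real.mul_self_sqrt (by positivity)
  calc (n.primeCounting : ℝ) * Real.log n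
      ≤ (Real.log 4 * n / (Real.log n / 2) + √n) * Real.log n :=
        mul_le_mul_of_nonneg_right h hL.le
    _ = 2 * Real.log 4 * n + √n * Real.log n := by field_simp
    _ ≤ 6 * n := by
        have : √(n : ℝ) * Real.log n ≤ √n * (2 * √n) :=
          mul_le_mul_of_nonneg_left (by linarith) (by positivity)
        nlinarith

lemma card_primesOneMod_le_div (d y : ℕ) (hd : 0 < d) : #(primesOneMod d y) ≤ y / d := by
  have : primesOneMod d y ⊆ (Icc 1 (y / d)).image fun k => d * k + 1 := by
    intro p hp
    simp only [primesOneMod, mem_filter, mem_Icc] at hp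
    obtain ⟨⟨-, h3⟩, h1, ⟨k, hk⟩⟩ := hp
    have h2 := h1.two_le
    have hp1 : d * k + 1 = p := by omega
    rw [mem_image]
    refine ⟨k, mem_Icc.mpr ⟨?_, ?_⟩, hp1⟩
    · rcases Nat.eq_zero_or_pos k with rfl | h
      · omega
      · exact h
    · rw [Nat.le_div_iff_mul_le hd, mul_comm]
      omega
  refine (card_le_card this).trans (card_image_le.trans ?_)
  simp

/-- A Brun–Titchmarsh type bound, with a loss of `1 + log d`, but uniform in `d` and `y`. For
`y < d ^ 2` the trivial bound `y / d` suffices; otherwise take `n = y / d` in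
`card_primesOneMod_gt_mul_log_le` and count the primes `p ≤ n` by Chebyshev. -/
lemma card_primesOneMod_le {d y : ℕ} (hd : 0 < d) (hy : 2 ≤ y) :
    (#(primesOneMod d y) : ℝ) ≤ 28 * (y / d) * (1 + Real.log d) / Real.log y := by
  have hd1 : (1 : ℝ) ≤ d := by exact_mod_cast hd
  have hd0 : (0 : ℝ) < d := by linarith
  have hld : 0 ≤ Real.log d := Real.log_nonneg hd1
  have hy0 : (0 : ℝ) < y := by positivity
  have hL : 0 < Real.log y := Real.log_pos (by exact_mod_cast hy)
  rw [le_div_iff₀ hL]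
  rcases lt_or_ge y (d ^ 2) with hdy | hdy
  · have h1 : (#(primesOneMod d y) : ℝ) ≤ y / d :=
      (Nat.cast_le.mpr (card_primesOneMod_le_div d y hd)).trans Nat.cast_div_le
    have h2 : Real.log y ≤ 2 * Real.log d := by
      have h3 : (y : ℝ) ≤ (d : ℝ) ^ 2 := by exact_mod_cast hdy.le
      have := Real.log_le_log hy0 h3
      rwa [Real.log_pow] at this
    calc (#(primesOneMod d y) : ℝ) * Real.log y ≤ y / d * (2 * Real.log d) :=
          mul_le_mul h1 h2 hL.le (by positivity)
      _ ≤ 28 * (y / d) * (1 + Real.log d) := by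
          have : 0 ≤ (y : ℝ) / d := by positivity
          nlinarith [mul_nonneg this hld]
  · set n := y / d with hn
    have hdn : d ≤ n := by rw [hn, Nat.le_div_iff_mul_le hd]; nlinarith
    have hn2 : 2 ≤ n := by
      by_contra! h
      have : d = 1 := by omega
      subst this
      simp only [Nat.div_one] at hn
      omega
    have hn0 : (0 : ℝ) < n := by positivity
    have hnL : 0 < Real.log n := Real.log_pos (by exact_mod_cast hn2)
    have hny : (n : ℝ) ≤ y / d := Nat.cast_div_le
    -- `y < (n + 1) d ≤ (n + 1) ^ 2 ≤ n ^ 4`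
    have hlogy : Real.log y ≤ 4 * Real.log n := by
      have h1 : y < (n + 1) * d := by
        have := Nat.lt_div_mul_add (a := y) hd
        rw [← hn] at this; rw [add_mul, one_mul]; exact this
      have h2 : y ≤ n ^ 4 := by
        have h3 : n + 1 ≤ n ^ 2 := by nlinarith
        calc y ≤ (n + 1) * d := h1.le
          _ ≤ n ^ 2 * n ^ 2 := Nat.mul_le_mul h3 (hdn.trans (by nlinarith))
          _ = n ^ 4 := by ring
      have h4 : (y : ℝ) ≤ (n : ℝ) ^ 4 := by exact_mod_cast h2
      have := Real.log_le_log hy0 h4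
      rwa [Real.log_pow] at this
    have hsplit : (#(primesOneMod d y) : ℝ) * Real.log n ≤
        2 * n * Real.log d + Real.log (n + 1) + 6 * n := by
      have h1 : #(primesOneMod d y) ≤ #{p ∈ primesOneMod d y | n < p} + n.primeCounting := by
        rw [← card_filter_add_card_filter_not (s := primesOneMod d y) (fun p => n < p)]
        refine Nat.add_le_add_left ?_ _
        rw [Nat.primeCounting, Nat.primeCounting', Nat.count_eq_card_filter_range]
        refine card_le_card fun p hp => ?_
        simp only [primesOneMod, mem_filter, mem_Icc, mem_range] at hp ⊢
        exact ⟨by omega, hp.1.2.1⟩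
      have h2 : (#(primesOneMod d y) : ℝ) ≤
          #{p ∈ primesOneMod d y | n < p} + n.primeCounting := by exact_mod_cast h1
      have h3 := card_primesOneMod_gt_mul_log_le (y := y) hd (show 0 < n by omega) hn.ge
      have h4 := primeCounting_le_div_log hn2
      rw [le_div_iff₀ hnL] at h4
      nlinarith
    have hln1 : Real.log (n + 1) ≤ n := by
      have := Real.log_le_sub_one_of_pos (show (0 : ℝ) < n + 1 by positivity)
      linarith
    have hfin : (#(primesOneMod d y) : ℝ) * Real.log n ≤ 7 * (y / d) * (1 + Real.log d) := by
      have : (n : ℝ) * (1 + Real.log d) ≤ y / d * (1 + Real.log d) :=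
        mul_le_mul_of_nonneg_right hny (by linarith)
      nlinarith [mul_nonneg hn0.le hld]
    calc (#(primesOneMod d y) : ℝ) * Real.log y
        ≤ #(primesOneMod d y) * (4 * Real.log n) := mul_le_mul_of_nonneg_left hlogy (by positivity)
      _ ≤ 28 * (y / d) * (1 + Real.log d) := by linarith

end BrunTitchmarsh

end UpperBound

/-! ### Pairs `(m, p)` with a divisibility condition -/

section Pairs
open Finset Filter Topology

/-- The pairs `(m, p)` with `p` prime, `0 < m < p` and `m * p ≤ N` such that `d` divides both `m`
and `p - 1`. -/
def pairs (N d : ℕ) : Finset (ℕ × ℕ) :=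
  {x ∈ Icc 1 N ×ˢ Icc 1 N | x.2.Prime ∧ x.1 < x.2 ∧ x.1 * x.2 ≤ N ∧ d ∣ x.1 ∧ d ∣ x.2 - 1}

lemma mem_pairs {N d : ℕ} {x : ℕ × ℕ} :
    x ∈ pairs N d ↔ 0 < x.1 ∧ x.2.Prime ∧ x.1 < x.2 ∧ x.1 * x.2 ≤ N ∧ d ∣ x.1 ∧ d ∣ x.2 - 1 := by
  simp only [pairs, mem_filter, mem_product, mem_Icc]
  constructor
  · rintro ⟨⟨⟨h1, -⟩, -⟩, h⟩
    exact ⟨h1, h⟩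
  · rintro ⟨h1, hp, hlt, hN, h⟩
    have h3 : x.1 ≤ x.1 * x.2 := Nat.le_mul_of_pos_right _ hp.pos
    have h4 : x.2 ≤ x.1 * x.2 := Nat.le_mul_of_pos_left _ h1
    exact ⟨⟨⟨h1, by omega⟩, hp.one_le, by omega⟩, hp, hlt, hN, h⟩

lemma card_pairs_fiber_le {N d j : ℕ} (hd : 0 < d) (hj : 0 < j) (hN : 3 ≤ N) :
    (#{x ∈ pairs N d | x.1 / d = j} : ℝ) ≤
      56 * (N / (d : ℝ) ^ 2) * (1 + Real.log d) / Real.log N * (1 / j) := by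
  have hd' : (0 : ℝ) < d := by exact_mod_cast hd
  have hj' : (0 : ℝ) < j := by exact_mod_cast hj
  have hlogN : 0 < Real.log N := Real.log_pos (by exact_mod_cast (by omega : 1 < N))
  have hlogd : 0 ≤ Real.log d := Real.log_natCast_nonneg d
  rcases ({x ∈ pairs N d | x.1 / d = j} : Finset (ℕ × ℕ)).eq_empty_or_nonempty with he | ⟨x, hx⟩
  · rw [he]; simp only [card_empty, Nat.cast_zero]; positivity
  have key : ∀ x ∈ ({x ∈ pairs N d | x.1 / d = j} : Finset (ℕ × ℕ)),
      x.1 = d * j ∧ x.2.Prime ∧ x.1 < x.2 ∧ x.2 ≤ N / (d * j) ∧ d ∣ x.2 - 1 := by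
    intro x hx
    rw [mem_filter, mem_pairs] at hx
    obtain ⟨⟨h1, hp, hlt, hle, hdm, hdp⟩, hxj⟩ := hx
    have hm : x.1 = d * j := by rw [← hxj, Nat.mul_div_cancel' hdm]
    refine ⟨hm, hp, hlt, ?_, hdp⟩
    rw [Nat.le_div_iff_mul_le (by positivity), ← hm, mul_comm]
    exact hle
  set y := N / (d * j) with hy
  obtain ⟨hx1, hxp, hxlt, hxy, -⟩ := key x hx
  have hy2 : 2 ≤ y := hxp.two_le.trans hxy
  have hcard : #{x ∈ pairs N d | x.1 / d = j} ≤ #(primesOneMod d y) := by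
    refine card_le_card_of_injOn Prod.snd ?_ ?_
    · intro x hx
      obtain ⟨-, h2, -, h4, h5⟩ := key x hx
      simp only [primesOneMod, coe_filter, mem_Icc, Set.mem_ofPred_eq]
      exact ⟨⟨h2.one_le, h4⟩, h2, h5⟩
    · intro a ha b hb hab
      exact Prod.ext ((key a ha).1.trans (key b hb).1.symm) hab
  -- a nonempty fibre forces `d * j < y`, hence `y ^ 2 > N`
  have hNy : N ≤ y ^ 2 := by
    have h1 : N < d * j * (y + 1) := Nat.lt_mul_div_succ N (by positivity)
    have h2 : d * j + 1 ≤ y := by omega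
    nlinarith
  have hlogy : Real.log N / 2 ≤ Real.log y := by
    have h1 : Real.log N ≤ Real.log ((y : ℝ) ^ 2) :=
      Real.log_le_log (by exact_mod_cast (by omega : 0 < N)) (by exact_mod_cast hNy)
    rw [Real.log_pow] at h1
    push_cast at h1
    linarith
  have hyle : (y : ℝ) ≤ N / (d * j) := by
    have := @Nat.cast_div_le ℝ _ _ _ N (d * j)
    rwa [Nat.cast_mul] at this
  calc (#{x ∈ pairs N d | x.1 / d = j} : ℝ) ≤ #(primesOneMod d y) := by exact_mod_cast hcard
    _ ≤ 28 * (y / d) * (1 + Real.log d) / Real.log y := card_primesOneMod_le hd hy2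
    _ ≤ 28 * ((N / (d * j)) / d) * (1 + Real.log d) / (Real.log N / 2) := by gcongr
    _ = _ := by field_simp; ring

/-- The domination needed for Tannery's theorem: `O(N (1 + log d) / d²)` uniformly in `d`. The
pairs are split according to `m / d`; each part is bounded by the Brun–Titchmarsh type estimate, and
the harmonic sum over `m / d` cancels the logarithm in its denominator. -/
lemma card_pairs_le {N d : ℕ} (hd : 0 < d) (hN : 3 ≤ N) :
    (#(pairs N d) : ℝ) ≤ 112 * N * ((1 + Real.log d) / (d : ℝ) ^ 2) := by
  have hlogd : 0 ≤ Real.log d := Real.log_natCast_nonneg d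
  have hlogN : 1 ≤ Real.log N := by
    rw [Real.le_log_iff_exp_le (by positivity)]
    have : (3 : ℝ) ≤ N := by exact_mod_cast hN
    linarith [Real.exp_one_lt_d9]
  have hfib : #(pairs N d) = ∑ j ∈ Icc 1 N, #{x ∈ pairs N d | x.1 / d = j} := by
    refine card_eq_sum_card_fiberwise fun x hx => ?_
    obtain ⟨h1, hp, hlt, hle, hdm, hdp⟩ := mem_pairs.mp (mem_coe.mp hx)
    have h3 : x.1 ≤ x.1 * x.2 := Nat.le_mul_of_pos_right _ hp.pos
    simp only [coe_Icc, Set.mem_Icc]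
    exact ⟨Nat.div_pos (Nat.le_of_dvd h1 hdm) hd, (Nat.div_le_self _ _).trans (by omega)⟩
  have hharm : ∑ j ∈ Icc 1 N, (1 / j : ℝ) ≤ 1 + Real.log N := by
    have := harmonic_le_one_add_log N
    rw [harmonic_eq_sum_Icc] at this
    push_cast at this
    simpa using this
  rw [hfib]
  push_cast
  calc ∑ j ∈ Icc 1 N, (#{x ∈ pairs N d | x.1 / d = j} : ℝ)
      ≤ ∑ j ∈ Icc 1 N, 56 * (N / (d : ℝ) ^ 2) * (1 + Real.log d) / Real.log N * (1 / j) :=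
        sum_le_sum fun j hj => card_pairs_fiber_le hd (mem_Icc.mp hj).1 hN
    _ = 56 * (N / (d : ℝ) ^ 2) * (1 + Real.log d) / Real.log N * ∑ j ∈ Icc 1 N, (1 / j : ℝ) := by
        rw [mul_sum]
    _ ≤ 56 * (N / (d : ℝ) ^ 2) * (1 + Real.log d) / Real.log N * (2 * Real.log N) := by
        gcongr
        linarith
    _ = _ := by field_simp; ring

lemma summable_one_add_log_div_sq :
    Summable fun d : ℕ => (1 + Real.log d) / (d : ℝ) ^ 2 := by
  have h : Summable fun d : ℕ => 3 * (1 / (d : ℝ) ^ (3 / 2 : ℝ)) :=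
    (Real.summable_one_div_nat_rpow.mpr (by norm_num)).mul_left 3
  refine Summable.of_nonneg_of_le (fun d => ?_) (fun d => ?_) h
  · have := Real.log_natCast_nonneg d
    positivity
  rcases Nat.eq_zero_or_pos d with rfl | hd
  · simp
  have hd' : (1 : ℝ) ≤ d := by exact_mod_cast hd
  have h1 : Real.log d ≤ (d : ℝ) ^ (1 / 2 : ℝ) / (1 / 2) :=
    Real.log_le_rpow_div (by positivity) (by norm_num)
  have h2 : (1 : ℝ) ≤ (d : ℝ) ^ (1 / 2 : ℝ) := Real.one_le_rpow hd' (by norm_num)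
  have h3 : (d : ℝ) ^ 2 = (d : ℝ) ^ (1 / 2 : ℝ) * (d : ℝ) ^ (3 / 2 : ℝ) := by
    rw [← Real.rpow_add (by positivity)]; norm_num
  rw [h3, mul_one_div, div_le_div_iff₀ (by positivity) (by positivity), ← mul_assoc]
  gcongr
  linarith

/-- The number of pairs `(m, p)` counted by `pairs N d` for a given prime `p`. -/
def fiberCount (N d p : ℕ) : ℕ := #{m ∈ Icc 1 N | m < p ∧ m * p ≤ N ∧ d ∣ m}

lemma card_pairs_eq_sum (N d : ℕ) :
    #(pairs N d) = ∑ p ∈ primesOneMod d N, fiberCount N d p := by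
  rw [pairs, card_filter, sum_product_right, primesOneMod, sum_filter]
  refine sum_congr rfl fun p _ => ?_
  split_ifs with h
  · rw [fiberCount, card_filter]
    refine sum_congr rfl fun m _ => ?_
    simp [h.1, h.2]
  · refine sum_eq_zero fun m _ => if_neg ?_
    tauto

lemma fiberCount_eq {N d p : ℕ} (hp : 0 < p) (h : N < p ^ 2) : fiberCount N d p = N / p / d := by
  rw [fiberCount, ← Nat.Ioc_filter_dvd_card_eq_div]
  congr 1
  ext m
  simp only [mem_filter, mem_Icc, mem_Ioc, Nat.le_div_iff_mul_le hp]
  constructor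
  · rintro ⟨⟨h1, h2⟩, h3, h4, h5⟩
    exact ⟨⟨h1, h4⟩, h5⟩
  · rintro ⟨⟨h1, h4⟩, h5⟩
    refine ⟨⟨h1, (Nat.le_mul_of_pos_right _ hp).trans h4⟩, ?_, h4, h5⟩
    by_contra! hc
    nlinarith

lemma fiberCount_le (N d p : ℕ) : fiberCount N d p ≤ p := by
  rw [fiberCount]
  calc _ ≤ #(range p) := card_le_card fun m => by simp +contextual
    _ = p := card_range p

lemma abs_fiberCount_sub_le {N d p : ℕ} (hd : 0 < d) (hp : 0 < p) (h : N < p ^ 2) :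
    |(fiberCount N d p : ℝ) - N / d * (1 / p)| ≤ 1 := by
  rw [fiberCount_eq hp h, Nat.div_div_eq_div_mul]
  have hpd : (0 : ℝ) < (p * d : ℕ) := by exact_mod_cast Nat.mul_pos hp hd
  have h1 : ((N / (p * d) : ℕ) : ℝ) ≤ N / (p * d : ℕ) := Nat.cast_div_le
  have h2 : (N : ℝ) / (p * d : ℕ) < ((N / (p * d) : ℕ) : ℝ) + 1 := by
    rw [div_lt_iff₀ hpd]
    have := Nat.lt_mul_div_succ N (Nat.mul_pos hp hd)
    rw [mul_comm]
    exact_mod_cast this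
  have h3 : (N : ℝ) / d * (1 / p) = N / (p * d : ℕ) := by
    push_cast; field_simp
  rw [h3, abs_le]
  constructor <;> linarith

lemma card_primesOneMod_le_primeCounting (d N : ℕ) : #(primesOneMod d N) ≤ N.primeCounting := by
  rw [Nat.primeCounting, Nat.primeCounting', Nat.count_eq_card_filter_range]
  refine card_le_card fun p hp => ?_
  simp only [primesOneMod, mem_filter, mem_Icc, mem_range] at hp ⊢
  exact ⟨by omega, hp.2.1⟩

lemma tendsto_primeCounting_div :
    Tendsto (fun n : ℕ => (n.primeCounting : ℝ) / n) atTop (𝓝 0) := by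
  have h1 : Tendsto (fun n : ℕ => 6 / Real.log n) atTop (𝓝 0) :=
    (Real.tendsto_log_atTop.comp tendsto_natCast_atTop_atTop).const_div_atTop 6
  refine squeeze_zero' (Eventually.of_forall fun n => by positivity) ?_ h1
  filter_upwards [eventually_ge_atTop 2] with n hn
  have hn' : (0 : ℝ) < n := by exact_mod_cast (by omega : 0 < n)
  rw [div_le_iff₀ hn']
  exact (primeCounting_le_div_log hn).trans (by rw [div_mul_eq_mul_div])

/-- Replacing each `fiberCount` by its main term `N / (d p)` for `p > √N`, and dropping the primes
`p ≤ √N`, costs at most `π(N) + √N π(√N)`. -/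
lemma abs_card_pairs_sub_le {N d : ℕ} (hd : 0 < d) :
    |(#(pairs N d) : ℝ) -
      N / d * ∑ p ∈ Icc 1 N with N < p ^ 2 ∧ p.Prime ∧ d ∣ p - 1, (1 : ℝ) / p| ≤
      N.primeCounting + N.sqrt * N.sqrt.primeCounting := by
  have hset : ({p ∈ Icc 1 N | N < p ^ 2 ∧ p.Prime ∧ d ∣ p - 1} : Finset ℕ) =
      {p ∈ primesOneMod d N | N < p ^ 2} := by
    ext p; simp only [primesOneMod, mem_filter]; tauto
  have hmem : ∀ p ∈ primesOneMod d N, 0 < p := by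
    intro p hp
    simp only [primesOneMod, mem_filter, mem_Icc] at hp
    exact hp.1.1
  have hsmall : ({p ∈ primesOneMod d N | ¬ N < p ^ 2} : Finset ℕ) ⊆ primesOneMod d N.sqrt := by
    intro p hp
    simp only [primesOneMod, mem_filter, mem_Icc, not_lt] at hp ⊢
    exact ⟨⟨hp.1.1.1, Nat.le_sqrt'.mpr hp.2⟩, hp.1.2⟩
  rw [hset, card_pairs_eq_sum, Nat.cast_sum,
    ← sum_filter_add_sum_filter_not (primesOneMod d N) (fun p => N < p ^ 2), mul_sum,
    add_sub_right_comm, ← sum_sub_distrib]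
  refine (abs_add_le _ _).trans (add_le_add ?_ ?_)
  · calc _ ≤ ∑ p ∈ primesOneMod d N with N < p ^ 2,
          |(fiberCount N d p : ℝ) - N / d * (1 / p)| := abs_sum_le_sum_abs _ _
      _ ≤ ∑ p ∈ primesOneMod d N with N < p ^ 2, (1 : ℝ) := by
          refine sum_le_sum fun p hp => ?_
          rw [mem_filter] at hp
          exact abs_fiberCount_sub_le hd (hmem p hp.1) hp.2
      _ = #{p ∈ primesOneMod d N | N < p ^ 2} := by simp
      _ ≤ N.primeCounting := by
          exact_mod_cast (card_filter_le _ _).trans (card_primesOneMod_le_primeCounting d N)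
  · rw [abs_of_nonneg (by positivity)]
    calc _ ≤ ∑ p ∈ primesOneMod d N with ¬ N < p ^ 2, (N.sqrt : ℝ) := by
          refine sum_le_sum fun p hp => ?_
          have := hsmall hp
          simp only [primesOneMod, mem_filter, mem_Icc] at this
          exact_mod_cast (fiberCount_le N d p).trans this.1.2
      _ = N.sqrt * #{p ∈ primesOneMod d N | ¬ N < p ^ 2} := by simp [mul_comm]
      _ ≤ N.sqrt * N.sqrt.primeCounting := by
          gcongr
          exact (card_le_card hsmall).trans (card_primesOneMod_le_primeCounting d _)

lemma tendsto_card_pairs_div (d : ℕ) [NeZero d] :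
    Tendsto (fun N : ℕ => (#(pairs N d) : ℝ) / N) atTop
      (𝓝 ((d : ℝ)⁻¹ * ((d.totient : ℝ)⁻¹ * Real.log 2))) := by
  have hd : 0 < d := Nat.pos_of_ne_zero (NeZero.ne d)
  have hmain := (tendsto_sum_inv_prime_modEq_one d).const_mul ((d : ℝ)⁻¹)
  have hsqrt : Tendsto Nat.sqrt atTop atTop :=
    tendsto_atTop_atTop.mpr fun b => ⟨b ^ 2, fun a ha => Nat.le_sqrt'.mpr ha⟩
  have herr := tendsto_primeCounting_div.add (tendsto_primeCounting_div.comp hsqrt)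
  rw [add_zero] at herr
  refine (tendsto_iff_of_dist ?_).mpr hmain
  refine squeeze_zero' (Eventually.of_forall fun N => dist_nonneg) ?_ herr
  filter_upwards [eventually_ge_atTop 1] with N hN
  have hN' : (0 : ℝ) < N := by exact_mod_cast hN
  have hs : (0 : ℝ) < N.sqrt := by exact_mod_cast Nat.sqrt_pos.mpr hN
  have hs2 : (N.sqrt : ℝ) * N.sqrt ≤ N := by exact_mod_cast Nat.sqrt_le N
  have h := abs_card_pairs_sub_le (N := N) hd
  set T := ∑ p ∈ Icc 1 N with N < p ^ 2 ∧ p.Prime ∧ d ∣ p - 1, (1 : ℝ) / p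
  have heq : (#(pairs N d) : ℝ) / N - (d : ℝ)⁻¹ * T = (#(pairs N d) - N / d * T) / N := by
    field_simp
  rw [Real.dist_eq, heq, abs_div, abs_of_pos hN', div_le_iff₀ hN', Function.comp_apply, add_mul,
    div_mul_cancel₀ _ hN'.ne']
  refine h.trans (add_le_add le_rfl ?_)
  calc (N.sqrt : ℝ) * N.sqrt.primeCounting
      = N.sqrt.primeCounting / N.sqrt * (N.sqrt * N.sqrt) := by field_simp
    _ ≤ _ := by gcongr

end Pairs

/-! ### Möbius inversion and the Euler product -/

section Final
open Finset Filter Topology ArithmeticFunction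

lemma Pplus_mul {m p : ℕ} (hp : p.Prime) (hm : 0 < m) (hlt : m < p) : Pplus (m * p) = p := by
  have h2 : 2 ≤ m * p := hp.two_le.trans (Nat.le_mul_of_pos_left _ hm)
  rw [Pplus, if_neg (by omega)]
  refine le_antisymm (Finset.sup_le fun q hq => ?_) (Finset.le_sup (f := id) ?_)
  · have hqp := Nat.prime_of_mem_primeFactors hq
    rcases (Nat.Prime.dvd_mul hqp).mp (Nat.dvd_of_mem_primeFactors hq) with h | h
    · exact (Nat.le_of_dvd hm h).trans hlt.le
    · exact Nat.le_of_dvd hp.pos h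
  · exact Nat.mem_primeFactors.mpr ⟨hp, dvd_mul_left _ _, by omega⟩

lemma Pplus_mem_primeFactors {n : ℕ} (hn : 2 ≤ n) : Pplus n ∈ n.primeFactors := by
  rw [Pplus, if_neg (by omega)]
  obtain ⟨q, hq, h⟩ := Finset.exists_mem_eq_sup n.primeFactors
    (Nat.nonempty_primeFactors.mpr (by omega)) id
  rw [h]
  exact hq

/-- The integers `n ≤ N` in question are the products `m * p` with `p` prime, `m < p` and
`gcd (p - 1) m = 1`; here `p = P⁺(n)`. -/
lemma setOf_eq_image (N : ℕ) :
    ({n | n ∈ {n : ℕ | 0 < n ∧ Real.sqrt n < (Pplus n : ℝ) ∧ Nat.gcd (Pplus n - 1) n = 1} ∧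
      n ≤ N} : Set ℕ) =
    ((({x ∈ pairs N 1 | Nat.gcd (x.2 - 1) x.1 = 1} : Finset (ℕ × ℕ)).image
      fun x => x.1 * x.2 : Finset ℕ) : Set ℕ) := by
  have hgcd : ∀ m p : ℕ, p.Prime → Nat.gcd (p - 1) (m * p) = Nat.gcd (p - 1) m := by
    intro m p hp
    refine Nat.Coprime.gcd_mul_right_cancel_right m ?_
    have h := (Nat.coprime_self_sub_right hp.one_le).mpr (Nat.coprime_one_right p)
    exact h
  ext n
  simp only [Set.mem_ofPred_eq, coe_image, coe_filter, Set.mem_image, mem_pairs]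
  constructor
  · rintro ⟨⟨h0, hs, hg⟩, hN⟩
    have h2 : 2 ≤ n := by
      by_contra! hc
      obtain rfl : n = 1 := by omega
      simp [Pplus] at hs
    obtain ⟨hp, hdvd, -⟩ := Nat.mem_primeFactors.mp (Pplus_mem_primeFactors h2)
    obtain ⟨m, hm⟩ := hdvd
    set p := Pplus n with hpdef
    have hlt : n < p ^ 2 := by
      rw [Real.sqrt_lt' (by exact_mod_cast hp.pos)] at hs
      exact_mod_cast hs
    have hm0 : 0 < m := Nat.pos_of_ne_zero (by rintro rfl; omega)
    have hmp : m < p := by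
      rw [hm, pow_two] at hlt
      exact Nat.lt_of_mul_lt_mul_left hlt
    rw [mul_comm] at hm
    refine ⟨(m, p), ⟨⟨hm0, hp, hmp, ?_, one_dvd _, one_dvd _⟩, ?_⟩, hm.symm⟩
    · rw [← hm]; exact hN
    · rw [← hgcd m p hp, ← hm]; exact hg
  · rintro ⟨⟨m, p⟩, ⟨⟨hm0, hp, hlt, hle, -, -⟩, hg⟩, rfl⟩
    simp only at hm0 hp hlt hle hg ⊢
    rw [Pplus_mul hp hm0 hlt, hgcd m p hp]
    refine ⟨⟨Nat.mul_pos hm0 hp.pos, ?_, hg⟩, hle⟩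
    rw [Real.sqrt_lt' (by exact_mod_cast hp.pos), pow_two]
    exact_mod_cast Nat.mul_lt_mul_of_pos_right hlt hp.pos

lemma injOn_mul_pairs (N : ℕ) : Set.InjOn (fun x : ℕ × ℕ => x.1 * x.2) (pairs N 1) := by
  rintro ⟨m, p⟩ h ⟨m', p'⟩ h' (heq : m * p = m' * p')
  obtain ⟨hm0, hp, hlt, -⟩ := mem_pairs.mp (mem_coe.mp h)
  obtain ⟨hm0', hp', hlt', -⟩ := mem_pairs.mp (mem_coe.mp h')
  simp only at hm0 hp hlt hm0' hp' hlt'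
  obtain rfl : p = p' := by rw [← Pplus_mul hp hm0 hlt, heq, Pplus_mul hp' hm0' hlt']
  rw [Nat.eq_of_mul_eq_mul_right hp.pos heq]

lemma sum_moebius_divisors (g : ℕ) :
    ∑ e ∈ g.divisors, (moebius e : ℝ) = if g = 1 then 1 else 0 := by
  have h := congrArg (fun f : ArithmeticFunction ℤ => f g) coe_zeta_mul_moebius
  simp only [coe_zeta_mul_apply, one_apply] at h
  exact_mod_cast h

/-- Möbius inversion of the coprimality condition. -/
lemma card_coprime_pairs (N : ℕ) :
    (#{x ∈ pairs N 1 | Nat.gcd (x.2 - 1) x.1 = 1} : ℝ) =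
      ∑' e : ℕ, (moebius e : ℝ) * #(pairs N e) := by
  have hfin : ∑' e : ℕ, (moebius e : ℝ) * #(pairs N e) =
      ∑ e ∈ Icc 1 N, (moebius e : ℝ) * #(pairs N e) := by
    refine tsum_eq_sum fun e he => ?_
    rcases Nat.eq_zero_or_pos e with rfl | he0
    · simp
    have : pairs N e = ∅ := by
      refine eq_empty_of_forall_notMem fun x hx => ?_
      obtain ⟨h1, hp, hlt, hle, hd, -⟩ := mem_pairs.mp hx
      have h3 : x.1 ≤ x.1 * x.2 := Nat.le_mul_of_pos_right _ hp.pos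
      have h4 := Nat.le_of_dvd h1 hd
      exact he (mem_Icc.mpr ⟨he0, by omega⟩)
    simp [this]
  have hpe : ∀ e, pairs N e = {x ∈ pairs N 1 | e ∣ Nat.gcd (x.2 - 1) x.1} := by
    intro e
    ext x
    simp only [mem_filter, mem_pairs, Nat.dvd_gcd_iff, one_dvd]
    tauto
  rw [hfin, card_filter]
  push_cast
  calc ∑ x ∈ pairs N 1, (if Nat.gcd (x.2 - 1) x.1 = 1 then (1 : ℝ) else 0)
      = ∑ x ∈ pairs N 1, ∑ e ∈ Icc 1 N,
          if e ∣ Nat.gcd (x.2 - 1) x.1 then (moebius e : ℝ) else 0 := by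
        refine sum_congr rfl fun x hx => ?_
        obtain ⟨h1, hp, hlt, hle, -⟩ := mem_pairs.mp hx
        have h3 : x.1 ≤ x.1 * x.2 := Nat.le_mul_of_pos_right _ hp.pos
        have hg0 : 0 < Nat.gcd (x.2 - 1) x.1 := Nat.gcd_pos_of_pos_right _ h1
        have hgle : Nat.gcd (x.2 - 1) x.1 ≤ x.1 := Nat.gcd_le_right _ h1
        rw [← sum_moebius_divisors, ← sum_filter]
        refine sum_congr ?_ fun _ _ => rfl
        ext e
        simp only [Nat.mem_divisors, mem_filter, mem_Icc]
        constructor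
        · rintro ⟨h, -⟩
          have := Nat.le_of_dvd hg0 h
          exact ⟨⟨Nat.pos_of_dvd_of_pos h hg0, by omega⟩, h⟩
        · rintro ⟨-, h⟩
          exact ⟨h, hg0.ne'⟩
    _ = ∑ e ∈ Icc 1 N, (moebius e : ℝ) * #(pairs N e) := by
        rw [sum_comm]
        refine sum_congr rfl fun e _ => ?_
        rw [hpe e, ← sum_filter, sum_const, nsmul_eq_mul, mul_comm]

/-- The summand `μ(e) / (e φ(e))` of the singular series. -/
noncomputable def singularTerm (e : ℕ) : ℝ := moebius e * ((e : ℝ)⁻¹ * (e.totient : ℝ)⁻¹)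

lemma abs_moebius_cast_le_one (e : ℕ) : |(moebius e : ℝ)| ≤ 1 := by
  exact_mod_cast (abs_moebius_le_one (n := e))

lemma norm_moebius_mul_card_pairs_le {N : ℕ} (hN : 3 ≤ N) (e : ℕ) :
    ‖(moebius e : ℝ) * #(pairs N e) / N‖ ≤ 112 * ((1 + Real.log e) / (e : ℝ) ^ 2) := by
  rcases Nat.eq_zero_or_pos e with rfl | he
  · simp
  have hN' : (0 : ℝ) < N := by exact_mod_cast (by omega : 0 < N)
  rw [Real.norm_eq_abs, abs_div, abs_mul, Nat.abs_cast, Nat.abs_cast, div_le_iff₀ hN']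
  calc |(moebius e : ℝ)| * #(pairs N e) ≤ 1 * #(pairs N e) := by
        gcongr; exact abs_moebius_cast_le_one e
    _ ≤ 112 * N * ((1 + Real.log e) / (e : ℝ) ^ 2) := by
        rw [one_mul]; exact card_pairs_le he hN
    _ = _ := by ring

lemma tendsto_moebius_mul_card_pairs (e : ℕ) :
    Tendsto (fun N : ℕ => (moebius e : ℝ) * #(pairs N e) / N) atTop
      (𝓝 (singularTerm e * Real.log 2)) := by
  rcases Nat.eq_zero_or_pos e with rfl | he
  · simp [singularTerm]
  have : NeZero e := ⟨he.ne'⟩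
  have h := (tendsto_card_pairs_div e).const_mul (moebius e : ℝ)
  simp only [mul_div_assoc]
  convert h using 2
  rw [singularTerm]
  ring

lemma summable_norm_singularTerm : Summable fun e => ‖singularTerm e‖ := by
  have hlog : 0 < Real.log 2 := Real.log_pos (by norm_num)
  refine Summable.of_nonneg_of_le (fun e => norm_nonneg _) (fun e => ?_)
    (summable_one_add_log_div_sq.mul_left (112 / Real.log 2))
  have h : ‖singularTerm e * Real.log 2‖ ≤ 112 * ((1 + Real.log e) / (e : ℝ) ^ 2) :=
    le_of_tendsto (tendsto_moebius_mul_card_pairs e).norm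
      (eventually_atTop.mpr ⟨3, fun N hN => norm_moebius_mul_card_pairs_le hN e⟩)
  rw [norm_mul, Real.norm_of_nonneg hlog.le, ← le_div_iff₀ hlog] at h
  exact h.trans (le_of_eq (by ring))

lemma tsum_singularTerm_prime_pow {p : ℕ} (hp : p.Prime) :
    ∑' e : ℕ, singularTerm (p ^ e) = 1 - 1 / ((p : ℝ) * ((p : ℝ) - 1)) := by
  rw [tsum_eq_sum (s := range 2), sum_range_succ, sum_range_one]
  · simp only [singularTerm, pow_zero, pow_one, moebius_apply_prime hp, Nat.totient_prime hp,
      Nat.cast_sub hp.one_le]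
    simp
    ring
  · intro e he
    rw [mem_range, not_lt] at he
    rw [singularTerm, moebius_apply_prime_pow hp (by omega), if_neg (by omega)]
    simp

lemma tsum_singularTerm :
    ∑' e, singularTerm e =
      ∏' p : Nat.Primes, (1 - 1 / (((p : ℕ) : ℝ) * (((p : ℕ) : ℝ) - 1))) := by
  have h := EulerProduct.eulerProduct_hasProd (f := singularTerm) (by simp [singularTerm]) ?_
    summable_norm_singularTerm (by simp [singularTerm])
  · rw [← h.tprod_eq]
    exact tprod_congr fun p => tsum_singularTerm_prime_pow p.2
  · intro m n hmn
    simp only [singularTerm, isMultiplicative_moebius.map_mul_of_coprime hmn,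
      Nat.totient_mul hmn]
    push_cast
    rw [mul_inv, mul_inv]
    ring

end Final

/-- The set of positive integers `n` with `P⁺(n) > √n` and `gcd(P⁺(n) - 1, n) = 1`
has natural density `(log 2) ∏_p (1 - 1/(p(p-1)))`, the product running over all
primes. -/
theorem density_large_prime_factor_coprime :
    HasNatDensity
      {n : ℕ | 0 < n ∧ Real.sqrt n < (Pplus n : ℝ) ∧ Nat.gcd (Pplus n - 1) n = 1}
      (Real.log 2 * ∏' p : Nat.Primes, (1 - 1 / (((p : ℕ) : ℝ) * (((p : ℕ) : ℝ) - 1)))) := by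
  have h := tendsto_tsum_of_dominated_convergence
    (summable_one_add_log_div_sq.mul_left 112) tendsto_moebius_mul_card_pairs
    (Filter.eventually_atTop.mpr ⟨3, fun N hN => norm_moebius_mul_card_pairs_le hN⟩)
  rw [tsum_mul_right, tsum_singularTerm, mul_comm] at h
  refine h.congr fun N => ?_
  rw [setOf_eq_image, Set.ncard_coe_finset, Finset.card_image_of_injOn, card_coprime_pairs,
    tsum_div_const]
  exact (injOn_mul_pairs N).mono (Finset.coe_subset.mpr (Finset.filter_subset _ _))
end
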